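/- Theorem D, ℚ(√−2)-dihedral family (triple powers): For every integer n ≥ 1, let z_n = (2·4^n + 1)/3 and take r = 24·(3·z_n). Then the quotient #{primes ℓ with 5 ≤ ℓ ≤ x and c_r(ν_r(ℓ)) = 1} / π(x) tends to (1/2)^{n+2} (in ℝ, as the natural number x → ∞). -/

import Mathlib

open Polynomial Filter

/-- The `N`-th Fourier coefficient of the mod-2 eta power `η^r(q^{m_r})`:
the coefficient of `X^N` in `X^{b_r} · ∏_{n=1}^{N} (1 − X^{m_r·n})^r` over `ZMod 2`,
where `m_r = 24 / gcd 24 r` and `b_r = r / gcd 24 r`. -/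
noncomputable def etaCoeff (r N : ℕ) : ZMod 2 :=
  (X ^ (r / Nat.gcd 24 r) *
    ∏ n ∈ Finset.Icc 1 N,
      ((1 : Polynomial (ZMod 2)) - X ^ (24 / Nat.gcd 24 r * n)) ^ r).coeff N

/-- `ν_r(ℓ)`: the smallest multiple of `ℓ` that is `≥ b_r` and congruent to `b_r`
modulo `m_r`. -/
noncomputable def nuR (r ℓ : ℕ) : ℕ :=
  sInf {N : ℕ | ℓ ∣ N ∧ r / Nat.gcd 24 r ≤ N ∧
    N % (24 / Nat.gcd 24 r) = (r / Nat.gcd 24 r) % (24 / Nat.gcd 24 r)}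

/-- `π(x)`: the number of primes `≤ x`. -/
def primePi (x : ℕ) : ℕ := ((Finset.range (x + 1)).filter Nat.Prime).card

/-- The number of primes `ℓ` with `5 ≤ ℓ ≤ x` and `c_r(ν_r(ℓ)) = 1`. -/
noncomputable def etaDensityCount (r x : ℕ) : ℕ :=
  ((Finset.range (x + 1)).filter
    (fun ℓ => ℓ.Prime ∧ 5 ≤ ℓ ∧ etaCoeff r (nuR r ℓ) = 1)).card

/-!
Modulo `2`, `X ∏ (1 - X ^ k) ^ 24 ≡ ∑ X ^ ((2s+1)²)`, so for `r = 24 (2 · 4ⁿ + 1)` the coefficient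
at a prime `ℓ` counts modulo `2` the representations `ℓ = a² + 2 · 4ⁿ · b²` with `a, b` odd and
positive. As `ℤ[√-2]` is a Euclidean domain with units `±1`, there is at most one. Hence the
coefficient is `1` iff `ℓ` is the norm of an element of the order `ℤ[2ⁿ√-2]` but not of the order
`ℤ[2ⁿ⁺¹√-2]`.

The primes that are norms from `ℤ[2ᵏ√-2]` are cut out by the characters of its ring class group,
which has order `2ᵏ`. The Hecke series of a nontrivial character continues to `1/2 < re s`, because
its partial sums over the lattice points of an ellipse cancel up to the boundary. A character of
order at least `3` has nonvanishing series on `re s = 1` by the `3-4-1` inequality, and one of order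
at most `2` is determined by residues modulo `8`. A Wiener–Ikehara theorem, obtained by Fejér
smoothing, then gives the density `2^{-(k+1)}` for `k ≥ 1`, and
`2^{-(n+1)} - 2^{-(n+2)} = 2^{-(n+2)}`.
-/

section Tauberian

open MeasureTheory Set Topology

/-- `κ` is a probability density with mass at least `1 - τ` on `[-τ, τ]`. -/
structure IsConcentratedKernel (κ : ℝ → ℝ) (τ : ℝ) : Prop where
  nonneg : ∀ v, 0 ≤ κ v
  integrable : Integrable κ
  integral_eq_one : ∫ v, κ v = 1
  le_setIntegral : 1 - τ ≤ ∫ v in Icc (-τ) τ, κ v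

section MonotoneMulExp

variable {B κ : ℝ → ℝ} {M τ A : ℝ}

lemma measurable_of_monotone_mul_exp (hmono : Monotone fun u => B u * Real.exp u) :
    Measurable B := by
  have hB : B = fun u => B u * Real.exp u * Real.exp (-u) := by
    ext u
    rw [mul_assoc, ← Real.exp_add, add_neg_cancel, Real.exp_zero, mul_one]
  rw [hB]
  exact hmono.measurable.mul (Real.measurable_exp.comp measurable_neg)

lemma le_mul_exp_of_monotone_mul_exp (hB0 : ∀ u, 0 ≤ B u)
    (hmono : Monotone fun u => B u * Real.exp u) {u w δ : ℝ} (huw : u ≤ w) (hwδ : w ≤ u + δ) :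
    B u ≤ B w * Real.exp δ := by
  refine le_of_mul_le_mul_right ?_ (Real.exp_pos u)
  calc B u * Real.exp u ≤ B w * Real.exp w := hmono huw
    _ ≤ B w * Real.exp (δ + u) :=
      mul_le_mul_of_nonneg_left (Real.exp_le_exp.2 (by linarith)) (hB0 w)
    _ = B w * Real.exp δ * Real.exp u := by rw [Real.exp_add, mul_assoc]

lemma integrable_comp_sub_mul (hB : Measurable B) (hB0 : ∀ u, 0 ≤ B u) (hBM : ∀ u, B u ≤ M)
    (hκ : Integrable κ) (y : ℝ) : Integrable fun v => B (y - v) * κ v :=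
  hκ.bdd_mul (c := M) (hB.comp (measurable_const.sub measurable_id)).aestronglyMeasurable
    (Eventually.of_forall fun v => by rw [Real.norm_of_nonneg (hB0 _)]; exact hBM _)

lemma mul_exp_neg_le_integral_comp_sub_mul (hB0 : ∀ u, 0 ≤ B u) (hBM : ∀ u, B u ≤ M)
    (hmono : Monotone fun u => B u * Real.exp u) (hκ : IsConcentratedKernel κ τ) (y : ℝ) :
    B y * Real.exp (-(2 * τ)) * (1 - τ) ≤ ∫ v, B (y + τ - v) * κ v := by
  have hint := integrable_comp_sub_mul (measurable_of_monotone_mul_exp hmono) hB0 hBM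
    hκ.integrable (y + τ)
  calc B y * Real.exp (-(2 * τ)) * (1 - τ)
      ≤ B y * Real.exp (-(2 * τ)) * ∫ v in Icc (-τ) τ, κ v :=
        mul_le_mul_of_nonneg_left hκ.le_setIntegral (mul_nonneg (hB0 y) (Real.exp_pos _).le)
    _ = ∫ v in Icc (-τ) τ, B y * Real.exp (-(2 * τ)) * κ v := (integral_const_mul _ _).symm
    _ ≤ ∫ v in Icc (-τ) τ, B (y + τ - v) * κ v := by
        refine setIntegral_mono_on (hκ.integrable.const_mul _).integrableOn hint.integrableOn
          measurableSet_Icc fun v hv => mul_le_mul_of_nonneg_right ?_ (hκ.nonneg v)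
        rw [Real.exp_neg, ← div_eq_mul_inv, div_le_iff₀ (Real.exp_pos _)]
        exact le_mul_exp_of_monotone_mul_exp hB0 hmono (by linarith [hv.2]) (by linarith [hv.1])
    _ ≤ ∫ v, B (y + τ - v) * κ v :=
        setIntegral_le_integral hint
          (Eventually.of_forall fun v => mul_nonneg (hB0 _) (hκ.nonneg v))

lemma integral_comp_sub_mul_le (hB0 : ∀ u, 0 ≤ B u) (hBM : ∀ u, B u ≤ M)
    (hmono : Monotone fun u => B u * Real.exp u) (hκ : IsConcentratedKernel κ τ) (y : ℝ) :
    ∫ v, B (y - τ - v) * κ v ≤ B y * Real.exp (2 * τ) + M * τ := by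
  have hint := integrable_comp_sub_mul (measurable_of_monotone_mul_exp hmono) hB0 hBM
    hκ.integrable (y - τ)
  have hmass := integral_add_compl (measurableSet_Icc (a := -τ) (b := τ)) hκ.integrable
  have hcore : ∫ v in Icc (-τ) τ, B (y - τ - v) * κ v ≤ B y * Real.exp (2 * τ) := by
    have hle : ∫ v in Icc (-τ) τ, κ v ≤ 1 := by
      rw [← hκ.integral_eq_one]
      exact setIntegral_le_integral hκ.integrable (Eventually.of_forall hκ.nonneg)
    calc ∫ v in Icc (-τ) τ, B (y - τ - v) * κ v
        ≤ ∫ v in Icc (-τ) τ, B y * Real.exp (2 * τ) * κ v :=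
          setIntegral_mono_on hint.integrableOn (hκ.integrable.const_mul _).integrableOn
            measurableSet_Icc fun v hv => mul_le_mul_of_nonneg_right
              (le_mul_exp_of_monotone_mul_exp hB0 hmono (by linarith [hv.1]) (by linarith [hv.2]))
              (hκ.nonneg v)
      _ = B y * Real.exp (2 * τ) * ∫ v in Icc (-τ) τ, κ v := integral_const_mul _ _
      _ ≤ B y * Real.exp (2 * τ) :=
          mul_le_of_le_one_right (mul_nonneg (hB0 y) (Real.exp_pos _).le) hle
  have htail : ∫ v in (Icc (-τ) τ)ᶜ, B (y - τ - v) * κ v ≤ M * τ := by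
    calc ∫ v in (Icc (-τ) τ)ᶜ, B (y - τ - v) * κ v
        ≤ ∫ v in (Icc (-τ) τ)ᶜ, M * κ v :=
          setIntegral_mono_on hint.integrableOn (hκ.integrable.const_mul _).integrableOn
            measurableSet_Icc.compl fun v _ => mul_le_mul_of_nonneg_right (hBM _) (hκ.nonneg v)
      _ = M * ∫ v in (Icc (-τ) τ)ᶜ, κ v := integral_const_mul _ _
      _ ≤ M * τ := mul_le_mul_of_nonneg_left
          (by linarith [hκ.le_setIntegral, hκ.integral_eq_one]) ((hB0 0).trans (hBM 0))
  rw [← integral_add_compl measurableSet_Icc hint]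
  exact add_le_add hcore htail

lemma eventually_bounds_of_tendsto_kernel_average (hB0 : ∀ u, 0 ≤ B u) (hBM : ∀ u, B u ≤ M)
    (hmono : Monotone fun u => B u * Real.exp u) (hτ0 : 0 < τ) (hτ1 : τ < 1)
    (hκ : IsConcentratedKernel κ τ)
    (hlim : Tendsto (fun y => ∫ v, B (y - v) * κ v) atTop (𝓝 A)) :
    ∀ᶠ y in atTop, B y ≤ Real.exp (2 * τ) * (A + τ) / (1 - τ) ∧
      (A - τ - M * τ) / Real.exp (2 * τ) ≤ B y := by
  have hupper := (tendsto_atTop_add_const_right atTop τ tendsto_id).eventually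
    (hlim.eventually_lt_const (show A < A + τ by linarith))
  have hlower := (tendsto_atTop_add_const_right atTop (-τ) tendsto_id).eventually
    (hlim.eventually_const_lt (show A - τ < A by linarith))
  filter_upwards [hupper, hlower] with y hyupper hylower
  simp only [id, ← sub_eq_add_neg] at hyupper hylower
  have hle := mul_exp_neg_le_integral_comp_sub_mul hB0 hBM hmono hκ y
  have hge := integral_comp_sub_mul_le hB0 hBM hmono hκ y
  refine ⟨?_, (div_le_iff₀ (Real.exp_pos _)).2 (by linarith)⟩
  rw [le_div_iff₀ (by linarith)]
  calc B y * (1 - τ) = Real.exp (2 * τ) * (B y * Real.exp (-(2 * τ)) * (1 - τ)) := by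
        rw [Real.exp_neg]
        field_simp
    _ ≤ Real.exp (2 * τ) * (A + τ) :=
        mul_le_mul_of_nonneg_left (by linarith) (Real.exp_pos _).le

theorem tendsto_of_tendsto_kernel_average (hB0 : ∀ u, 0 ≤ B u) (hBM : ∀ u, B u ≤ M)
    (hmono : Monotone fun u => B u * Real.exp u)
    (hk : ∀ τ : ℝ, 0 < τ → ∃ κ : ℝ → ℝ, IsConcentratedKernel κ τ ∧
      Tendsto (fun y => ∫ v, B (y - v) * κ v) atTop (𝓝 A)) :
    Tendsto B atTop (𝓝 A) := by
  have hupper : Tendsto (fun τ : ℝ => Real.exp (2 * τ) * (A + τ) / (1 - τ)) (𝓝[>] 0) (𝓝 A) := by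
    have hcont : ContinuousAt (fun τ : ℝ => Real.exp (2 * τ) * (A + τ) / (1 - τ)) 0 :=
      ContinuousAt.div (by fun_prop) (by fun_prop) (by norm_num)
    simpa using hcont.tendsto.mono_left nhdsWithin_le_nhds
  have hlower : Tendsto (fun τ : ℝ => (A - τ - M * τ) / Real.exp (2 * τ)) (𝓝[>] 0) (𝓝 A) := by
    have hcont : ContinuousAt (fun τ : ℝ => (A - τ - M * τ) / Real.exp (2 * τ)) 0 :=
      ContinuousAt.div (by fun_prop) (by fun_prop) (by norm_num)
    simpa using hcont.tendsto.mono_left nhdsWithin_le_nhds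
  rw [Metric.tendsto_nhds]
  intro ε hε
  obtain ⟨τ, hτupper, hτlower, hτ0, hτ1⟩ := ((hupper.eventually_lt_const
    (show A < A + ε by linarith)).and ((hlower.eventually_const_lt
    (show A - ε < A by linarith)).and (Ioo_mem_nhdsGT (zero_lt_one' ℝ)))).exists
  obtain ⟨κ, hκ, hlim⟩ := hk τ hτ0
  filter_upwards [eventually_bounds_of_tendsto_kernel_average hB0 hBM hmono hτ0 hτ1 hκ hlim]
    with y hy
  rw [Real.dist_eq, abs_lt]
  constructor <;> linarith [hy.1, hy.2]

end MonotoneMulExp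

/-- The Fejér kernel, i.e. the Fourier transform of the triangle function `t ↦ c - |t|` on
`[-c, c]`. Division by zero gives it the value `0` instead of `c ^ 2` at `u = 0`. -/
noncomputable def fejer (c u : ℝ) : ℝ := 2 * (1 - Real.cos (c * u)) / u ^ 2

lemma fejer_nonneg (c u : ℝ) : 0 ≤ fejer c u :=
  div_nonneg (mul_nonneg zero_le_two (by linarith [Real.cos_le_one (c * u)])) (sq_nonneg u)

lemma fejer_le (c u : ℝ) : fejer c u ≤ (c ^ 2 + 4) * (1 + u ^ 2)⁻¹ := by
  rcases eq_or_ne u 0 with rfl | hu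
  · rw [fejer, zero_pow two_ne_zero, div_zero]
    positivity
  · have hu2 : 0 < u ^ 2 := by positivity
    rw [fejer, ← div_eq_mul_inv, div_le_div_iff₀ hu2 (by positivity)]
    nlinarith [mul_pow c u 2, Real.one_sub_sq_div_two_le_cos (x := c * u),
      Real.neg_one_le_cos (c * u)]

lemma measurable_fejer (c : ℝ) : Measurable (fejer c) := by
  unfold fejer
  fun_prop

lemma integrable_fejer (c : ℝ) : Integrable (fejer c) := by
  refine (integrable_inv_one_add_sq.const_mul (c ^ 2 + 4)).mono'
    (measurable_fejer c).aestronglyMeasurable (Eventually.of_forall fun u => ?_)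
  rw [Real.norm_of_nonneg (fejer_nonneg c u)]
  exact fejer_le c u

lemma fejer_eq_scale {c : ℝ} (hc : c ≠ 0) (u : ℝ) : fejer c u = c ^ 2 * fejer 1 (c * u) := by
  rcases eq_or_ne u 0 with rfl | hu
  · simp [fejer]
  · simp only [fejer, one_mul]
    field_simp

lemma integral_fejer_one_pos : 0 < ∫ u, fejer 1 u := by
  rw [integral_pos_iff_support_of_nonneg (fejer_nonneg 1) (integrable_fejer 1)]
  have hsupp : Ioo (0 : ℝ) 1 ⊆ Function.support (fejer 1) := by
    intro u hu
    have hcos : Real.cos u < Real.cos 0 :=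
      Real.cos_lt_cos_of_nonneg_of_le_pi le_rfl (by linarith [Real.pi_gt_three, hu.2]) hu.1
    rw [Real.cos_zero, ← sub_pos] at hcos
    have hu0 : 0 < u := hu.1
    rw [Function.mem_support, fejer, one_mul]
    positivity
  exact lt_of_lt_of_le (by simp) (measure_mono hsupp)

lemma integral_fejer {c : ℝ} (hc : 0 < c) : ∫ u, fejer c u = c * ∫ u, fejer 1 u := by
  simp_rw [fejer_eq_scale hc.ne', integral_const_mul]
  rw [Measure.integral_comp_mul_left (fejer 1) c, abs_of_pos (inv_pos.2 hc), smul_eq_mul]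
  field_simp

lemma integral_fejer_pos {c : ℝ} (hc : 0 < c) : 0 < ∫ u, fejer c u := by
  rw [integral_fejer hc]
  exact mul_pos hc integral_fejer_one_pos

lemma setIntegral_fejer {c τ : ℝ} (hc : 0 < c) (hτ : 0 ≤ τ) :
    ∫ u in Icc (-τ) τ, fejer c u = c * ∫ u in (-(c * τ))..(c * τ), fejer 1 u := by
  rw [integral_Icc_eq_integral_Ioc, ← intervalIntegral.integral_of_le (by linarith)]
  simp_rw [fejer_eq_scale hc.ne', intervalIntegral.integral_const_mul]
  rw [intervalIntegral.integral_comp_mul_left _ hc.ne', smul_eq_mul, mul_neg]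
  field_simp

lemma exists_isConcentratedKernel_fejer {τ : ℝ} (hτ : 0 < τ) :
    ∃ c : ℝ, 0 < c ∧ IsConcentratedKernel (fun v => fejer c v / ∫ u, fejer c u) τ := by
  have hlim : Tendsto (fun c : ℝ => ∫ u in (-(c * τ))..(c * τ), fejer 1 u) atTop
      (𝓝 (∫ u, fejer 1 u)) :=
    intervalIntegral_tendsto_integral (integrable_fejer 1)
      (tendsto_neg_atTop_atBot.comp (tendsto_id.atTop_mul_const hτ))
      (tendsto_id.atTop_mul_const hτ)
  have hlt : (1 - τ) * ∫ u, fejer 1 u < ∫ u, fejer 1 u := by nlinarith [integral_fejer_one_pos]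
  obtain ⟨c, hmass, hc⟩ := ((hlim.eventually_const_lt hlt).and (eventually_gt_atTop 0)).exists
  refine ⟨c, hc, fun v => div_nonneg (fejer_nonneg _ _) (integral_fejer_pos hc).le,
    (integrable_fejer c).div_const _, ?_, ?_⟩
  · rw [integral_div, div_self (integral_fejer_pos hc).ne']
  · rw [integral_div, le_div_iff₀ (integral_fejer_pos hc), integral_fejer hc,
      setIntegral_fejer hc hτ.le, mul_left_comm]
    exact mul_le_mul_of_nonneg_left hmass.le hc.le

lemma integral_sub_mul_cexp {z : ℂ} (hz : z ≠ 0) (c : ℝ) :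
    ∫ t in (0 : ℝ)..c, ((c - t : ℝ) : ℂ) * Complex.exp (z * t) =
      (Complex.exp (z * c) - 1 - z * c) / z ^ 2 := by
  have hderiv : ∀ t : ℝ, HasDerivAt
      (fun t : ℝ => ((c - t : ℝ) : ℂ) * Complex.exp (z * t) / z + Complex.exp (z * t) / z ^ 2)
      (((c - t : ℝ) : ℂ) * Complex.exp (z * t)) t := by
    intro t
    have hexp : HasDerivAt (fun t : ℝ => Complex.exp (z * t)) (Complex.exp (z * t) * z) t := by
      simpa using ((Complex.ofRealCLM.hasDerivAt (x := t)).const_mul z).cexp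
    have hlin : HasDerivAt (fun t : ℝ => ((c - t : ℝ) : ℂ)) (-1) t := by
      simpa using ((hasDerivAt_id t).const_sub c).ofReal_comp
    refine (((hlin.mul hexp).div_const z).add (hexp.div_const (z ^ 2))).congr_deriv ?_
    field_simp
    ring
  have hcont : Continuous fun t : ℝ => ((c - t : ℝ) : ℂ) * Complex.exp (z * t) := by fun_prop
  rw [intervalIntegral.integral_eq_sub_of_hasDerivAt (fun t _ => hderiv t)
    (hcont.intervalIntegrable _ _)]
  simp only [sub_self, Complex.ofReal_zero, zero_mul, zero_div, zero_add, sub_zero, mul_zero,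
    Complex.exp_zero, mul_one]
  field_simp
  ring

lemma integral_triangle_mul_cexp {z : ℂ} (hz : z ≠ 0) {c : ℝ} (hc : 0 ≤ c) :
    ∫ t in (-c)..c, ((c - |t| : ℝ) : ℂ) * Complex.exp (z * t) =
      (Complex.exp (z * c) + Complex.exp (-(z * c)) - 2) / z ^ 2 := by
  have hcont : Continuous fun t : ℝ => ((c - |t| : ℝ) : ℂ) * Complex.exp (z * t) := by fun_prop
  have hright : ∀ w : ℂ, ∫ t in (0 : ℝ)..c, ((c - |t| : ℝ) : ℂ) * Complex.exp (w * t) =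
      ∫ t in (0 : ℝ)..c, ((c - t : ℝ) : ℂ) * Complex.exp (w * t) := fun w =>
    intervalIntegral.integral_congr fun t ht => by
      rw [uIcc_of_le hc] at ht
      simp only [abs_of_nonneg ht.1]
  have hleft : ∫ t in (-c)..0, ((c - |t| : ℝ) : ℂ) * Complex.exp (z * t) =
      ∫ t in (0 : ℝ)..c, ((c - |t| : ℝ) : ℂ) * Complex.exp (-z * t) := by
    rw [← neg_zero, ← intervalIntegral.integral_comp_neg, neg_zero]
    simp only [abs_neg, Complex.ofReal_neg, mul_neg, neg_mul]
  rw [← intervalIntegral.integral_add_adjacent_intervals (b := 0)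
    (hcont.intervalIntegrable _ _) (hcont.intervalIntegrable _ _), hleft, hright, hright,
    integral_sub_mul_cexp hz, integral_sub_mul_cexp (neg_ne_zero.2 hz), neg_mul, neg_sq]
  ring

lemma integral_triangle_mul_exp {c u : ℝ} (hc : 0 ≤ c) (hu : u ≠ 0) :
    ∫ t in (-c)..c, ((c - |t| : ℝ) : ℂ) * Complex.exp (Complex.I * t * u) = (fejer c u : ℂ) := by
  have hz : (u * Complex.I : ℂ) ≠ 0 :=
    mul_ne_zero (Complex.ofReal_ne_zero.2 hu) Complex.I_ne_zero
  have hcomm : ∀ t : ℝ, Complex.I * t * u = u * Complex.I * t := fun t => by ring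
  simp_rw [hcomm]
  rw [integral_triangle_mul_cexp hz hc, fejer, mul_pow, Complex.I_sq]
  push_cast
  have hcos := Complex.two_cos (c * u : ℂ)
  rw [show u * Complex.I * c = c * u * Complex.I by ring, ← neg_mul, ← hcos]
  ring

lemma norm_triangle_mul_exp_le {c t : ℝ} (ht : t ∈ Icc (-c) c) (y : ℝ) :
    ‖((c - |t| : ℝ) : ℂ) * Complex.exp (Complex.I * t * y)‖ ≤ c := by
  have hre : (Complex.I * t * y : ℂ).re = 0 := by simp
  rw [norm_mul, Complex.norm_exp, hre, Real.exp_zero, mul_one, Complex.norm_real,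
    Real.norm_of_nonneg (sub_nonneg.2 (abs_le.2 ht))]
  exact sub_le_self c (abs_nonneg t)

section Laplace

variable {β : ℝ → ℂ} {M c : ℝ}

lemma integrable_triangle_mul_laplace (hβ : Measurable β) (hM : ∀ u, ‖β u‖ ≤ M) (hc : 0 ≤ c)
    {δ : ℝ} (hδ : 0 < δ) (y : ℝ) :
    Integrable (Function.uncurry fun t u : ℝ =>
      ((c - |t| : ℝ) : ℂ) * Complex.exp (Complex.I * t * y) *
        (β u * Complex.exp (-((δ : ℂ) + t * Complex.I) * u)))
      ((volume.restrict (Ioc (-c) c)).prod (volume.restrict (Ioi 0))) := by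
  have hconst : Integrable (fun _ : ℝ => c) (volume.restrict (Ioc (-c) c)) := integrable_const c
  have hexp : Integrable (fun u : ℝ => M * Real.exp (-δ * u)) (volume.restrict (Ioi 0)) :=
    (integrableOn_exp_mul_Ioi (neg_lt_zero.2 hδ) 0).const_mul M
  refine (hconst.mul_prod hexp).mono' (Measurable.aestronglyMeasurable ?_) ?_
  · unfold Function.uncurry
    fun_prop
  · rw [Measure.prod_restrict]
    refine (ae_restrict_iff' (measurableSet_Ioc.prod measurableSet_Ioi)).2
      (Eventually.of_forall ?_)
    rintro ⟨t, u⟩ ⟨ht, -⟩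
    have hre : (-((δ : ℂ) + t * Complex.I) * u : ℂ).re = -δ * u := by simp
    rw [Function.uncurry, norm_mul, norm_mul (β u), Complex.norm_exp, hre]
    exact mul_le_mul (norm_triangle_mul_exp_le (Ioc_subset_Icc_self ht) y)
      (mul_le_mul_of_nonneg_right (hM u) (Real.exp_pos _).le) (by positivity) hc

lemma integral_triangle_mul_laplace (hβ : Measurable β) (hM : ∀ u, ‖β u‖ ≤ M) (hc : 0 ≤ c)
    {δ : ℝ} (hδ : 0 < δ) (y : ℝ) :
    ∫ t in (-c)..c, ((c - |t| : ℝ) : ℂ) * Complex.exp (Complex.I * t * y) *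
        ∫ u in Ioi (0 : ℝ), β u * Complex.exp (-((δ : ℂ) + t * Complex.I) * u) =
      ∫ u in Ioi (0 : ℝ), β u * Real.exp (-δ * u) * fejer c (y - u) := by
  rw [intervalIntegral.integral_of_le (by linarith)]
  simp_rw [← integral_const_mul]
  rw [integral_integral_swap (integrable_triangle_mul_laplace hβ hM hc hδ y)]
  refine setIntegral_congr_ae measurableSet_Ioi ?_
  filter_upwards [Measure.ae_ne volume y] with u hu _
  rw [← integral_triangle_mul_exp hc (sub_ne_zero.2 hu.symm),
    intervalIntegral.integral_of_le (by linarith), ← integral_const_mul]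
  refine integral_congr_ae (Eventually.of_forall fun t => ?_)
  have hexp : Complex.exp (Complex.I * t * y) * Complex.exp (-((δ : ℂ) + t * Complex.I) * u) =
      ((Real.exp (-δ * u) : ℝ) : ℂ) * Complex.exp (Complex.I * t * ((y - u : ℝ) : ℂ)) := by
    rw [Complex.ofReal_exp, ← Complex.exp_add, ← Complex.exp_add]
    push_cast
    ring_nf
  linear_combination ((c - |t| : ℝ) : ℂ) * β u * hexp

lemma tendsto_integral_triangle_mul {H : ℂ → ℂ} (hH : ContinuousOn H {s | 0 ≤ s.re})
    (hc : 0 ≤ c) (y : ℝ) :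
    Tendsto (fun δ : ℝ => ∫ t in (-c)..c,
      ((c - |t| : ℝ) : ℂ) * Complex.exp (Complex.I * t * y) * H ((δ : ℂ) + t * Complex.I))
      (𝓝[>] 0) (𝓝 (∫ t in (-c)..c,
      ((c - |t| : ℝ) : ℂ) * Complex.exp (Complex.I * t * y) * H (t * Complex.I))) := by
  obtain ⟨C, hC⟩ : ∃ C, ∀ s ∈ Icc (0 : ℝ) 1 ×ℂ Icc (-c) c, ‖H s‖ ≤ C :=
    (isCompact_Icc.reProdIm isCompact_Icc).exists_bound_of_continuousOn
      (hH.mono fun s hs => hs.1.1)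
  have hδ : ∀ᶠ δ : ℝ in 𝓝[>] 0, δ ∈ Ioc (0 : ℝ) 1 := Ioc_mem_nhdsGT zero_lt_one
  refine intervalIntegral.tendsto_integral_filter_of_dominated_convergence (fun _ => c * C) ?_ ?_
    intervalIntegrable_const (Eventually.of_forall fun t _ => Tendsto.const_mul _ ?_)
  · filter_upwards [hδ] with δ hδ
    have htri : Continuous fun t : ℝ =>
        ((c - |t| : ℝ) : ℂ) * Complex.exp (Complex.I * t * y) := by fun_prop
    exact (htri.mul (hH.comp_continuous (by fun_prop) fun t => by
      simpa using hδ.1.le)).aestronglyMeasurable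
  · filter_upwards [hδ] with δ hδ
    refine Eventually.of_forall fun t ht => ?_
    rw [uIoc_of_le (by linarith)] at ht
    rw [norm_mul]
    refine mul_le_mul (norm_triangle_mul_exp_le (Ioc_subset_Icc_self ht) y)
      (hC _ ⟨?_, ?_⟩) (norm_nonneg _) hc
    · simpa using ⟨hδ.1.le, hδ.2⟩
    · simpa using ⟨ht.1.le, ht.2⟩
  · have hline : Continuous fun δ : ℝ => (δ : ℂ) + t * Complex.I := by fun_prop
    refine (hH (t * Complex.I) (by simp)).tendsto.comp (tendsto_nhdsWithin_iff.2 ⟨?_, ?_⟩)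
    · simpa using (hline.tendsto 0).mono_left nhdsWithin_le_nhds
    · filter_upwards [hδ] with δ hδ
      simpa using hδ.1.le

lemma tendsto_integral_mul_exp_mul_fejer (hβ : Measurable β) (hM : ∀ u, ‖β u‖ ≤ M) (c y : ℝ) :
    Tendsto (fun δ : ℝ => ∫ u in Ioi (0 : ℝ), β u * Real.exp (-δ * u) * fejer c (y - u))
      (𝓝[>] 0) (𝓝 (∫ u in Ioi (0 : ℝ), β u * fejer c (y - u))) := by
  have hfejer := measurable_fejer c
  refine tendsto_integral_filter_of_dominated_convergence (fun u => M * fejer c (y - u))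
    (Eventually.of_forall fun δ => Measurable.aestronglyMeasurable (by fun_prop)) ?_
    (((integrable_fejer c).comp_sub_left y).const_mul M).integrableOn
    (Eventually.of_forall fun u => ?_)
  · filter_upwards [self_mem_nhdsWithin] with δ hδ
    refine (ae_restrict_iff' measurableSet_Ioi).2 (Eventually.of_forall fun u hu => ?_)
    rw [norm_mul, norm_mul, Complex.norm_real, Complex.norm_real,
      Real.norm_of_nonneg (fejer_nonneg _ _), Real.norm_of_nonneg (Real.exp_pos _).le]
    refine mul_le_mul_of_nonneg_right ?_ (fejer_nonneg _ _)
    refine (mul_le_of_le_one_right (norm_nonneg _) (Real.exp_le_one_iff.2 ?_)).trans (hM u)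
    nlinarith [mem_Ioi.1 hδ, mem_Ioi.1 hu]
  · have hcont : Continuous fun δ : ℝ => β u * Real.exp (-δ * u) * fejer c (y - u) := by fun_prop
    simpa using (hcont.tendsto 0).mono_left nhdsWithin_le_nhds

lemma integral_triangle_mul_boundary (hβ : Measurable β) (hM : ∀ u, ‖β u‖ ≤ M) {H : ℂ → ℂ}
    (hH : ContinuousOn H {s | 0 ≤ s.re})
    (hL : ∀ s : ℂ, 0 < s.re → ∫ u in Ioi (0 : ℝ), β u * Complex.exp (-s * u) = H s)
    (hc : 0 ≤ c) (y : ℝ) :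
    ∫ t in (-c)..c, ((c - |t| : ℝ) : ℂ) * Complex.exp (Complex.I * t * y) * H (t * Complex.I) =
      ∫ u in Ioi (0 : ℝ), β u * fejer c (y - u) := by
  refine tendsto_nhds_unique ((tendsto_integral_triangle_mul hH hc y).congr' ?_)
    (tendsto_integral_mul_exp_mul_fejer hβ hM c y)
  filter_upwards [self_mem_nhdsWithin] with δ hδ
  rw [← integral_triangle_mul_laplace hβ hM hc hδ y]
  exact intervalIntegral.integral_congr fun t _ => by rw [hL _ (by simpa using hδ)]

lemma tendsto_integral_mul_fejer (hβ : Measurable β) (hM : ∀ u, ‖β u‖ ≤ M) {H : ℂ → ℂ}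
    (hH : ContinuousOn H {s | 0 ≤ s.re})
    (hL : ∀ s : ℂ, 0 < s.re → ∫ u in Ioi (0 : ℝ), β u * Complex.exp (-s * u) = H s)
    (hc : 0 ≤ c) :
    Tendsto (fun y : ℝ => ∫ u in Ioi (0 : ℝ), β u * fejer c (y - u)) atTop (𝓝 0) := by
  have hRL := Real.tendsto_integral_exp_smul_cocompact
    ((Ioc (-c) c).indicator fun t : ℝ => ((c - |t| : ℝ) : ℂ) * H (t * Complex.I))
  have hscale : Tendsto (fun y : ℝ => -(y / (2 * Real.pi))) atTop (cocompact ℝ) :=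
    (tendsto_neg_atTop_atBot.comp
      (tendsto_id.atTop_div_const (by positivity))).mono_right atBot_le_cocompact
  refine (hRL.comp hscale).congr fun y => ?_
  rw [← integral_triangle_mul_boundary hβ hM hH hL hc y,
    intervalIntegral.integral_of_le (by linarith), ← integral_indicator measurableSet_Ioc]
  refine integral_congr_ae (Eventually.of_forall fun t => ?_)
  by_cases ht : t ∈ Ioc (-c) c
  · have hphase : ((2 * Real.pi * -(t * -(y / (2 * Real.pi))) : ℝ) : ℂ) * Complex.I =
        Complex.I * t * y := by
      have := Real.pi_ne_zero
      push_cast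
      field_simp
    simp only [indicator_of_mem ht]
    rw [Circle.smul_def, Real.fourierChar_apply, smul_eq_mul, hphase]
    ring
  · simp only [indicator_of_notMem ht, smul_zero]

end Laplace

lemma tendsto_setIntegral_Ioi_comp_sub {f : ℝ → ℝ} (hf : Integrable f) :
    Tendsto (fun y : ℝ => ∫ u in Ioi (0 : ℝ), f (y - u)) atTop (𝓝 (∫ u, f u)) := by
  refine ((aecover_Iio (μ := volume) (tendsto_id (α := ℝ)
    (x := atTop))).integral_tendsto_of_countably_generated hf).congr fun y => ?_
  rw [← integral_indicator measurableSet_Iio, ← integral_indicator measurableSet_Ioi,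
    ← integral_sub_left_eq_self _ volume y]
  congr 1
  ext u
  simp [indicator, id]

section LaplaceTauberian

variable {B : ℝ → ℝ} {M A : ℝ} {H : ℂ → ℂ}

lemma tendsto_integral_sub_mul_fejer (hB : Measurable B) (hB0 : ∀ u, 0 ≤ B u)
    (hBM : ∀ u, B u ≤ M) (hH : ContinuousOn H {s | 0 ≤ s.re})
    (hL : ∀ s : ℂ, 0 < s.re →
      ∫ u in Ioi (0 : ℝ), ((B u - A : ℝ) : ℂ) * Complex.exp (-s * u) = H s)
    {c : ℝ} (hc : 0 ≤ c) :
    Tendsto (fun y : ℝ => ∫ u in Ioi (0 : ℝ), (B u - A) * fejer c (y - u)) atTop (𝓝 0) := by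
  have hbound : ∀ u, ‖((B u - A : ℝ) : ℂ)‖ ≤ M + |A| := fun u => by
    rw [Complex.norm_real, Real.norm_eq_abs]
    refine (abs_sub _ _).trans ?_
    rw [abs_of_nonneg (hB0 u)]
    linarith [hBM u]
  refine ((Complex.continuous_re.tendsto 0).comp (tendsto_integral_mul_fejer
    (β := fun u => ((B u - A : ℝ) : ℂ)) (by fun_prop) hbound hH hL hc)).congr fun y => ?_
  simp only [Function.comp_apply, ← Complex.ofReal_mul]
  rw [integral_complex_ofReal, Complex.ofReal_re]

lemma tendsto_integral_comp_sub_mul_fejer (hB : Measurable B) (hB0 : ∀ u, 0 ≤ B u)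
    (hBneg : ∀ u < 0, B u = 0) (hBM : ∀ u, B u ≤ M) (hH : ContinuousOn H {s | 0 ≤ s.re})
    (hL : ∀ s : ℂ, 0 < s.re →
      ∫ u in Ioi (0 : ℝ), ((B u - A : ℝ) : ℂ) * Complex.exp (-s * u) = H s)
    {c : ℝ} (hc : 0 ≤ c) :
    Tendsto (fun y : ℝ => ∫ v, B (y - v) * fejer c v) atTop (𝓝 (A * ∫ u, fejer c u)) := by
  have hfejer : ∀ y, Integrable fun u => fejer c (y - u) := fun y =>
    (integrable_fejer c).comp_sub_left y
  have hint : ∀ y, Integrable fun u => B u * fejer c (y - u) := fun y => by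
    simpa using (integrable_comp_sub_mul hB hB0 hBM (integrable_fejer c) y).comp_sub_left y
  have hsum := (tendsto_integral_sub_mul_fejer hB hB0 hBM hH hL hc).add
    ((tendsto_setIntegral_Ioi_comp_sub (integrable_fejer c)).const_mul A)
  rw [zero_add] at hsum
  refine hsum.congr fun y => ?_
  calc (∫ u in Ioi (0 : ℝ), (B u - A) * fejer c (y - u)) + A * ∫ u in Ioi 0, fejer c (y - u)
      = ∫ u in Ioi (0 : ℝ), B u * fejer c (y - u) := by
        simp_rw [sub_mul]
        rw [integral_sub (hint y).integrableOn ((hfejer y).const_mul A).integrableOn,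
          integral_const_mul, sub_add_cancel]
    _ = ∫ u, B u * fejer c (y - u) := by
        refine setIntegral_eq_integral_of_ae_compl_eq_zero ?_
        filter_upwards [Measure.ae_ne volume 0] with u hu huneg
        rw [hBneg u (lt_of_le_of_ne (not_lt.1 huneg) hu), zero_mul]
    _ = ∫ v, B (y - v) * fejer c v := by
        rw [← integral_sub_left_eq_self _ volume y]
        simp_rw [sub_sub_cancel]

theorem tendsto_of_laplace (hB0 : ∀ u, 0 ≤ B u) (hBneg : ∀ u < 0, B u = 0)
    (hBM : ∀ u, B u ≤ M) (hmono : Monotone fun u => B u * Real.exp u)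
    (hH : ContinuousOn H {s | 0 ≤ s.re})
    (hL : ∀ s : ℂ, 0 < s.re →
      ∫ u in Ioi (0 : ℝ), ((B u - A : ℝ) : ℂ) * Complex.exp (-s * u) = H s) :
    Tendsto B atTop (𝓝 A) := by
  refine tendsto_of_tendsto_kernel_average hB0 hBM hmono fun τ hτ => ?_
  obtain ⟨c, hc, hκ⟩ := exists_isConcentratedKernel_fejer hτ
  refine ⟨_, hκ, ?_⟩
  have hlim := (tendsto_integral_comp_sub_mul_fejer (measurable_of_monotone_mul_exp hmono) hB0
    hBneg hBM hH hL hc.le).div_const (∫ u, fejer c u)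
  rw [mul_div_cancel_right₀ _ (integral_fejer_pos hc).ne'] at hlim
  simpa only [mul_div_assoc', integral_div] using hlim

end LaplaceTauberian

/-- The partial sums of `f` up to `eᵘ`, normalized by `e⁻ᵘ`: the function to which the Laplace
transform form of the Tauberian theorem is applied. -/
noncomputable def normalizedSum (f : ℕ → ℝ) (u : ℝ) : ℝ :=
  (∑ k ∈ Finset.Icc 1 ⌊Real.exp u⌋₊, f k) * Real.exp (-u)

namespace normalizedSum

variable {f : ℕ → ℝ} {M A : ℝ}

lemma nonneg (hf : ∀ n, 0 ≤ f n) (u : ℝ) : 0 ≤ normalizedSum f u :=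
  mul_nonneg (Finset.sum_nonneg fun k _ => hf k) (Real.exp_pos _).le

lemma of_neg (f : ℕ → ℝ) {u : ℝ} (hu : u < 0) : normalizedSum f u = 0 := by
  rw [normalizedSum, Nat.floor_eq_zero.2 (Real.exp_lt_one_iff.2 hu)]
  simp

lemma le (hf : ∀ n, 0 ≤ f n) (hM : ∀ n : ℕ, ∑ k ∈ Finset.Icc 1 n, f k ≤ M * n) (u : ℝ) :
    normalizedSum f u ≤ M := by
  have hM0 : 0 ≤ M := by simpa using (hf 1).trans (by simpa using hM 1)
  rw [normalizedSum, Real.exp_neg, ← div_eq_mul_inv, div_le_iff₀ (Real.exp_pos u)]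
  exact (hM _).trans (mul_le_mul_of_nonneg_left (Nat.floor_le (Real.exp_pos u).le) hM0)

lemma monotone_mul_exp (hf : ∀ n, 0 ≤ f n) :
    Monotone fun u => normalizedSum f u * Real.exp u := fun u v huv => by
  simp only [normalizedSum, mul_assoc, ← Real.exp_add, neg_add_cancel, Real.exp_zero, mul_one]
  exact Finset.sum_le_sum_of_subset_of_nonneg
    (Finset.Icc_subset_Icc_right (Nat.floor_mono (Real.exp_le_exp.2 huv))) fun k _ _ => hf k

lemma log_natCast (f : ℕ → ℝ) {n : ℕ} (hn : 0 < n) :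
    normalizedSum f (Real.log n) = (∑ k ∈ Finset.Icc 1 n, f k) / n := by
  have hn' : (0 : ℝ) < n := Nat.cast_pos.2 hn
  rw [normalizedSum, Real.exp_neg, Real.exp_log hn', Nat.floor_natCast, div_eq_mul_inv]

lemma integral_mul_exp (hf : ∀ n, 0 ≤ f n) (hM : ∀ n : ℕ, ∑ k ∈ Finset.Icc 1 n, f k ≤ M * n)
    {s : ℂ} (hs : 0 < s.re) :
    ∫ u in Ioi (0 : ℝ), (normalizedSum f u : ℂ) * Complex.exp (-s * u) =
      LSeries (fun n => (f n : ℂ)) (1 + s) / (1 + s) := by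
  have hs1 : (1 + s : ℂ) ≠ 0 := Complex.ne_zero_of_re_pos (by simpa using by linarith)
  have hO : (fun n ↦ ∑ k ∈ Finset.Icc 1 n, f k) =O[atTop] fun n ↦ (n : ℝ) ^ (1 : ℝ) := by
    refine Asymptotics.IsBigO.of_bound M (Eventually.of_forall fun n => ?_)
    rw [Real.rpow_one, Real.norm_of_nonneg (Finset.sum_nonneg fun k _ => hf k),
      Real.norm_of_nonneg (Nat.cast_nonneg n)]
    exact hM n
  rw [LSeries_eq_mul_integral_of_nonneg f zero_le_one (by simpa using hs) hO hf,
    mul_div_cancel_left₀ _ hs1, ← Real.exp_zero, ← integral_comp_exp_Ioi]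
  refine integral_congr_ae (Eventually.of_forall fun u => ?_)
  simp only [normalizedSum, Complex.real_smul]
  rw [Complex.cpow_def_of_ne_zero (by simp), ← Complex.ofReal_log (Real.exp_pos u).le,
    Real.log_exp]
  push_cast
  have hexp : Complex.exp (-u) * Complex.exp (-s * u) =
      Complex.exp u * Complex.exp (u * -(1 + s + 1)) := by
    rw [← Complex.exp_add, ← Complex.exp_add]
    ring_nf
  linear_combination (∑ k ∈ Finset.Icc 1 ⌊Real.exp u⌋₊, (f k : ℂ)) * hexp

lemma integral_sub_mul_exp (hf : ∀ n, 0 ≤ f n)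
    (hM : ∀ n : ℕ, ∑ k ∈ Finset.Icc 1 n, f k ≤ M * n) (A : ℝ) {s : ℂ} (hs : 0 < s.re) :
    ∫ u in Ioi (0 : ℝ), ((normalizedSum f u - A : ℝ) : ℂ) * Complex.exp (-s * u) =
      LSeries (fun n => (f n : ℂ)) (1 + s) / (1 + s) - A / s := by
  have hexp : IntegrableOn (fun u : ℝ => Complex.exp (-s * u)) (Ioi 0) :=
    integrableOn_exp_mul_complex_Ioi (by simpa using hs) 0
  have hmeas := measurable_of_monotone_mul_exp (monotone_mul_exp hf)
  have hint : IntegrableOn (fun u : ℝ => (normalizedSum f u : ℂ) * Complex.exp (-s * u))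
      (Ioi 0) :=
    hexp.bdd_mul (c := M) (by fun_prop) (Eventually.of_forall fun u => by
      rw [Complex.norm_real, Real.norm_of_nonneg (nonneg hf u)]
      exact le hf hM u)
  have hexpval : ∫ u in Ioi (0 : ℝ), Complex.exp (-s * u) = 1 / s := by
    rw [integral_exp_mul_complex_Ioi (by simpa using hs) 0]
    simp
  push_cast
  simp_rw [sub_mul]
  rw [integral_sub hint (hexp.const_mul _), integral_const_mul, hexpval, mul_one_div,
    integral_mul_exp hf hM hs]

end normalizedSum

/-- The **Wiener–Ikehara theorem** for Dirichlet series with nonnegative coefficients whose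
partial sums satisfy a Chebyshev bound. -/
theorem tendsto_sum_div_of_LSeries {f : ℕ → ℝ} (hf : ∀ n, 0 ≤ f n) {M : ℝ}
    (hM : ∀ n : ℕ, ∑ k ∈ Finset.Icc 1 n, f k ≤ M * n) {A : ℝ} {G : ℂ → ℂ}
    (hG : ContinuousOn G {s | 1 ≤ s.re})
    (hL : ∀ s : ℂ, 1 < s.re → LSeries (fun n => (f n : ℂ)) s = A / (s - 1) + G s) :
    Tendsto (fun n : ℕ => (∑ k ∈ Finset.Icc 1 n, f k) / n) atTop (𝓝 A) := by
  have hne : ∀ s : ℂ, 0 ≤ s.re → (1 + s : ℂ) ≠ 0 := fun s hs =>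
    Complex.ne_zero_of_re_pos (by simpa using by linarith)
  have hcont : ContinuousOn (fun s => (G (1 + s) - A) / (1 + s)) {s | 0 ≤ s.re} :=
    ((hG.comp (by fun_prop) fun s hs => by simpa using hs).sub continuousOn_const).div
      (by fun_prop) hne
  have hlim : Tendsto (normalizedSum f) atTop (𝓝 A) := by
    refine tendsto_of_laplace (normalizedSum.nonneg hf) (fun u => normalizedSum.of_neg f)
      (normalizedSum.le hf hM) (normalizedSum.monotone_mul_exp hf) hcont fun s hs => ?_
    have hs0 : s ≠ 0 := Complex.ne_zero_of_re_pos hs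
    have hs1 := hne s hs.le
    rw [normalizedSum.integral_sub_mul_exp hf hM A hs, hL _ (by simpa using hs),
      add_sub_cancel_left]
    field_simp
    ring
  refine (hlim.comp (Real.tendsto_log_atTop.comp tendsto_natCast_atTop_atTop)).congr' ?_
  filter_upwards [eventually_gt_atTop 0] with n hn
  exact normalizedSum.log_natCast f hn

end Tauberian

section EtaPower

open Finset

section Shanks

variable {R : Type*} [CommRing R] (x : R) (n : ℕ)

lemma sum_range_shanks_sub_eq :
    ∑ s ∈ range n, (∏ i ∈ range s, (1 - x ^ (2 * i + 1))) *
        (∏ i ∈ Ico (s + 1) (n + 1), (1 - x ^ (2 * i))) *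
        ((1 - x ^ (2 * (n + 1))) * x ^ (s * (2 * (n + 1) + 1)) -
          (1 - x ^ (2 * n + 1)) * x ^ (s * (2 * n + 1))) =
      (∏ i ∈ range n, (1 - x ^ (2 * i + 1))) * (1 - x ^ (2 * n)) * x ^ (n * (2 * n + 1)) := by
  set F : ℕ → R := fun s => (∏ i ∈ range s, (1 - x ^ (2 * i + 1))) *
    (∏ i ∈ Ico s (n + 1), (1 - x ^ (2 * i))) * x ^ (s * (2 * n + 1)) with hF
  have hF0 : F 0 = 0 := by
    have hprod : ∏ i ∈ Ico 0 (n + 1), (1 - x ^ (2 * i)) = 0 :=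
      prod_eq_zero (i := 0) (by simp) (by simp)
    simp only [hF, hprod, mul_zero, zero_mul]
  have hFn : F n = (∏ i ∈ range n, (1 - x ^ (2 * i + 1))) * (1 - x ^ (2 * n)) *
      x ^ (n * (2 * n + 1)) := by
    simp only [hF, Nat.Ico_succ_singleton, prod_singleton]
  rw [← hFn, ← sub_zero (F n), ← hF0, ← sum_range_sub]
  refine sum_congr rfl fun s hs => ?_
  have hEven : ∏ i ∈ Ico s (n + 1), (1 - x ^ (2 * i)) =
      (1 - x ^ (2 * s)) * ∏ i ∈ Ico (s + 1) (n + 1), (1 - x ^ (2 * i)) :=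
    prod_eq_prod_Ico_succ_bot ((mem_range.1 hs).trans n.lt_succ_self) _
  simp only [hF, hEven, prod_range_succ]
  ring

/-- **Shanks' finite identity** for sums over triangular numbers, cleared of denominators. -/
theorem shanks_identity :
    (∏ i ∈ range n, (1 - x ^ (2 * i + 1))) * ∑ s ∈ range (2 * n), x ^ (s * (s + 1) / 2) =
      ∑ s ∈ range n, (∏ i ∈ range s, (1 - x ^ (2 * i + 1))) *
        (∏ i ∈ Ico (s + 1) (n + 1), (1 - x ^ (2 * i))) * x ^ (s * (2 * n + 1)) := by
  induction n with
  | zero => simp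
  | succ n ih =>
    have hstep : ∑ s ∈ range n, (∏ i ∈ range s, (1 - x ^ (2 * i + 1))) *
          (∏ i ∈ Ico (s + 1) (n + 1 + 1), (1 - x ^ (2 * i))) * x ^ (s * (2 * (n + 1) + 1)) =
        (∏ i ∈ range n, (1 - x ^ (2 * i + 1))) * (1 - x ^ (2 * n)) * x ^ (n * (2 * n + 1)) +
          (1 - x ^ (2 * n + 1)) * ∑ s ∈ range n, (∏ i ∈ range s, (1 - x ^ (2 * i + 1))) *
            (∏ i ∈ Ico (s + 1) (n + 1), (1 - x ^ (2 * i))) * x ^ (s * (2 * n + 1)) := by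
      rw [← sum_range_shanks_sub_eq, mul_sum, ← sum_add_distrib]
      refine sum_congr rfl fun s hs => ?_
      rw [prod_Ico_succ_top (show s + 1 ≤ n + 1 by have := mem_range.1 hs; omega)]
      ring
    have htri : (2 * n) * (2 * n + 1) / 2 = n * (2 * n + 1) := by
      rw [mul_assoc, Nat.mul_div_cancel_left _ two_pos]
    have htri' : (2 * n + 1) * (2 * n + 1 + 1) / 2 = n * (2 * n + 1) + (2 * n + 1) := by
      rw [show (2 * n + 1) * (2 * n + 1 + 1) = 2 * (n * (2 * n + 1) + (2 * n + 1)) by ring,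
        Nat.mul_div_cancel_left _ two_pos]
    rw [sum_range_succ _ n, hstep, ← ih, show 2 * (n + 1) = 2 * n + 1 + 1 by ring,
      sum_range_succ, sum_range_succ, htri, htri', prod_range_succ, Nat.Ico_succ_singleton,
      prod_singleton]
    ring

lemma prod_Icc_two_mul_one_sub_pow :
    ∏ i ∈ Icc 1 (2 * n), (1 - x ^ i) =
      (∏ i ∈ range n, (1 - x ^ (2 * i + 1))) * ∏ i ∈ Icc 1 n, (1 - x ^ (2 * i)) := by
  induction n with
  | zero => simp
  | succ n ih =>
    rw [show 2 * (n + 1) = 2 * n + 1 + 1 by ring, prod_Icc_succ_top (by omega),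
      prod_Icc_succ_top (by omega), ih, prod_range_succ, prod_Icc_succ_top (by omega)]
    ring

end Shanks

section XPowDvd

variable {R : Type*} [CommRing R]

lemma coeff_eq_of_X_pow_succ_dvd_sub {p q : R[X]} {N : ℕ} (h : X ^ (N + 1) ∣ p - q) :
    p.coeff N = q.coeff N := by
  rw [← sub_eq_zero, ← coeff_sub]
  exact X_pow_dvd_iff.1 h N N.lt_succ_self

lemma X_pow_dvd_prod_one_sub_X_pow_sub {N n : ℕ} (h : N ≤ n) :
    (X : R[X]) ^ (N + 1) ∣ ∏ i ∈ Icc 1 n, (1 - X ^ i) - ∏ i ∈ Icc 1 N, (1 - X ^ i) := by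
  induction n, h using Nat.le_induction with
  | base => simp
  | succ n hn ih =>
    rw [prod_Icc_succ_top (by omega), mul_one_sub, sub_right_comm]
    exact dvd_sub ih ((pow_dvd_pow _ (by omega)).mul_left _)

lemma isCoprime_X_prod_one_sub_X_pow (N : ℕ) :
    IsCoprime (X : R[X]) (∏ i ∈ Icc 1 N, (1 - X ^ i)) := by
  refine IsCoprime.prod_right fun i hi => ⟨X ^ (i - 1), 1, ?_⟩
  rw [← pow_succ, Nat.sub_add_cancel (mem_Icc.1 hi).1]
  ring

lemma X_pow_dvd_prod_odd_mul_sum_triangular_sub {N : ℕ} (hN : 0 < N) :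
    (X : R[X]) ^ (N + 1) ∣
      (∏ i ∈ range N, (1 - X ^ (2 * i + 1))) * ∑ s ∈ range (2 * N), X ^ (s * (s + 1) / 2) -
        ∏ i ∈ Icc 1 N, (1 - X ^ (2 * i)) := by
  obtain ⟨m, rfl⟩ := Nat.exists_eq_add_one.2 hN
  rw [shanks_identity, sum_range_succ']
  simp only [range_zero, prod_empty, one_mul, zero_mul, pow_zero, mul_one, zero_add]
  rw [show Ico 1 (m + 1 + 1) = Icc 1 (m + 1) from rfl, add_sub_cancel_right]
  exact dvd_sum fun s _ => Dvd.dvd.mul_left (pow_dvd_pow _ (by nlinarith)) _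

end XPowDvd

lemma prod_one_sub_X_pow_two_mul_eq_sq (N : ℕ) :
    ∏ i ∈ Icc 1 N, (1 - (X : (ZMod 2)[X]) ^ (2 * i)) = (∏ i ∈ Icc 1 N, (1 - X ^ i)) ^ 2 := by
  rw [← prod_pow]
  refine prod_congr rfl fun i _ => ?_
  rw [sub_pow_char, one_pow, ← pow_mul, mul_comm]

/-- Jacobi's identity for `∏ (1 - X ^ i) ^ 3`, modulo `2` and truncated at degree `N`. -/
theorem X_pow_dvd_prod_pow_three_sub_sum_triangular {N : ℕ} (hN : 0 < N) :
    (X : (ZMod 2)[X]) ^ (N + 1) ∣ (∏ i ∈ Icc 1 N, (1 - X ^ i)) ^ 3 -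
      ∑ s ∈ range (2 * N), X ^ (s * (s + 1) / 2) := by
  have hodd := X_pow_dvd_prod_odd_mul_sum_triangular_sub (R := ZMod 2) hN
  have hsplit := prod_Icc_two_mul_one_sub_pow (X : (ZMod 2)[X]) N
  have htail := X_pow_dvd_prod_one_sub_X_pow_sub (R := ZMod 2) (show N ≤ 2 * N by omega)
  rw [prod_one_sub_X_pow_two_mul_eq_sq] at hodd hsplit
  rw [hsplit] at htail
  refine (isCoprime_X_prod_one_sub_X_pow N).pow_left.dvd_of_dvd_mul_left ?_
  set Φ : (ZMod 2)[X] := ∏ i ∈ Icc 1 N, (1 - X ^ i)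
  set O : (ZMod 2)[X] := ∏ i ∈ range N, (1 - X ^ (2 * i + 1))
  set T : (ZMod 2)[X] := ∑ s ∈ range (2 * N), X ^ (s * (s + 1) / 2)
  have hdvd : X ^ (N + 1) ∣ (O * Φ ^ 2 - Φ) * T - Φ ^ 2 * (O * T - Φ ^ 2) :=
    dvd_sub (htail.mul_right T) (hodd.mul_left _)
  convert hdvd using 1
  ring

theorem X_pow_dvd_X_mul_prod_pow_sub_sum_odd_sq {N : ℕ} (hN : 0 < N) :
    (X : (ZMod 2)[X]) ^ (N + 1) ∣ X * (∏ i ∈ Icc 1 N, (1 - X ^ i)) ^ 24 -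
      ∑ s ∈ range (2 * N), X ^ ((2 * s + 1) ^ 2) := by
  have hfrob := pow_dvd_pow_of_dvd (X_pow_dvd_prod_pow_three_sub_sum_triangular hN) (2 ^ 3)
  rw [sub_pow_char_pow, sum_pow_char_pow, ← pow_mul, ← pow_mul,
    show 3 * 2 ^ 3 = 24 by norm_num] at hfrob
  have hmul := ((pow_dvd_pow _ (by omega : N + 1 ≤ (N + 1) * 2 ^ 3)).trans hfrob).mul_left X
  rw [mul_sub, mul_sum] at hmul
  convert hmul using 3 with s _
  rw [← pow_mul, ← pow_succ']
  congr 1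
  have htri : s * (s + 1) / 2 * 2 = s * (s + 1) :=
    Nat.div_mul_cancel (Nat.even_mul_succ_self s).two_dvd
  linarith

theorem etaCoeff_eq_card (m : ℕ) {N : ℕ} (hN : 0 < N) :
    etaCoeff (24 * (2 ^ m + 1)) N =
      (#{p ∈ range (2 * N) ×ˢ range (2 * N) |
        (2 * p.1 + 1) ^ 2 + 2 ^ m * (2 * p.2 + 1) ^ 2 = N} : ZMod 2) := by
  have hgcd : Nat.gcd 24 (24 * (2 ^ m + 1)) = 24 := by simp
  rw [etaCoeff, hgcd, Nat.mul_div_cancel_left _ (by norm_num), Nat.div_self (by norm_num)]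
  simp only [one_mul]
  rw [prod_pow, pow_mul, ← mul_pow]
  set P : (ZMod 2)[X] := X * (∏ i ∈ Icc 1 N, (1 - X ^ i)) ^ 24
  set θ : (ZMod 2)[X] := ∑ s ∈ range (2 * N), X ^ ((2 * s + 1) ^ 2) with hθ
  have hP : X ^ (N + 1) ∣ P - θ := X_pow_dvd_X_mul_prod_pow_sub_sum_odd_sq hN
  rw [coeff_eq_of_X_pow_succ_dvd_sub (hP.trans (sub_dvd_pow_sub_pow P θ (2 ^ m + 1))), pow_succ, hθ,
    sum_pow_char_pow, sum_mul_sum, finsetSum_coeff]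
  simp only [finsetSum_coeff, ← pow_mul, ← pow_add, coeff_X_pow]
  rw [sum_comm, ← sum_product', ← sum_boole]
  refine sum_congr rfl fun p _ => if_congr ?_ rfl rfl
  rw [eq_comm (a := N), add_comm, mul_comm (2 ^ m)]

theorem nuR_of_le {b ℓ : ℕ} (hb : 0 < b) (hℓ : b ≤ ℓ) : nuR (24 * b) ℓ = ℓ := by
  rw [nuR, Nat.gcd_mul_right_right, Nat.mul_div_cancel_left _ (by norm_num),
    Nat.div_self (by norm_num)]
  have hleast : IsLeast {N : ℕ | ℓ ∣ N ∧ b ≤ N ∧ N % 1 = b % 1} ℓ :=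
    ⟨⟨dvd_rfl, hℓ, by simp [Nat.mod_one]⟩,
      fun N hN => Nat.le_of_dvd (hb.trans_le hN.2.1) hN.1⟩
  exact hleast.csInf_eq

end EtaPower

lemma mem_Icc_neg_self_of_sq_le {a n : ℤ} (h : a ^ 2 ≤ n) : a ∈ Finset.Icc (-n) n := by
  have hneg := Int.le_self_sq (-a)
  rw [neg_sq] at hneg
  exact Finset.mem_Icc.2 ⟨by linarith, (Int.le_self_sq a).trans h⟩

namespace ZsqrtdNegTwo

section EuclideanDomain

lemma norm_eq (x : ℤ√(-2)) : x.norm = x.re ^ 2 + 2 * x.im ^ 2 := by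
  rw [Zsqrtd.norm_def]
  ring

lemma norm_nonneg (x : ℤ√(-2)) : 0 ≤ x.norm := Zsqrtd.norm_nonneg (by norm_num) x

lemma norm_pos {x : ℤ√(-2)} (hx : x ≠ 0) : 0 < x.norm :=
  (norm_nonneg x).lt_of_ne' (mt (Zsqrtd.norm_eq_zero_iff (by norm_num) x).1 hx)

/-- Division in `ℤ[√-2]`: the exact quotient with both coordinates rounded to the nearest
integer. -/
instance : Div (ℤ√(-2)) :=
  ⟨fun x y => ⟨round ((x * star y).re / y.norm : ℚ), round ((x * star y).im / y.norm : ℚ)⟩⟩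

lemma div_def (x y : ℤ√(-2)) :
    x / y = ⟨round ((x * star y).re / y.norm : ℚ), round ((x * star y).im / y.norm : ℚ)⟩ := rfl

lemma norm_sub_mul_mul_norm (x y q : ℤ√(-2)) :
    (x - y * q).norm * y.norm =
      ((x * star y).re - y.norm * q.re) ^ 2 + 2 * ((x * star y).im - y.norm * q.im) ^ 2 := by
  have hmul : (x - y * q) * star y = x * star y - y.norm * q := by
    rw [Zsqrtd.norm_eq_mul_conj]
    ring
  rw [← Zsqrtd.norm_conj y, ← Zsqrtd.norm_mul, hmul, norm_eq, Zsqrtd.norm_conj, Zsqrtd.re_sub,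
    Zsqrtd.im_sub, Zsqrtd.re_smul, Zsqrtd.im_smul]

lemma sq_sub_mul_round_div_le {n : ℚ} (hn : n ≠ 0) (w : ℚ) :
    (w - n * round (w / n)) ^ 2 ≤ n ^ 2 / 4 := by
  have hround : (w / n - round (w / n)) ^ 2 ≤ (1 / 2) ^ 2 :=
    sq_le_sq' (abs_le.1 (abs_sub_round _)).1 (abs_le.1 (abs_sub_round _)).2
  calc (w - n * round (w / n)) ^ 2 = n ^ 2 * (w / n - round (w / n)) ^ 2 := by field_simp
    _ ≤ n ^ 2 * (1 / 2) ^ 2 := mul_le_mul_of_nonneg_left hround (sq_nonneg n)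
    _ = n ^ 2 / 4 := by ring

theorem norm_sub_mul_div_lt (x : ℤ√(-2)) {y : ℤ√(-2)} (hy : y ≠ 0) :
    (x - y * (x / y)).norm < y.norm := by
  have hy' : (0 : ℚ) < y.norm := by exact_mod_cast norm_pos hy
  have hlt : ((x - y * (x / y)).norm : ℚ) * y.norm < y.norm * y.norm := by
    have heq := congrArg (Int.cast : ℤ → ℚ) (norm_sub_mul_mul_norm x y (x / y))
    rw [div_def] at heq ⊢
    push_cast at heq
    rw [heq]
    linarith [sq_sub_mul_round_div_le hy'.ne' (x * star y).re,
      sq_sub_mul_round_div_le hy'.ne' (x * star y).im, mul_pos hy' hy', sq (y.norm : ℚ)]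
  exact_mod_cast lt_of_mul_lt_mul_right hlt hy'.le

instance : Nontrivial (ℤ√(-2)) := ⟨⟨0, 1, by decide⟩⟩

/-- `ℤ[√-2]` is Euclidean for the norm. -/
noncomputable instance : EuclideanDomain (ℤ√(-2)) :=
  { (inferInstance : CommRing (ℤ√(-2))), (inferInstance : Nontrivial (ℤ√(-2))) with
    quotient := (· / ·)
    remainder := fun x y => x - y * (x / y)
    quotient_zero := fun x => by
      simp only [div_def, Zsqrtd.norm_zero, Int.cast_zero, div_zero, round_zero]
      rfl
    quotient_mul_add_remainder_eq := fun x y => add_sub_cancel (y * (x / y)) x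
    r := _
    r_wellFounded := (measure fun x : ℤ√(-2) => x.norm.natAbs).wf
    remainder_lt := fun x y hy =>
      Int.natAbs_lt_natAbs_of_nonneg_of_lt (norm_nonneg _) (norm_sub_mul_div_lt x hy)
    mul_left_not_lt := fun x y hy => by
      refine not_lt_of_ge (α := ℕ) ?_
      change x.norm.natAbs ≤ (x * y).norm.natAbs
      rw [Zsqrtd.norm_mul, Int.natAbs_mul]
      exact Nat.le_mul_of_pos_right _ (Int.natAbs_pos.2 (norm_pos hy).ne') }

end EuclideanDomain

section NormNat

/-- The norm `x ^ 2 + 2 * y ^ 2` of `x + y√-2`, as a natural number. -/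
def normNat (x : ℤ√(-2)) : ℕ := x.norm.natAbs

lemma coe_normNat (x : ℤ√(-2)) : (normNat x : ℤ) = x.re ^ 2 + 2 * x.im ^ 2 := by
  rw [normNat, Int.natAbs_of_nonneg (norm_nonneg x), norm_eq]

lemma normNat_mul (x y : ℤ√(-2)) : normNat (x * y) = normNat x * normNat y := by
  rw [normNat, Zsqrtd.norm_mul, Int.natAbs_mul, normNat, normNat]

lemma normNat_eq_one_iff {x : ℤ√(-2)} : normNat x = 1 ↔ IsUnit x := Zsqrtd.norm_eq_one_iff

lemma normNat_pow (x : ℤ√(-2)) (j : ℕ) : normNat (x ^ j) = normNat x ^ j := by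
  induction j with
  | zero => rw [pow_zero, pow_zero, normNat_eq_one_iff.2 isUnit_one]
  | succ j ih => rw [pow_succ, normNat_mul, ih, pow_succ]

lemma normNat_neg (x : ℤ√(-2)) : normNat (-x) = normNat x := by
  rw [normNat, Zsqrtd.norm_neg, normNat]

lemma normNat_star (x : ℤ√(-2)) : normNat (star x) = normNat x := by
  rw [normNat, Zsqrtd.norm_conj, normNat]

lemma normNat_pos {x : ℤ√(-2)} (hx : x ≠ 0) : 0 < normNat x :=
  Int.natAbs_pos.2 (norm_pos hx).ne'

lemma normNat_natCast (n : ℕ) : normNat (n : ℤ√(-2)) = n ^ 2 := by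
  rw [normNat, Zsqrtd.norm_natCast, Int.natAbs_mul, Int.natAbs_natCast, sq]

lemma coe_normNat_eq_mul_star (x : ℤ√(-2)) : (normNat x : ℤ√(-2)) = x * star x := by
  rw [← Zsqrtd.norm_eq_mul_conj, ← Int.cast_natCast, normNat,
    Int.natAbs_of_nonneg (norm_nonneg x)]

lemma dvd_normNat (x : ℤ√(-2)) : x ∣ (normNat x : ℤ√(-2)) :=
  coe_normNat_eq_mul_star x ▸ dvd_mul_right x (star x)

lemma odd_normNat_iff {x : ℤ√(-2)} : Odd (normNat x) ↔ Odd x.re := by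
  rw [← Int.odd_coe_nat, coe_normNat]
  simp [parity_simps]

lemma normNat_mod_eight_of_even_im {x : ℤ√(-2)} (hx : Odd (normNat x)) (him : Even x.im) :
    normNat x % 8 = 1 := by
  have hnorm := coe_normNat x
  have hre := Int.eight_dvd_sq_sub_one_of_odd (odd_normNat_iff.1 hx)
  obtain ⟨b, hb⟩ := him
  have him' : x.im ^ 2 = 4 * b ^ 2 := by rw [hb]; ring
  omega

lemma normNat_mod_eight_of_odd_im {x : ℤ√(-2)} (hx : Odd (normNat x)) (him : Odd x.im) :
    normNat x % 8 = 3 := by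
  have hnorm := coe_normNat x
  have hre := Int.eight_dvd_sq_sub_one_of_odd (odd_normNat_iff.1 hx)
  have him' := Int.eight_dvd_sq_sub_one_of_odd him
  omega

/-- The elements of `ℤ[√-2]` of norm `n`. -/
noncomputable def normFinset (n : ℕ) : Finset (ℤ√(-2)) :=
  ((Finset.Icc (-n : ℤ) n ×ˢ Finset.Icc (-n : ℤ) n).image fun p => ⟨p.1, p.2⟩).filter
    fun x => normNat x = n

lemma mem_normFinset {n : ℕ} {x : ℤ√(-2)} : x ∈ normFinset n ↔ normNat x = n := by
  refine ⟨fun h => (Finset.mem_filter.1 h).2, fun h => Finset.mem_filter.2 ⟨?_, h⟩⟩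
  have hnorm := coe_normNat x
  rw [h] at hnorm
  refine Finset.mem_image.2 ⟨(x.re, x.im), Finset.mem_product.2
    ⟨mem_Icc_neg_self_of_sq_le ?_, mem_Icc_neg_self_of_sq_le ?_⟩, rfl⟩
  · linarith [sq_nonneg x.im]
  · linarith [sq_nonneg x.re, sq_nonneg x.im]

end NormNat

section Primes

lemma isUnit_iff {x : ℤ√(-2)} : IsUnit x ↔ x = 1 ∨ x = -1 := by
  refine ⟨fun h => ?_, ?_⟩
  · have hnorm : x.norm = 1 := (Zsqrtd.norm_eq_one_iff' (by norm_num) x).2 h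
    rw [norm_eq] at hnorm
    have him : x.im = 0 := by
      by_contra him
      have him' : 0 < x.im ^ 2 := by positivity
      linarith [sq_nonneg x.re]
    have hre : x.re ^ 2 = 1 := by simpa [him] using hnorm
    refine (sq_eq_one_iff.1 hre).imp (fun h => ?_) fun h => ?_ <;> ext <;> simp [h, him]
  · rintro (rfl | rfl)
    exacts [isUnit_one, isUnit_one.neg]

lemma associated_iff {x y : ℤ√(-2)} : Associated x y ↔ y = x ∨ y = -x := by
  constructor
  · rintro ⟨u, rfl⟩
    rcases isUnit_iff.1 u.isUnit with h | h <;> simp [h]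
  · rintro (rfl | rfl)
    exacts [Associated.refl _, (Associated.refl x).neg_right]

lemma one_lt_normNat_of_prime {q : ℤ√(-2)} (hq : Prime q) : 1 < normNat q :=
  lt_of_le_of_ne' (normNat_pos hq.ne_zero) (mt normNat_eq_one_iff.1 hq.not_isUnit)

lemma prime_of_normNat_prime {x : ℤ√(-2)} (hx : (normNat x).Prime) : Prime x := by
  rw [← irreducible_iff_prime]
  refine ⟨fun h => hx.one_lt.ne' (normNat_eq_one_iff.2 h), fun {a b} hab => ?_⟩
  rw [hab, normNat_mul, Nat.prime_mul_iff] at hx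
  exact hx.symm.imp (fun h => normNat_eq_one_iff.1 h.2) fun h => normNat_eq_one_iff.1 h.2

lemma prime_star {x : ℤ√(-2)} (hx : Prime x) : Prime (star x) :=
  (MulEquiv.prime_iff (starMulAut (R := ℤ√(-2)))).2 hx

theorem eq_or_of_normNat_pow_eq {p q : ℤ√(-2)} (hp : Prime p) (hq : Prime q) {i j : ℕ}
    (hj : j ≠ 0) (h : normNat q ^ j = normNat p ^ i) :
    q = p ∨ q = -p ∨ q = star p ∨ q = -star p := by
  have hdvd : q ∣ (p * star p) ^ i := by
    rw [← coe_normNat_eq_mul_star, ← Nat.cast_pow, ← h, Nat.cast_pow]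
    exact (dvd_normNat q).trans (dvd_pow_self _ hj)
  rw [← or_assoc]
  refine (hq.dvd_or_dvd (hq.dvd_of_dvd_pow hdvd)).imp (fun hqp => ?_) fun hqp => ?_
  · exact associated_iff.1 ((hq.dvd_prime_iff_associated hp).1 hqp).symm
  · exact associated_iff.1 ((hq.dvd_prime_iff_associated (prime_star hp)).1 hqp).symm

lemma normFinset_eq_of_prime {l : ℕ} (hl : l.Prime) {p : ℤ√(-2)} (hp : normNat p = l) :
    normFinset l = {p, -p, star p, -star p} := by
  ext q
  rw [mem_normFinset]
  simp only [Finset.mem_insert, Finset.mem_singleton]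
  constructor
  · intro hq
    exact eq_or_of_normNat_pow_eq (i := 1) (prime_of_normNat_prime (hp ▸ hl))
      (prime_of_normNat_prime (hq ▸ hl)) one_ne_zero (by rw [hp, hq])
  · rintro (rfl | rfl | rfl | rfl) <;> simp [normNat_neg, normNat_star, hp]

lemma im_ne_zero_of_normNat_prime {p : ℤ√(-2)} (hp : (normNat p).Prime) : p.im ≠ 0 := by
  intro him
  have hsq : normNat p = p.re.natAbs ^ 2 := by
    zify
    rw [coe_normNat, him, sq_abs]
    ring
  exact hp.prime.not_isSquare ⟨p.re.natAbs, by rw [hsq, sq]⟩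

theorem sum_normFinset_eq {E : Type*} [AddCommMonoid E] {l : ℕ} (hl : l.Prime) (hodd : Odd l)
    {p : ℤ√(-2)} (hp : normNat p = l) (f : ℤ√(-2) → E) :
    ∑ x ∈ normFinset l, f x = f p + (f (-p) + (f (star p) + f (-star p))) := by
  have him : p.im ≠ 0 := im_ne_zero_of_normNat_prime (hp ▸ hl)
  have hre : p.re ≠ 0 := by
    rintro hre
    have hodd' : Odd p.re := odd_normNat_iff.1 (hp ▸ hodd)
    simp [hre] at hodd'
  rw [normFinset_eq_of_prime hl hp, Finset.sum_insert, Finset.sum_insert, Finset.sum_insert,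
    Finset.sum_singleton]
  all_goals simp [Zsqrtd.ext_iff, self_eq_neg, neg_eq_self, hre, him]

lemma exists_natCast_dvd_mul {l : ℕ} [Fact l.Prime] (hl2 : l ≠ 2) (hl : l % 8 = 1 ∨ l % 8 = 3) :
    ∃ s : ℤ, (l : ℤ√(-2)) ∣ ⟨s, 1⟩ * ⟨s, -1⟩ := by
  obtain ⟨s, hs⟩ := (ZMod.exists_sq_eq_neg_two_iff hl2).2 hl
  have hdvd : (l : ℤ) ∣ (s.val : ℤ) ^ 2 + 2 := by
    rw [← ZMod.intCast_zmod_eq_zero_iff_dvd]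
    push_cast
    rw [ZMod.natCast_zmod_val, sq, ← hs]
    ring
  refine ⟨s.val, ?_⟩
  have hmul : (⟨s.val, 1⟩ * ⟨s.val, -1⟩ : ℤ√(-2)) = ((s.val ^ 2 + 2 : ℤ) : ℤ√(-2)) := by
    ext
    · simp only [Zsqrtd.re_mul, Zsqrtd.re_intCast]
      ring
    · simp only [Zsqrtd.im_mul, Zsqrtd.im_intCast]
      ring
  rw [hmul, ← Int.cast_natCast]
  exact Int.cast_dvd_cast _ _ hdvd

lemma not_prime_natCast {l : ℕ} (hl : l.Prime) (hl2 : l ≠ 2) (h : l % 8 = 1 ∨ l % 8 = 3) :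
    ¬ Prime (l : ℤ√(-2)) := by
  intro hp
  have := Fact.mk hl
  obtain ⟨s, hs⟩ := exists_natCast_dvd_mul hl2 h
  have hndvd : ∀ e : ℤ, e ∣ 1 → ¬ (l : ℤ√(-2)) ∣ ⟨s, e⟩ := by
    intro e he hd
    rw [← Int.cast_natCast, Zsqrtd.intCast_dvd] at hd
    exact hl.one_lt.ne' (by exact_mod_cast Int.eq_one_of_dvd_one (by positivity) (hd.2.trans he))
  exact (hp.dvd_or_dvd hs).elim (hndvd 1 dvd_rfl) (hndvd (-1) (by norm_num))

theorem exists_normNat_eq {l : ℕ} (hl : l.Prime) (hl2 : l ≠ 2) (h : l % 8 = 1 ∨ l % 8 = 3) :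
    ∃ p : ℤ√(-2), normNat p = l := by
  have hunit : ¬ IsUnit (l : ℤ√(-2)) := by
    rw [← normNat_eq_one_iff, normNat_natCast]
    exact (Nat.one_lt_pow two_ne_zero hl.one_lt).ne'
  have hred := not_prime_natCast hl hl2 h
  rw [← irreducible_iff_prime, irreducible_iff] at hred
  push Not at hred
  obtain ⟨a, b, hab, ha, hb⟩ := hred hunit
  refine ⟨a, ((hl.mul_eq_prime_sq_iff (mt normNat_eq_one_iff.1 ha)
    (mt normNat_eq_one_iff.1 hb)).1 ?_).1⟩
  rw [← normNat_mul, ← hab, normNat_natCast]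

lemma exists_prime_normNat_dvd_sq {p : ℤ√(-2)} (hp : Prime p) :
    ∃ l : ℕ, l.Prime ∧ normNat p ∣ l ^ 2 := by
  have hdvd : p ∣ ((normNat p).primeFactorsList.prod : ℤ√(-2)) := by
    rw [Nat.prod_primeFactorsList (normNat_pos hp.ne_zero).ne']
    exact dvd_normNat p
  rw [Nat.cast_list_prod, hp.dvd_prod_iff] at hdvd
  obtain ⟨_, hmem, hpl⟩ := hdvd
  obtain ⟨l, hl, rfl⟩ := List.mem_map.1 hmem
  obtain ⟨c, hc⟩ := hpl
  refine ⟨l, Nat.prime_of_mem_primeFactorsList hl, ?_⟩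
  rw [← normNat_natCast, hc, normNat_mul]
  exact dvd_mul_right _ _

theorem log_normNat_le {p : ℤ√(-2)} (hp : Prime p) {j : ℕ} (hj : j ≠ 0) :
    Real.log (normNat p) ≤ 2 * ArithmeticFunction.vonMangoldt (normNat p ^ j) := by
  obtain ⟨l, hl, hpl⟩ := exists_prime_normNat_dvd_sq hp
  obtain ⟨i, hi, hpi⟩ := (Nat.dvd_prime_pow hl).1 hpl
  have hi0 : i ≠ 0 := by
    rintro rfl
    exact (one_lt_normNat_of_prime hp).ne' hpi
  rw [hpi, ← pow_mul, ArithmeticFunction.vonMangoldt_apply_pow (mul_ne_zero hi0 hj),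
    ArithmeticFunction.vonMangoldt_apply_prime hl, Nat.cast_pow, Real.log_pow]
  exact mul_le_mul_of_nonneg_right (by exact_mod_cast hi) (Real.log_natCast_nonneg l)

end Primes

section Factorization

open Classical in
/-- The prime elements of `ℤ[√-2]` of norm at most `B`. -/
noncomputable def primeFinset (B : ℕ) : Finset (ℤ√(-2)) :=
  ((Finset.range (B + 1)).biUnion normFinset).filter Prime

lemma mem_primeFinset {B : ℕ} {q : ℤ√(-2)} :
    q ∈ primeFinset B ↔ Prime q ∧ normNat q ≤ B := by
  simp [primeFinset, mem_normFinset, and_comm]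

lemma sum_multiplicity_prime_mul_log {p : ℤ√(-2)} (hp : Prime p) {B : ℕ} (hB : normNat p ≤ B) :
    ∑ q ∈ primeFinset B, (multiplicity q p : ℝ) * Real.log (normNat q) =
      2 * Real.log (normNat p) := by
  have hsub : ({p, -p} : Finset (ℤ√(-2))) ⊆ primeFinset B := by
    simp only [Finset.insert_subset_iff, Finset.singleton_subset_iff, mem_primeFinset, normNat_neg]
    exact ⟨⟨hp, hB⟩, hp.neg, hB⟩
  have hzero : ∀ q ∈ primeFinset B, q ∉ ({p, -p} : Finset (ℤ√(-2))) →
      (multiplicity q p : ℝ) * Real.log (normNat q) = 0 := by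
    intro q hq hqp
    rw [multiplicity_eq_zero.2, Nat.cast_zero, zero_mul]
    intro hdvd
    have hassoc := ((mem_primeFinset.1 hq).1.dvd_prime_iff_associated hp).1 hdvd
    exact hqp (by simpa using associated_iff.1 hassoc.symm)
  have hneg : multiplicity (-p) p = 1 := by
    rw [multiplicity_eq_of_associated_left (Associated.refl p).neg_right, multiplicity_self]
  have hne : p ≠ -p := fun h => hp.ne_zero (self_eq_neg.1 h)
  rw [← Finset.sum_subset hsub hzero, Finset.sum_pair hne, normNat_neg, hneg, multiplicity_self]
  ring

theorem sum_multiplicity_mul_log {x : ℤ√(-2)} (hx : x ≠ 0) {B : ℕ} (hB : normNat x ≤ B) :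
    ∑ q ∈ primeFinset B, (multiplicity q x : ℝ) * Real.log (normNat q) =
      2 * Real.log (normNat x) := by
  induction x using UniqueFactorizationMonoid.induction_on_prime with
  | h₁ => exact absurd rfl hx
  | h₂ u hu =>
    rw [normNat_eq_one_iff.2 hu, Nat.cast_one, Real.log_one, mul_zero]
    refine Finset.sum_eq_zero fun q hq => ?_
    rw [multiplicity_eq_zero.2 fun h => (mem_primeFinset.1 hq).1.not_isUnit
      (isUnit_of_dvd_unit h hu), Nat.cast_zero, zero_mul]
  | h₃ a p ha hp ih =>
    rw [normNat_mul] at hB ⊢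
    have hp0 := normNat_pos hp.ne_zero
    have ha0 := normNat_pos ha
    have hmul : ∀ q ∈ primeFinset B, (multiplicity q (p * a) : ℝ) * Real.log (normNat q) =
        multiplicity q p * Real.log (normNat q) + multiplicity q a * Real.log (normNat q) := by
      intro q hq
      have hq' := (mem_primeFinset.1 hq).1
      rw [multiplicity_mul hq' (FiniteMultiplicity.of_not_isUnit hq'.not_isUnit hx), Nat.cast_add,
        add_mul]
    rw [Finset.sum_congr rfl hmul, Finset.sum_add_distrib,
      sum_multiplicity_prime_mul_log hp ((Nat.le_mul_of_pos_right _ ha0).trans hB),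
      ih ha ((Nat.le_mul_of_pos_left _ hp0).trans hB), Nat.cast_mul,
      Real.log_mul (by positivity) (by positivity), mul_add]

end Factorization

section HeckeCoefficients

/-- The pairs `(q, j)` with `q` a prime element, `j ≠ 0` and `q ^ j` of norm `n`. -/
noncomputable def primePowFinset (n : ℕ) : Finset (ℤ√(-2) × ℕ) :=
  (primeFinset n ×ˢ Finset.Icc 1 n).filter fun p => normNat p.1 ^ p.2 = n

lemma mem_primePowFinset {n : ℕ} {p : ℤ√(-2) × ℕ} :
    p ∈ primePowFinset n ↔ Prime p.1 ∧ p.2 ≠ 0 ∧ normNat p.1 ^ p.2 = n := by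
  rw [primePowFinset, Finset.mem_filter, Finset.mem_product, mem_primeFinset, Finset.mem_Icc]
  refine ⟨fun h => ⟨h.1.1.1, Nat.one_le_iff_ne_zero.1 h.1.2.1, h.2⟩, ?_⟩
  rintro ⟨hp, hj, rfl⟩
  exact ⟨⟨⟨hp, Nat.le_self_pow hj _⟩, Nat.one_le_iff_ne_zero.2 hj,
    (Nat.lt_pow_self (one_lt_normNat_of_prime hp)).le⟩, rfl⟩

open Classical in
/-- The pairs `(q, j)` with `q` a prime element, `j ≠ 0` and `q ^ j ∣ x`, for `x ≠ 0`. -/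
noncomputable def primePowDivisors (x : ℤ√(-2)) : Finset (ℤ√(-2) × ℕ) :=
  (primeFinset (normNat x) ×ˢ Finset.Icc 1 (normNat x)).filter fun p => p.1 ^ p.2 ∣ x

lemma normNat_pow_le_of_dvd {x q : ℤ√(-2)} (hx : x ≠ 0) {j : ℕ} (h : q ^ j ∣ x) :
    normNat q ^ j ≤ normNat x := by
  obtain ⟨c, rfl⟩ := h
  rw [normNat_mul, normNat_pow]
  exact Nat.le_mul_of_pos_right _ (normNat_pos (right_ne_zero_of_mul hx))

lemma mem_primePowDivisors {x : ℤ√(-2)} (hx : x ≠ 0) {p : ℤ√(-2) × ℕ} :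
    p ∈ primePowDivisors x ↔ Prime p.1 ∧ p.2 ≠ 0 ∧ p.1 ^ p.2 ∣ x := by
  classical
  rw [primePowDivisors, Finset.mem_filter, Finset.mem_product, mem_primeFinset, Finset.mem_Icc]
  refine ⟨fun h => ⟨h.1.1.1, Nat.one_le_iff_ne_zero.1 h.1.2.1, h.2⟩, ?_⟩
  rintro ⟨hp, hj, hdvd⟩
  have hle := normNat_pow_le_of_dvd hx hdvd
  exact ⟨⟨⟨hp, (Nat.le_self_pow hj _).trans hle⟩, Nat.one_le_iff_ne_zero.2 hj,
    (Nat.lt_pow_self (one_lt_normNat_of_prime hp)).le.trans hle⟩, hdvd⟩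

theorem sum_primePowDivisors_log {x : ℤ√(-2)} (hx : x ≠ 0) :
    ∑ p ∈ primePowDivisors x, Real.log (normNat p.1) = 2 * Real.log (normNat x) := by
  classical
  rw [← sum_multiplicity_mul_log hx le_rfl, primePowDivisors, Finset.sum_filter,
    Finset.sum_product]
  refine Finset.sum_congr rfl fun q hq => ?_
  have hq' := (mem_primeFinset.1 hq).1
  have hfin := FiniteMultiplicity.of_not_isUnit hq'.not_isUnit hx
  have hle : multiplicity q x ≤ normNat x :=
    (Nat.lt_pow_self (one_lt_normNat_of_prime hq')).le.trans
      (normNat_pow_le_of_dvd hx (pow_multiplicity_dvd q x))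
  have hfilter : (Finset.Icc 1 (normNat x)).filter (fun j => q ^ j ∣ x) =
      Finset.Icc 1 (multiplicity q x) := by
    ext j
    rw [Finset.mem_filter, Finset.mem_Icc, Finset.mem_Icc, hfin.pow_dvd_iff_le_multiplicity]
    exact ⟨fun h => ⟨h.1.1, h.2⟩, fun h => ⟨⟨h.1, h.2.trans hle⟩, h.2⟩⟩
  dsimp only
  rw [← Finset.sum_filter, Finset.sum_const, hfilter, Nat.card_Icc, Nat.add_sub_cancel,
    nsmul_eq_mul]

theorem sum_divisorsAntidiagonal_primePowFinset {E : Type*} [AddCommMonoid E]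
    (f : ℤ√(-2) × ℕ → ℤ√(-2) → E) {n : ℕ} (hn : n ≠ 0) :
    ∑ p ∈ n.divisorsAntidiagonal, ∑ q ∈ primePowFinset p.1, ∑ y ∈ normFinset p.2,
        f q (q.1 ^ q.2 * y) =
      ∑ x ∈ normFinset n, ∑ q ∈ primePowDivisors x, f q x := by
  have hne : ∀ {x}, normNat x = n → x ≠ 0 := by
    rintro _ hx rfl
    exact hn hx.symm
  simp only [← Finset.sum_product', Finset.sum_sigma']
  refine Finset.sum_nbij (fun t => ⟨t.2.1.1 ^ t.2.1.2 * t.2.2, t.2.1⟩) ?_ ?_ ?_ fun _ _ => rfl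
  · rintro ⟨⟨a, b⟩, q, y⟩ h
    simp only [Finset.mem_sigma, Finset.mem_product, Nat.mem_divisorsAntidiagonal,
      mem_primePowFinset, mem_normFinset] at h ⊢
    obtain ⟨⟨hab, -⟩, ⟨hq, hj, ha⟩, hb⟩ := h
    have hnorm : normNat (q.1 ^ q.2 * y) = n := by rw [normNat_mul, normNat_pow, ha, hb, hab]
    exact ⟨hnorm, (mem_primePowDivisors (hne hnorm)).2 ⟨hq, hj, dvd_mul_right _ _⟩⟩
  · rintro ⟨⟨a, b⟩, q, y⟩ h ⟨⟨a', b'⟩, q', y'⟩ h' heq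
    simp only [Finset.coe_sigma, Set.mem_sigma_iff, Finset.mem_coe, Finset.mem_product,
      mem_primePowFinset, mem_normFinset] at h h'
    obtain ⟨-, ⟨hq, -, rfl⟩, rfl⟩ := h
    obtain ⟨-, ⟨-, -, rfl⟩, rfl⟩ := h'
    simp only [Sigma.mk.injEq, heq_eq_eq] at heq
    obtain ⟨hmul, rfl⟩ := heq
    rw [mul_left_cancel₀ (pow_ne_zero _ hq.ne_zero) hmul]
  · rintro ⟨x, q⟩ h
    simp only [Finset.coe_sigma, Set.mem_sigma_iff, Finset.mem_coe, mem_normFinset] at h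
    obtain ⟨hx, hq⟩ := h
    obtain ⟨hprime, hj, y, rfl⟩ := (mem_primePowDivisors (hne hx)).1 hq
    refine ⟨⟨(normNat q.1 ^ q.2, normNat y), q, y⟩, ?_, rfl⟩
    simp only [Finset.coe_sigma, Set.mem_sigma_iff, Finset.mem_coe, Finset.mem_product,
      Nat.mem_divisorsAntidiagonal, mem_primePowFinset, mem_normFinset]
    exact ⟨⟨by rw [← hx, normNat_mul, normNat_pow], hn⟩, ⟨hprime, hj, trivial⟩, trivial⟩

/-- The sum of `ψ` over the elements of norm `n`: the `n`-th coefficient of the Hecke series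
of `ψ`, with each ideal counted once for each of its two generators. -/
noncomputable def normSum (ψ : ℤ√(-2) →* ℂ) (n : ℕ) : ℂ := ∑ x ∈ normFinset n, ψ x

/-- Twice the coefficients of the negative logarithmic derivative of the Dirichlet series with
coefficients `normSum ψ`. -/
noncomputable def primePowSum (ψ : ℤ√(-2) →* ℂ) (n : ℕ) : ℂ :=
  ∑ p ∈ primePowFinset n, ψ p.1 ^ p.2 * Real.log (normNat p.1)

theorem sum_primePowSum_mul_normSum (ψ : ℤ√(-2) →* ℂ) {n : ℕ} (hn : n ≠ 0) :
    ∑ p ∈ n.divisorsAntidiagonal, primePowSum ψ p.1 * normSum ψ p.2 =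
      2 * Real.log n * normSum ψ n := by
  have hlhs : ∀ a b : ℕ, primePowSum ψ a * normSum ψ b =
      ∑ q ∈ primePowFinset a, ∑ y ∈ normFinset b, ψ (q.1 ^ q.2 * y) * Real.log (normNat q.1) := by
    intro a b
    rw [primePowSum, normSum, Finset.sum_mul_sum]
    refine Finset.sum_congr rfl fun q _ => Finset.sum_congr rfl fun y _ => ?_
    rw [map_mul, map_pow]
    ring
  simp only [hlhs]
  rw [sum_divisorsAntidiagonal_primePowFinset (fun q x => ψ x * Real.log (normNat q.1)) hn,
    normSum, Finset.mul_sum]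
  refine Finset.sum_congr rfl fun x hx => ?_
  rw [mem_normFinset] at hx
  have hx0 : x ≠ 0 := by
    rintro rfl
    exact hn hx.symm
  rw [← Finset.mul_sum, ← Complex.ofReal_sum, sum_primePowDivisors_log hx0, hx, mul_comm]
  push_cast
  rfl

theorem primePowSum_apply_prime (ψ : ℤ√(-2) →* ℂ) {l : ℕ} (hl : l.Prime) :
    primePowSum ψ l = normSum ψ l * Real.log l := by
  have hset : primePowFinset l = (normFinset l).image fun q => (q, 1) := by
    ext ⟨q, j⟩
    simp only [mem_primePowFinset, Finset.mem_image, mem_normFinset, Prod.mk.injEq]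
    constructor
    · rintro ⟨-, -, h⟩
      obtain rfl : j = 1 := Nat.Prime.eq_one_of_pow (h ▸ hl)
      exact ⟨q, by rwa [pow_one] at h, rfl, rfl⟩
    · rintro ⟨q, hq, rfl, rfl⟩
      exact ⟨prime_of_normNat_prime (hq ▸ hl), one_ne_zero, by rw [hq, pow_one]⟩
  rw [primePowSum, hset, Finset.sum_image fun _ _ _ _ h => congrArg Prod.fst h, normSum,
    Finset.sum_mul]
  refine Finset.sum_congr rfl fun q hq => ?_
  rw [pow_one, mem_normFinset.1 hq]

lemma card_primePowFinset_le (n : ℕ) : (primePowFinset n).card ≤ 4 := by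
  rcases (primePowFinset n).eq_empty_or_nonempty with h | ⟨⟨p, i⟩, hp⟩
  · simp [h]
  obtain ⟨hp, -, hpn⟩ := mem_primePowFinset.1 hp
  have hsub : primePowFinset n ⊆
      ({p, -p, star p, -star p} : Finset (ℤ√(-2))).image fun q => (q, i) := by
    rintro ⟨q, j⟩ hq
    obtain ⟨hq, hj, hqn⟩ := mem_primePowFinset.1 hq
    have hpow : normNat q ^ j = normNat p ^ i := hqn.trans hpn.symm
    have hqp := eq_or_of_normNat_pow_eq hp hq hj hpow
    have hnorm : normNat q = normNat p := by
      rcases hqp with rfl | rfl | rfl | rfl <;> simp [normNat_neg, normNat_star]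
    rw [hnorm] at hpow
    rw [Finset.mem_image]
    exact ⟨q, by simpa using hqp,
      by rw [Nat.pow_right_injective (one_lt_normNat_of_prime hp) hpow]⟩
  exact (Finset.card_le_card hsub).trans (Finset.card_image_le.trans Finset.card_le_four)

theorem norm_primePowSum_le {ψ : ℤ√(-2) →* ℂ} (hψ : ∀ x, ‖ψ x‖ ≤ 1) (n : ℕ) :
    ‖primePowSum ψ n‖ ≤ 8 * ArithmeticFunction.vonMangoldt n := by
  have hterm : ∀ p ∈ primePowFinset n, ‖ψ p.1 ^ p.2 * (Real.log (normNat p.1) : ℂ)‖ ≤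
      2 * ArithmeticFunction.vonMangoldt n := by
    intro p hp
    obtain ⟨hprime, hj, rfl⟩ := mem_primePowFinset.1 hp
    rw [norm_mul, norm_pow, Complex.norm_real, Real.norm_of_nonneg (Real.log_natCast_nonneg _)]
    exact (mul_le_of_le_one_left (Real.log_natCast_nonneg _)
      (pow_le_one₀ (_root_.norm_nonneg _) (hψ p.1))).trans (log_normNat_le hprime hj)
  calc ‖primePowSum ψ n‖
      ≤ (primePowFinset n).card * (2 * ArithmeticFunction.vonMangoldt n) := by
        rw [← nsmul_eq_mul]
        exact (norm_sum_le_of_le _ hterm).trans_eq (Finset.sum_const _)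
    _ ≤ 4 * (2 * ArithmeticFunction.vonMangoldt n) :=
        mul_le_mul_of_nonneg_right (by exact_mod_cast card_primePowFinset_le n)
          (mul_nonneg zero_le_two ArithmeticFunction.vonMangoldt_nonneg)
    _ = 8 * ArithmeticFunction.vonMangoldt n := by ring

lemma re_three_add_four_mul_add_sq_nonneg {z : ℂ} (hz : ‖z‖ = 1) :
    0 ≤ (3 + 4 * z + z ^ 2).re := by
  have hsq : z.re ^ 2 + z.im ^ 2 = 1 := by
    rw [sq, sq, ← Complex.normSq_apply, ← Complex.sq_norm, hz, one_pow]
  have hre : (3 + 4 * z + z ^ 2).re = 3 + 4 * z.re + (z.re ^ 2 - z.im ^ 2) := by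
    simp [sq]
  rw [hre]
  nlinarith [sq_nonneg (z.re + 1)]

theorem re_primePowSum_nonneg {ψ₀ ψ ψ₂ : ℤ√(-2) →* ℂ}
    (h : ∀ x, (ψ₀ x = 0 ∧ ψ x = 0) ∨ (ψ₀ x = 1 ∧ ‖ψ x‖ = 1)) (h₂ : ∀ x, ψ₂ x = ψ x ^ 2)
    (n : ℕ) {w : ℂ} (hw : ‖w‖ = 1) :
    0 ≤ (3 * primePowSum ψ₀ n + 4 * (primePowSum ψ n * w) + primePowSum ψ₂ n * w ^ 2).re := by
  simp only [primePowSum]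
  rw [Finset.mul_sum, Finset.sum_mul, Finset.sum_mul, Finset.mul_sum, ← Finset.sum_add_distrib,
    ← Finset.sum_add_distrib, Complex.re_sum]
  refine Finset.sum_nonneg fun p hp => ?_
  obtain ⟨-, hj, -⟩ := mem_primePowFinset.1 hp
  rcases h p.1 with ⟨hψ₀, hψ⟩ | ⟨hψ₀, hψ⟩
  · simp [hψ₀, hψ, h₂, hj]
  · have hnorm : ‖ψ p.1 ^ p.2 * w‖ = 1 := by rw [norm_mul, norm_pow, hψ, hw, one_pow, one_mul]
    have hfactor : 3 * (ψ₀ p.1 ^ p.2 * (Real.log (normNat p.1) : ℂ)) +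
        4 * (ψ p.1 ^ p.2 * Real.log (normNat p.1) * w) +
        ψ₂ p.1 ^ p.2 * Real.log (normNat p.1) * w ^ 2 =
        (Real.log (normNat p.1) : ℂ) * (3 + 4 * (ψ p.1 ^ p.2 * w) + (ψ p.1 ^ p.2 * w) ^ 2) := by
      rw [h₂, hψ₀, one_pow]
      ring
    rw [hfactor, Complex.re_ofReal_mul]
    exact mul_nonneg (Real.log_natCast_nonneg _) (re_three_add_four_mul_add_sq_nonneg hnorm)

end HeckeCoefficients

end ZsqrtdNegTwo

section EllipsePoints

lemma filter_Icc_neg_self_sq_le {T : ℕ} {c : ℤ} (hc : c ≤ T) :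
    (Finset.Icc (-T : ℤ) T).filter (fun x => x ^ 2 ≤ c) =
      if 0 ≤ c then Finset.Icc (-(Int.sqrt c)) (Int.sqrt c) else ∅ := by
  ext x
  split_ifs with h
  · obtain ⟨m, rfl⟩ := Int.eq_ofNat_of_zero_le h
    have hsq : x ^ 2 ≤ (m : ℤ) ↔ -(Int.sqrt m) ≤ x ∧ x ≤ Int.sqrt m := by
      rw [← abs_le, Int.sqrt_natCast, Int.abs_eq_natAbs, Nat.cast_le, Nat.le_sqrt', ← sq_abs,
        Int.abs_eq_natAbs]
      norm_cast
    rw [Finset.mem_filter, Finset.mem_Icc (a := -Int.sqrt m), ← hsq, and_iff_right_iff_imp]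
    exact fun hx => mem_Icc_neg_self_of_sq_le (hx.trans hc)
  · rw [Finset.mem_filter]
    simp only [Finset.notMem_empty, iff_false, not_and]
    exact fun _ hx => h ((sq_nonneg x).trans hx)

lemma card_filter_sq_le (T : ℕ) :
    (((Finset.Icc (-T : ℤ) T).filter fun x => x ^ 2 ≤ (T : ℤ)).card : ℝ) ≤
      2 * Real.sqrt T + 1 := by
  have hcard : ((T.sqrt : ℤ) + 1 - -(T.sqrt : ℤ)).toNat = 2 * T.sqrt + 1 := by omega
  rw [filter_Icc_neg_self_sq_le le_rfl, if_pos (by positivity), Int.card_Icc, Int.sqrt_natCast,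
    hcard]
  push_cast
  linarith [Real.nat_sqrt_le_real_sqrt (a := T)]

lemma sum_Icc_shift_sub (g : ℤ → ℂ) {a b : ℤ} (hab : a ≤ b) :
    ∑ x ∈ Finset.Icc a b, (g (x + 1) - g x) = g (b + 1) - g a := by
  induction b, hab using Int.leInduction with
  | base => simp
  | succ b hab ih =>
    have hinsert : Finset.Icc a (b + 1) = insert (b + 1) (Finset.Icc a b) := by
      ext x
      simp only [Finset.mem_Icc, Finset.mem_insert]
      omega
    rw [hinsert, Finset.sum_insert (by simp), ih, sub_add_sub_cancel]

lemma norm_sum_filter_shift_sub_le {g : ℤ → ℂ} (hg : ∀ x, ‖g x‖ ≤ 1) {T : ℕ} {c : ℤ}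
    (hc : c ≤ T) :
    ‖∑ x ∈ Finset.Icc (-T : ℤ) T, if x ^ 2 ≤ c then g (x + 1) - g x else 0‖ ≤
      if 0 ≤ c then 2 else 0 := by
  rw [← Finset.sum_filter, filter_Icc_neg_self_sq_le hc]
  split_ifs with h
  · have hsqrt := Int.sqrt_nonneg c
    rw [sum_Icc_shift_sub g (by omega)]
    exact (norm_sub_le _ _).trans ((add_le_add (hg _) (hg _)).trans_eq one_add_one_eq_two)
  · simp

/-- The integer points of the ellipse `x ^ 2 + 2 * y ^ 2 ≤ T`. -/
noncomputable def ellipsePoints (T : ℕ) : Finset (ℤ × ℤ) :=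
  (Finset.Icc (-T : ℤ) T ×ˢ Finset.Icc (-T : ℤ) T).filter fun p => p.1 ^ 2 + 2 * p.2 ^ 2 ≤ T

lemma mem_ellipsePoints {T : ℕ} {p : ℤ × ℤ} :
    p ∈ ellipsePoints T ↔ p.1 ^ 2 + 2 * p.2 ^ 2 ≤ T := by
  rw [ellipsePoints, Finset.mem_filter, Finset.mem_product, and_iff_right_iff_imp]
  intro hp
  constructor <;> refine mem_Icc_neg_self_of_sq_le ?_
  · linarith [sq_nonneg p.2]
  · linarith [sq_nonneg p.1, sq_nonneg p.2]

lemma card_ellipsePoints_le (T : ℕ) :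
    ((ellipsePoints T).card : ℝ) ≤ (2 * Real.sqrt T + 1) ^ 2 := by
  set F := (Finset.Icc (-T : ℤ) T).filter fun x => x ^ 2 ≤ (T : ℤ) with hF
  have hsub : ellipsePoints T ⊆ F ×ˢ F := by
    intro p hp
    have hp1 := sq_nonneg p.1
    have hp2 := sq_nonneg p.2
    obtain ⟨hbox, hp⟩ := Finset.mem_filter.1 hp
    rw [Finset.mem_product] at hbox
    rw [Finset.mem_product, hF, Finset.mem_filter, Finset.mem_filter]
    exact ⟨⟨hbox.1, by linarith⟩, hbox.2, by linarith⟩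
  calc ((ellipsePoints T).card : ℝ) ≤ (F.card : ℝ) * F.card := by
        rw [← Nat.cast_mul, ← Finset.card_product]
        exact_mod_cast Finset.card_le_card hsub
    _ ≤ (2 * Real.sqrt T + 1) ^ 2 := by
      rw [sq]
      exact mul_self_le_mul_self (Nat.cast_nonneg _) (card_filter_sq_le T)

lemma sum_ite_sq_le_le (T : ℕ) :
    ∑ y ∈ Finset.Icc (-T : ℤ) T, (if y ^ 2 ≤ (T : ℤ) then (2 : ℝ) else 0) ≤
      2 * (2 * Real.sqrt T + 1) := by
  rw [← Finset.sum_filter, Finset.sum_const, nsmul_eq_mul, mul_comm]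
  exact mul_le_mul_of_nonneg_left (card_filter_sq_le T) zero_le_two

variable {f : ℤ → ℤ → ℂ} (hf : ∀ x y, ‖f x y‖ ≤ 1)

include hf

lemma norm_sum_ellipsePoints_shift_fst_sub_le (T : ℕ) :
    ‖∑ p ∈ ellipsePoints T, (f (p.1 + 1) p.2 - f p.1 p.2)‖ ≤ 2 * (2 * Real.sqrt T + 1) := by
  rw [ellipsePoints, Finset.sum_filter, Finset.sum_product_right]
  refine (norm_sum_le _ _).trans (le_trans (Finset.sum_le_sum fun y _ => ?_) (sum_ite_sq_le_le T))
  have hrow := norm_sum_filter_shift_sub_le (fun x => hf x y) (T := T) (c := T - 2 * y ^ 2)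
    (by linarith [sq_nonneg y])
  simp only [le_sub_iff_add_le] at hrow
  refine hrow.trans ?_
  split_ifs with hy hy'
  · exact le_rfl
  · linarith [sq_nonneg y]
  · exact zero_le_two
  · exact le_rfl

lemma norm_sum_ellipsePoints_shift_snd_sub_le (T : ℕ) :
    ‖∑ p ∈ ellipsePoints T, (f p.1 (p.2 + 1) - f p.1 p.2)‖ ≤ 2 * (2 * Real.sqrt T + 1) := by
  rw [ellipsePoints, Finset.sum_filter, Finset.sum_product]
  refine (norm_sum_le _ _).trans (le_trans (Finset.sum_le_sum fun x _ => ?_) (sum_ite_sq_le_le T))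
  have hcolumn := norm_sum_filter_shift_sub_le (hf x) (T := T) (c := (T - x ^ 2) / 2)
    (by have := sq_nonneg x; omega)
  have hiff : ∀ y : ℤ, y ^ 2 ≤ (T - x ^ 2) / 2 ↔ x ^ 2 + 2 * y ^ 2 ≤ T := fun y => by omega
  simp only [hiff] at hcolumn
  refine hcolumn.trans ?_
  split_ifs with hx hx'
  · exact le_rfl
  · omega
  · exact zero_le_two
  · exact le_rfl

lemma norm_sum_ellipsePoints_shift_sub_le (T a b : ℕ) :
    ‖∑ p ∈ ellipsePoints T, f (p.1 + a) (p.2 + b) - ∑ p ∈ ellipsePoints T, f p.1 p.2‖ ≤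
      (a + b) * (2 * (2 * Real.sqrt T + 1)) := by
  induction a with
  | zero =>
    induction b with
    | zero => simp
    | succ b ih =>
      have hstep := norm_sum_ellipsePoints_shift_snd_sub_le
        (f := fun x y => f (x + (0 : ℕ)) (y + b)) (fun x y => hf _ _) T
      rw [Finset.sum_sub_distrib] at hstep
      refine (norm_sub_le_norm_sub_add_norm_sub _
        (∑ p ∈ ellipsePoints T, f (p.1 + (0 : ℕ)) (p.2 + b)) _).trans ?_
      push_cast at hstep ih ⊢
      simp only [add_right_comm _ (1 : ℤ), ← add_assoc] at hstep ⊢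
      linarith
  | succ a ih =>
    have hstep := norm_sum_ellipsePoints_shift_fst_sub_le (f := fun x y => f (x + a) (y + b))
      (fun x y => hf _ _) T
    rw [Finset.sum_sub_distrib] at hstep
    refine (norm_sub_le_norm_sub_add_norm_sub _
      (∑ p ∈ ellipsePoints T, f (p.1 + a) (p.2 + b)) _).trans ?_
    push_cast at hstep ih ⊢
    simp only [add_right_comm _ (1 : ℤ), ← add_assoc] at hstep ⊢
    linarith

/-- Averaging over the `M ^ 2` translates by a square makes the main terms cancel and leaves only
the boundary terms. -/
theorem norm_sum_ellipsePoints_le {M : ℕ} (hM : 0 < M)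
    (hsum : ∀ x y, ∑ a ∈ Finset.range M, ∑ b ∈ Finset.range M, f (x + a) (y + b) = 0) (T : ℕ) :
    ‖∑ p ∈ ellipsePoints T, f p.1 p.2‖ ≤ 2 * M * (2 * (2 * Real.sqrt T + 1)) := by
  set C := 2 * (2 * Real.sqrt T + 1)
  have hC : 0 ≤ C := by positivity
  have htranslates : ∑ a ∈ Finset.range M, ∑ b ∈ Finset.range M,
      ∑ p ∈ ellipsePoints T, f (p.1 + a) (p.2 + b) = 0 := by
    simp only [Finset.sum_comm (s := Finset.range M) (t := ellipsePoints T)]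
    exact Finset.sum_eq_zero fun p _ => hsum _ _
  have haverage : ∑ a ∈ Finset.range M, ∑ b ∈ Finset.range M,
      (∑ p ∈ ellipsePoints T, f (p.1 + a) (p.2 + b) - ∑ p ∈ ellipsePoints T, f p.1 p.2) =
      -((M : ℂ) * (M * ∑ p ∈ ellipsePoints T, f p.1 p.2)) := by
    simp only [Finset.sum_sub_distrib, Finset.sum_const, Finset.card_range, nsmul_eq_mul,
      htranslates, zero_sub]
  have hbound : ‖∑ a ∈ Finset.range M, ∑ b ∈ Finset.range M,
      (∑ p ∈ ellipsePoints T, f (p.1 + a) (p.2 + b) - ∑ p ∈ ellipsePoints T, f p.1 p.2)‖ ≤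
      ∑ a ∈ Finset.range M, ∑ b ∈ Finset.range M, 2 * M * C := by
    refine norm_sum_le_of_le _ fun a ha => norm_sum_le_of_le _ fun b hb => ?_
    refine (norm_sum_ellipsePoints_shift_sub_le hf T a b).trans (mul_le_mul_of_nonneg_right ?_ hC)
    rw [two_mul]
    exact add_le_add (by exact_mod_cast (Finset.mem_range.1 ha).le)
      (by exact_mod_cast (Finset.mem_range.1 hb).le)
  rw [haverage, norm_neg, norm_mul, norm_mul, Complex.norm_natCast] at hbound
  simp only [Finset.sum_const, Finset.card_range, nsmul_eq_mul] at hbound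
  have hM' : (0 : ℝ) < M := by exact_mod_cast hM
  rwa [mul_le_mul_iff_right₀ hM', mul_le_mul_iff_right₀ hM'] at hbound

end EllipsePoints

namespace ZsqrtdNegTwo

lemma normNat_le_iff_mem_ellipsePoints {T : ℕ} {x : ℤ√(-2)} :
    normNat x ≤ T ↔ (x.re, x.im) ∈ ellipsePoints T := by
  rw [mem_ellipsePoints, ← coe_normNat, Nat.cast_le]

lemma pairwiseDisjoint_normFinset (s : Set ℕ) : s.PairwiseDisjoint normFinset := by
  intro m _ n _ hmn
  refine Finset.disjoint_left.2 fun x hm hn => hmn ?_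
  rw [← mem_normFinset.1 hm, ← mem_normFinset.1 hn]

theorem sum_normFinset_eq_sum_ellipsePoints {E : Type*} [AddCommMonoid E] {f : ℤ√(-2) → E}
    (hf : f 0 = 0) (T : ℕ) :
    ∑ n ∈ Finset.Icc 1 T, ∑ x ∈ normFinset n, f x = ∑ p ∈ ellipsePoints T, f ⟨p.1, p.2⟩ := by
  classical
  have hnorm_zero : ∀ x ∈ normFinset 0, f x = 0 := by
    intro x hx
    obtain rfl : x = 0 := by
      by_contra h
      exact (normNat_pos h).ne' (mem_normFinset.1 hx)
    exact hf
  have hzero : ∑ n ∈ Finset.Icc 1 T, ∑ x ∈ normFinset n, f x =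
      ∑ n ∈ Finset.Icc 0 T, ∑ x ∈ normFinset n, f x := by
    refine Finset.sum_subset (Finset.Icc_subset_Icc_left zero_le_one) fun n hn hn' => ?_
    obtain rfl : n = 0 := by
      rw [Finset.mem_Icc] at hn hn'
      omega
    exact Finset.sum_eq_zero hnorm_zero
  rw [hzero, ← Finset.sum_biUnion (pairwiseDisjoint_normFinset _)]
  refine Finset.sum_bij' (fun x _ => (x.re, x.im)) (fun p _ => ⟨p.1, p.2⟩) ?_ ?_
    (fun _ _ => rfl) (fun _ _ => rfl) (fun _ _ => rfl)
  · intro x hx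
    simp only [Finset.mem_biUnion, Finset.mem_Icc, mem_normFinset] at hx
    obtain ⟨_, ⟨-, hn⟩, rfl⟩ := hx
    exact normNat_le_iff_mem_ellipsePoints.1 hn
  · intro p hp
    simp only [Finset.mem_biUnion, Finset.mem_Icc, mem_normFinset]
    exact ⟨_, ⟨Nat.zero_le _, normNat_le_iff_mem_ellipsePoints.2 hp⟩, rfl⟩

section RingClassCharacters

lemma sum_range_zmod_intCast_add {M : ℕ} [NeZero M] {E : Type*} [AddCommMonoid E]
    (f : ZMod M → E) (x : ℤ) : ∑ a ∈ Finset.range M, f ((x + a : ℤ) : ZMod M) = ∑ z, f z := by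
  rw [← Equiv.sum_comp (Equiv.addLeft (x : ZMod M)) f]
  refine Finset.sum_bij' (fun a _ => (a : ZMod M)) (fun z _ => z.val) (fun _ _ => Finset.mem_univ _)
    (fun z _ => Finset.mem_range.2 z.val_lt)
    (fun a ha => ZMod.val_cast_of_lt (Finset.mem_range.1 ha)) (fun z _ => ZMod.natCast_zmod_val z)
    fun a _ => ?_
  rw [Equiv.coe_addLeft, Int.cast_add, Int.cast_natCast]

lemma isUnit_intCast_zmod_two_pow_iff {k : ℕ} (hk : 1 ≤ k) (m : ℤ) :
    IsUnit (m : ZMod (2 ^ k)) ↔ Odd m := by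
  rw [ZMod.coe_int_isUnit_iff_isCoprime, Nat.cast_pow, IsCoprime.pow_left_iff hk, Nat.cast_ofNat,
    Int.isCoprime_two_left]

lemma isNilpotent_two_mul_zmod_two_pow {k : ℕ} (a : ZMod (2 ^ k)) : IsNilpotent (2 * a) := by
  refine (Commute.all _ _).isNilpotent_mul_right ⟨k, ?_⟩
  exact_mod_cast ZMod.natCast_self (2 ^ k)

lemma isUnit_one_sub_two_mul {k : ℕ} (a : ZMod (2 ^ k)) : IsUnit (1 - 2 * a) :=
  (isNilpotent_two_mul_zmod_two_pow a).isUnit_one_sub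

-- The map `s ↦ s / (1 - 2 * s ^ 2)` is injective, as `a / (1 - 2 * a ^ 2) = b / (1 - 2 * b ^ 2)`
-- means `(1 + 2 * a * b) * (a - b) = 0`; hence it is surjective.
lemma exists_eq_mul_one_sub_two_mul_sq {k : ℕ} (t : ZMod (2 ^ k)) :
    ∃ s, s = t * (1 - 2 * s ^ 2) := by
  let d : ZMod (2 ^ k) → (ZMod (2 ^ k))ˣ := fun s => (isUnit_one_sub_two_mul (s ^ 2)).unit
  have hd : ∀ s, (d s : ZMod (2 ^ k)) = 1 - 2 * s ^ 2 := fun _ => rfl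
  have hinj : Function.Injective fun s : ZMod (2 ^ k) => s * ↑(d s)⁻¹ := by
    intro a b hab
    have hcross : a * (1 - 2 * b ^ 2) = b * (1 - 2 * a ^ 2) := by
      have ha : a = b * ↑(d b)⁻¹ * d a := (Units.mul_inv_eq_iff_eq_mul _).1 hab
      calc a * (1 - 2 * b ^ 2) = b * ↑(d b)⁻¹ * d a * d b := by rw [← ha, hd]
        _ = b * (1 - 2 * a ^ 2) := by rw [mul_right_comm, Units.inv_mul_cancel_right, hd]
    have hzero : (1 - 2 * (-(a * b))) * (a - b) = 0 := by linear_combination hcross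
    exact sub_eq_zero.1 ((isUnit_one_sub_two_mul _).mul_right_eq_zero.1 hzero)
  obtain ⟨s, hs⟩ := Finite.injective_iff_surjective.1 hinj t
  exact ⟨s, (Units.mul_inv_eq_iff_eq_mul _).1 hs⟩

/-- The ring `ℤ[√-2] / 2ᵏ`. -/
abbrev ResidueRing (k : ℕ) : Type := QuadraticAlgebra (ZMod (2 ^ k)) (-2) 0

instance (k : ℕ) : Finite (ResidueRing k) := Finite.of_equiv _ (QuadraticAlgebra.equivProd _ _).symm

lemma isUnit_residueRing_iff {k : ℕ} {z : ResidueRing k} : IsUnit z ↔ IsUnit z.re := by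
  have hnorm : z.norm = z.re ^ 2 + 2 * z.im ^ 2 := by
    rw [QuadraticAlgebra.norm_def]
    ring
  have hnil := isNilpotent_two_mul_zmod_two_pow (z.im ^ 2)
  rw [QuadraticAlgebra.isUnit_iff_norm_isUnit, hnorm, ← isUnit_pow_iff (a := z.re) two_ne_zero]
  exact ⟨fun h => by simpa using hnil.neg.isUnit_add_left_of_commute h (Commute.all _ _),
    fun h => hnil.isUnit_add_left_of_commute h (Commute.all _ _)⟩

/-- The reduction map modulo `2ᵏ`. -/
def reduction (k : ℕ) : ℤ√(-2) →+* ResidueRing k where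
  toFun x := ⟨x.re, x.im⟩
  map_one' := by ext <;> simp [QuadraticAlgebra.re_one, QuadraticAlgebra.im_one]
  map_mul' x y := by ext <;> simp
  map_zero' := by ext <;> simp
  map_add' x y := by ext <;> simp

lemma reduction_re (k : ℕ) (x : ℤ√(-2)) : (reduction k x).re = x.re := rfl

lemma reduction_im (k : ℕ) (x : ℤ√(-2)) : (reduction k x).im = x.im := rfl

lemma isUnit_reduction_iff {k : ℕ} (hk : 1 ≤ k) (x : ℤ√(-2)) :
    IsUnit (reduction k x) ↔ Odd x.re := by
  rw [isUnit_residueRing_iff, reduction_re, isUnit_intCast_zmod_two_pow_iff hk]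

/-- The ring class group of `ℤ[√-2]` of conductor `2ᵏ`: the units of `ℤ[√-2] / 2ᵏ` modulo those
of `ℤ / 2ᵏ`. -/
def RingClassGroup (k : ℕ) : Type :=
  (ResidueRing k)ˣ ⧸
    (Units.map (algebraMap (ZMod (2 ^ k)) (ResidueRing k)).toMonoidHom).range

noncomputable instance (k : ℕ) : CommGroup (RingClassGroup k) :=
  inferInstanceAs (CommGroup (_ ⧸ _))

instance (k : ℕ) : Finite (RingClassGroup k) := inferInstanceAs (Finite (_ ⧸ _))

noncomputable instance (k : ℕ) : Fintype (RingClassGroup k) := Fintype.ofFinite _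

/-- The class of a unit of `ℤ[√-2] / 2ᵏ` in the ring class group. -/
noncomputable def ringClass (k : ℕ) : (ResidueRing k)ˣ →* RingClassGroup k := QuotientGroup.mk' _

variable {k : ℕ}

lemma ringClass_surjective : Function.Surjective (ringClass k) := QuotientGroup.mk_surjective

lemma ringClass_eq_iff {u v : (ResidueRing k)ˣ} :
    ringClass k u = ringClass k v ↔ ∃ c : (ZMod (2 ^ k))ˣ,
      (v : ResidueRing k).re = (u : ResidueRing k).re * c ∧
        (v : ResidueRing k).im = (u : ResidueRing k).im * c := by
  have hscalar : ∀ c : (ZMod (2 ^ k))ˣ,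
      Units.map (algebraMap (ZMod (2 ^ k)) (ResidueRing k)).toMonoidHom c = u⁻¹ * v ↔
        (v : ResidueRing k).re = (u : ResidueRing k).re * c ∧
          (v : ResidueRing k).im = (u : ResidueRing k).im * c := by
    intro c
    rw [eq_inv_mul_iff_mul_eq, Units.ext_iff, eq_comm, Units.val_mul, QuadraticAlgebra.ext_iff]
    simp [QuadraticAlgebra.algebraMap_eq]
  exact QuotientGroup.eq.trans (exists_congr hscalar)

theorem card_ringClassGroup (k : ℕ) : Nat.card (RingClassGroup k) = 2 ^ k := by
  have hunit : ∀ t : ZMod (2 ^ k), IsUnit (⟨1, t⟩ : ResidueRing k) := fun _ =>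
    isUnit_residueRing_iff.2 isUnit_one
  rw [← Nat.card_zmod (2 ^ k)]
  refine (Nat.card_congr
    (Equiv.ofBijective (fun t => ringClass k (hunit t).unit) ⟨?_, ?_⟩)).symm
  · intro s t hst
    obtain ⟨c, hre, him⟩ := ringClass_eq_iff.1 hst
    simp only [IsUnit.unit_spec, one_mul] at hre him
    rw [him, ← hre, mul_one]
  · intro g
    obtain ⟨u, rfl⟩ := ringClass_surjective g
    obtain ⟨c, hc⟩ := isUnit_residueRing_iff.1 u.isUnit
    refine ⟨↑c⁻¹ * (u : ResidueRing k).im, ringClass_eq_iff.2 ⟨c, ?_, ?_⟩⟩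
    · rw [IsUnit.unit_spec, one_mul, hc]
    · rw [IsUnit.unit_spec, mul_right_comm, Units.inv_mul, one_mul]

lemma exists_ringClass_sq_eq {u : (ResidueRing k)ˣ} (hu : 2 ∣ (u : ResidueRing k).im) :
    ∃ w, ringClass k (w ^ 2) = ringClass k u := by
  obtain ⟨v, hv⟩ := hu
  obtain ⟨c, hc⟩ := isUnit_residueRing_iff.1 u.isUnit
  obtain ⟨s, hs⟩ := exists_eq_mul_one_sub_two_mul_sq (k := k) (v * ↑c⁻¹)
  obtain ⟨d, hd⟩ := isUnit_one_sub_two_mul (k := k) (s ^ 2)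
  obtain ⟨w, hw⟩ := isUnit_residueRing_iff (z := ⟨1, s⟩).2 isUnit_one
  have hscale : s * (c * d⁻¹ : (ZMod (2 ^ k))ˣ) = v := by
    rw [← hd] at hs
    rw [Units.val_mul, mul_left_comm, (Units.mul_inv_eq_iff_eq_mul _).2 hs, mul_left_comm,
      Units.mul_inv, mul_one]
  refine ⟨w, ringClass_eq_iff.2 ⟨c * d⁻¹, ?_, ?_⟩⟩
  · rw [Units.val_pow_eq_pow_val, hw, sq, QuadraticAlgebra.re_mul, ← hc]
    have hre : 1 * 1 + -2 * s * s = (d : ZMod (2 ^ k)) := by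
      rw [hd]
      ring
    rw [hre, Units.val_mul, mul_left_comm, Units.mul_inv, mul_one]
  · rw [Units.val_pow_eq_pow_val, hw, sq, QuadraticAlgebra.im_mul, hv, ← hscale]
    ring

/-- The multiplicative character of `ℤ[√-2] / 2ᵏ` attached to a character of the ring class
group. -/
noncomputable def ringClassMulChar (k : ℕ) (φ : AddChar (Additive (RingClassGroup k)) ℂ) :
    MulChar (ResidueRing k) ℂ :=
  MulChar.ofUnitHom ((MonoidHom.toHomUnits
    { toFun := fun g => φ (Additive.ofMul g)
      map_one' := φ.map_zero_eq_one
      map_mul' := fun _ _ => φ.map_add_eq_mul _ _ : RingClassGroup k →* ℂ }).comp (ringClass k))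

/-- The character of `ℤ[√-2]` attached to a character of the ring class group of conductor `2ᵏ`,
extended by zero. -/
noncomputable def ringClassCharacter (k : ℕ) (φ : AddChar (Additive (RingClassGroup k)) ℂ) :
    ℤ√(-2) →* ℂ :=
  (ringClassMulChar k φ).toMonoidHom.comp (reduction k).toMonoidHom

variable (φ : AddChar (Additive (RingClassGroup k)) ℂ)

lemma ringClassMulChar_coe (u : (ResidueRing k)ˣ) :
    ringClassMulChar k φ u = φ (Additive.ofMul (ringClass k u)) :=
  MulChar.ofUnitHom_coe _ u

lemma ringClassCharacter_apply {x : ℤ√(-2)} {u : (ResidueRing k)ˣ} (hu : u = reduction k x) :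
    ringClassCharacter k φ x = φ (Additive.ofMul (ringClass k u)) := by
  rw [← ringClassMulChar_coe, hu]
  rfl

lemma ringClassCharacter_of_not_odd (hk : 1 ≤ k) {x : ℤ√(-2)} (hx : ¬ Odd x.re) :
    ringClassCharacter k φ x = 0 :=
  MulChar.map_nonunit (ringClassMulChar k φ) (mt (isUnit_reduction_iff hk x).1 hx)

lemma exists_unit_eq_reduction (hk : 1 ≤ k) {x : ℤ√(-2)} (hx : Odd x.re) :
    ∃ u : (ResidueRing k)ˣ, u = reduction k x :=
  (isUnit_reduction_iff hk x).2 hx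

lemma norm_ringClassCharacter (hk : 1 ≤ k) {x : ℤ√(-2)} (hx : Odd x.re) :
    ‖ringClassCharacter k φ x‖ = 1 := by
  obtain ⟨u, hu⟩ := exists_unit_eq_reduction hk hx
  rw [ringClassCharacter_apply φ hu]
  exact φ.norm_apply _

lemma norm_ringClassCharacter_le (hk : 1 ≤ k) (x : ℤ√(-2)) : ‖ringClassCharacter k φ x‖ ≤ 1 := by
  by_cases hx : Odd x.re
  · exact (norm_ringClassCharacter φ hk hx).le
  · rw [ringClassCharacter_of_not_odd φ hk hx, norm_zero]
    exact zero_le_one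

lemma ringClassCharacter_zero (hk : 1 ≤ k) (x : ℤ√(-2)) :
    ringClassCharacter k 0 x = if Odd x.re then 1 else 0 := by
  split_ifs with hx
  · obtain ⟨u, hu⟩ := exists_unit_eq_reduction hk hx
    rw [ringClassCharacter_apply _ hu, AddChar.zero_apply]
  · exact ringClassCharacter_of_not_odd _ hk hx

lemma ringClassCharacter_add_self (hk : 1 ≤ k) (x : ℤ√(-2)) :
    ringClassCharacter k (φ + φ) x = ringClassCharacter k φ x ^ 2 := by
  by_cases hx : Odd x.re
  · obtain ⟨u, hu⟩ := exists_unit_eq_reduction hk hx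
    rw [ringClassCharacter_apply _ hu, ringClassCharacter_apply _ hu, sq, AddChar.add_apply]
  · rw [ringClassCharacter_of_not_odd _ hk hx, ringClassCharacter_of_not_odd _ hk hx,
      zero_pow two_ne_zero]

lemma ringClass_eq_one_iff {x : ℤ√(-2)} {u : (ResidueRing k)ˣ} (hu : u = reduction k x) :
    ringClass k u = 1 ↔ (2 ^ k : ℤ) ∣ x.im := by
  have him : (2 ^ k : ℤ) ∣ x.im ↔ (u : ResidueRing k).im = 0 := by
    rw [hu, reduction_im, ZMod.intCast_zmod_eq_zero_iff_dvd, Nat.cast_pow, Nat.cast_ofNat]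
  rw [him, ← (ringClass k).map_one, eq_comm, ringClass_eq_iff]
  simp only [Units.val_one, QuadraticAlgebra.re_one, QuadraticAlgebra.im_one, one_mul, zero_mul]
  refine ⟨fun ⟨c, hc⟩ => hc.2, fun h => ?_⟩
  obtain ⟨c, hc⟩ := isUnit_residueRing_iff.1 u.isUnit
  exact ⟨c, hc.symm, h⟩

theorem sum_ringClassCharacter (hk : 1 ≤ k) {x : ℤ√(-2)} (hx : Odd x.re) :
    ∑ φ, ringClassCharacter k φ x = if (2 ^ k : ℤ) ∣ x.im then 2 ^ k else 0 := by
  classical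
  obtain ⟨u, hu⟩ := exists_unit_eq_reduction hk hx
  have hcard : Fintype.card (Additive (RingClassGroup k)) = 2 ^ k := by
    rw [← Nat.card_eq_fintype_card]
    exact card_ringClassGroup k
  simp only [ringClassCharacter_apply _ hu]
  rw [AddChar.sum_apply_eq_ite, hcard, Nat.cast_pow, Nat.cast_ofNat]
  exact if_congr (ofMul_eq_zero.trans (ringClass_eq_one_iff hu)) rfl rfl

lemma ringClassMulChar_ne_one {φ : AddChar (Additive (RingClassGroup k)) ℂ} (hφ : φ ≠ 0) :
    ringClassMulChar k φ ≠ 1 := by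
  refine fun h => hφ (DFunLike.ext _ _ fun g => ?_)
  obtain ⟨u, hu⟩ := ringClass_surjective g.toMul
  rw [← ofMul_toMul g, ← hu, ← ringClassMulChar_coe, h, MulChar.one_apply_coe, AddChar.zero_apply]

theorem sum_ringClassCharacter_eq_zero {φ : AddChar (Additive (RingClassGroup k)) ℂ} (hφ : φ ≠ 0)
    (x y : ℤ) :
    ∑ a ∈ Finset.range (2 ^ k), ∑ b ∈ Finset.range (2 ^ k),
      ringClassCharacter k φ ⟨x + a, y + b⟩ = 0 := by
  have : Fintype (ResidueRing k) := Fintype.ofFinite _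
  have hval : ∀ a b : ℤ, ringClassCharacter k φ ⟨a, b⟩ = ringClassMulChar k φ ⟨a, b⟩ :=
    fun _ _ => rfl
  have hsum := MulChar.sum_eq_zero_of_ne_one (ringClassMulChar_ne_one hφ)
  rw [← (QuadraticAlgebra.equivProd (-2 : ZMod (2 ^ k)) 0).symm.sum_comp,
    Fintype.sum_prod_type] at hsum
  simp only [hval]
  rw [← hsum, ← sum_range_zmod_intCast_add _ x]
  refine Finset.sum_congr rfl fun a _ => ?_
  rw [← sum_range_zmod_intCast_add _ y]
  rfl

variable {φ}

theorem ringClassCharacter_of_even (hk : 1 ≤ k) (hφ : φ + φ = 0) {x : ℤ√(-2)} (hx : Odd x.re)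
    (hy : Even x.im) : ringClassCharacter k φ x = 1 := by
  obtain ⟨u, hu⟩ := exists_unit_eq_reduction hk hx
  have him : 2 ∣ (u : ResidueRing k).im := by
    rw [hu, reduction_im]
    exact_mod_cast Int.cast_dvd_cast (α := ZMod (2 ^ k)) _ _ hy.two_dvd
  obtain ⟨w, hw⟩ := exists_ringClass_sq_eq him
  rw [ringClassCharacter_apply _ hu, ← hw, sq, map_mul, ofMul_mul, AddChar.map_add_eq_mul,
    ← AddChar.add_apply, hφ, AddChar.zero_apply]

theorem exists_ringClassCharacter_eq (hk : 1 ≤ k) (hφ : φ + φ = 0) :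
    ∃ ε : ℂ, ∀ x : ℤ√(-2), Odd x.re → ringClassCharacter k φ x = if Even x.im then 1 else ε := by
  refine ⟨ringClassCharacter k φ ⟨1, 1⟩, fun x hx => ?_⟩
  split_ifs with hy
  · exact ringClassCharacter_of_even hk hφ hx hy
  have hsq : ringClassCharacter k φ ⟨1, 1⟩ ^ 2 = 1 := by
    rw [← ringClassCharacter_add_self φ hk, hφ, ringClassCharacter_zero hk, if_pos odd_one]
  have hre : Odd (x * ⟨1, 1⟩ : ℤ√(-2)).re := by
    rw [Zsqrtd.re_mul, mul_one, mul_one, neg_mul]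
    exact hx.add_even (even_two_mul _).neg
  have him : Even (x * ⟨1, 1⟩ : ℤ√(-2)).im := by
    rw [Zsqrtd.im_mul, mul_one, mul_one]
    exact hx.add_odd (Int.not_even_iff_odd.1 hy)
  have hprod := ringClassCharacter_of_even hk hφ hre him
  rw [map_mul] at hprod
  calc ringClassCharacter k φ x = ringClassCharacter k φ x * ringClassCharacter k φ ⟨1, 1⟩ ^ 2 := by
        rw [hsq, mul_one]
    _ = ringClassCharacter k φ ⟨1, 1⟩ := by rw [sq, ← mul_assoc, hprod, one_mul]

end RingClassCharacters

end ZsqrtdNegTwo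

section HeckeSeries

lemma LSeriesSummable_of_norm_le_vonMangoldt {a : ℕ → ℂ} {C : ℝ}
    (ha : ∀ n, ‖a n‖ ≤ C * ArithmeticFunction.vonMangoldt n) {s : ℂ} (hs : 1 < s.re) :
    LSeriesSummable a s := by
  have hbound := (ArithmeticFunction.LSeriesSummable_vonMangoldt hs).norm.mul_left C
  refine Summable.of_norm_bounded hbound fun n => ?_
  rw [LSeries.norm_term_eq, LSeries.norm_term_eq]
  split_ifs
  · rw [mul_zero]
  · rw [← mul_div_assoc]
    refine div_le_div_of_nonneg_right ((ha n).trans_eq ?_) (by positivity)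
    rw [Complex.norm_of_nonneg ArithmeticFunction.vonMangoldt_nonneg]

lemma sum_Icc_floor_of_lt_one (f : ℕ → ℂ) {t : ℝ} (ht : t < 1) :
    ∑ k ∈ Finset.Icc 1 ⌊t⌋₊, f k = 0 := by
  rw [Nat.floor_eq_zero.2 ht, Finset.Icc_eq_empty (by norm_num), Finset.sum_empty]

lemma LSeries_eq_mul_mellin_sum {f : ℕ → ℂ} {r : ℝ} (hr : 0 ≤ r)
    (hO : (fun n : ℕ => ∑ k ∈ Finset.Icc 1 n, f k) =O[atTop] fun n => (n : ℝ) ^ r) {s : ℂ}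
    (hs : r < s.re) (hsum : LSeriesSummable f s) :
    LSeries f s = s * mellin (fun t => ∑ k ∈ Finset.Icc 1 ⌊t⌋₊, f k) (-s) := by
  rw [LSeries_eq_mul_integral f hr hs hsum hO, mellin, ← MeasureTheory.integral_Ici_eq_integral_Ioi,
    MeasureTheory.setIntegral_eq_of_subset_of_forall_sdiff_eq_zero measurableSet_Ioi
      (Set.Ici_subset_Ioi.2 zero_lt_one)]
  · congr 1
    refine MeasureTheory.setIntegral_congr_fun measurableSet_Ici fun t _ => ?_
    rw [smul_eq_mul, mul_comm, neg_add']
  · intro t ht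
    rw [sum_Icc_floor_of_lt_one f (not_le.1 ht.2), smul_zero]

lemma differentiableAt_mellin_sum {f : ℕ → ℂ} {r : ℝ} (hr : 0 ≤ r)
    (hO : (fun n : ℕ => ∑ k ∈ Finset.Icc 1 n, f k) =O[atTop] fun n => (n : ℝ) ^ r) {s : ℂ}
    (hs : s.re < -r) :
    DifferentiableAt ℂ (mellin fun t => ∑ k ∈ Finset.Icc 1 ⌊t⌋₊, f k) s := by
  set S : ℝ → ℂ := fun t => ∑ k ∈ Finset.Icc 1 ⌊t⌋₊, f k
  have hloc : MeasureTheory.LocallyIntegrableOn S (Set.Ioi 0) := by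
    have h := locallyIntegrableOn_mul_sum_Icc f (m := 1) (a := (0 : ℝ)) (g := fun _ => (1 : ℂ))
      le_rfl ((MeasureTheory.locallyIntegrable_const (1 : ℂ)).locallyIntegrableOn (Set.Ici 0))
    simp only [one_mul] at h
    exact h.mono_set Set.Ioi_subset_Ici_self
  have htop : S =O[atTop] fun t : ℝ => t ^ (- -r) := by
    refine (hO.comp_tendsto tendsto_nat_floor_atTop).trans (Asymptotics.IsBigO.of_bound 1 ?_)
    filter_upwards [eventually_ge_atTop 0] with t ht
    rw [one_mul, neg_neg, Function.comp_apply, Real.norm_of_nonneg (by positivity),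
      Real.norm_of_nonneg (by positivity)]
    exact Real.rpow_le_rpow (Nat.cast_nonneg _) (Nat.floor_le ht) hr
  have hbot : S =O[nhdsWithin 0 (Set.Ioi 0)] fun t : ℝ => t ^ (-(s.re - 1)) := by
    refine Asymptotics.IsBigO.of_bound 0 ?_
    filter_upwards [mem_nhdsWithin_of_mem_nhds (Iio_mem_nhds zero_lt_one)] with t ht
    rw [show S t = 0 from sum_Icc_floor_of_lt_one f ht, norm_zero, zero_mul]
  exact mellin_differentiableAt_of_isBigO_rpow hloc htop hs hbot (sub_one_lt _)

theorem exists_differentiableOn_LSeries_of_sum_isBigO {f : ℕ → ℂ} {r : ℝ} (hr : 0 ≤ r)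
    (hO : (fun n : ℕ => ∑ k ∈ Finset.Icc 1 n, f k) =O[atTop] fun n => (n : ℝ) ^ r) :
    ∃ H : ℂ → ℂ, DifferentiableOn ℂ H {s | r < s.re} ∧
      ∀ s, r < s.re → LSeriesSummable f s → LSeries f s = H s := by
  refine ⟨fun s => s * mellin (fun t => ∑ k ∈ Finset.Icc 1 ⌊t⌋₊, f k) (-s), fun s hs => ?_,
    fun s hs hsum => LSeries_eq_mul_mellin_sum hr hO hs hsum⟩
  have hmellin := differentiableAt_mellin_sum hr hO (s := -s)
    (by rw [Complex.neg_re]; exact neg_lt_neg hs)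
  exact (differentiableAt_id.mul (hmellin.comp s differentiableAt_id.neg)).differentiableWithinAt

namespace ZsqrtdNegTwo

variable {ψ : ℤ√(-2) →* ℂ}

lemma sum_norm_normSum_le (h0 : ψ 0 = 0) (hψ : ∀ x, ‖ψ x‖ ≤ 1) (n : ℕ) :
    ∑ k ∈ Finset.Icc 1 n, ‖normSum ψ k‖ ≤ (ellipsePoints n).card :=
  calc ∑ k ∈ Finset.Icc 1 n, ‖normSum ψ k‖
      ≤ ∑ k ∈ Finset.Icc 1 n, ∑ x ∈ normFinset k, ‖ψ x‖ :=
        Finset.sum_le_sum fun k _ => norm_sum_le _ _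
    _ = ∑ p ∈ ellipsePoints n, ‖ψ ⟨p.1, p.2⟩‖ :=
        sum_normFinset_eq_sum_ellipsePoints (by rw [h0, norm_zero]) n
    _ ≤ ∑ _p ∈ ellipsePoints n, 1 := Finset.sum_le_sum fun p _ => hψ _
    _ = (ellipsePoints n).card := by rw [Finset.sum_const, nsmul_one]

lemma sum_norm_normSum_isBigO (h0 : ψ 0 = 0) (hψ : ∀ x, ‖ψ x‖ ≤ 1) :
    (fun n : ℕ => ∑ k ∈ Finset.Icc 1 n, ‖normSum ψ k‖) =O[atTop] fun n => (n : ℝ) ^ (1 : ℝ) := by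
  refine Asymptotics.IsBigO.of_bound 9 ?_
  filter_upwards [eventually_ge_atTop 1] with n hn
  rw [Real.rpow_one, Real.norm_of_nonneg (Nat.cast_nonneg n),
    Real.norm_of_nonneg (Finset.sum_nonneg fun _ _ => _root_.norm_nonneg _)]
  refine ((sum_norm_normSum_le h0 hψ n).trans (card_ellipsePoints_le n)).trans ?_
  have hsq := Real.sq_sqrt (Nat.cast_nonneg (α := ℝ) n)
  have hone : 1 ≤ Real.sqrt n := Real.one_le_sqrt.2 (by exact_mod_cast hn)
  nlinarith

lemma LSeriesSummable_normSum (h0 : ψ 0 = 0) (hψ : ∀ x, ‖ψ x‖ ≤ 1) {s : ℂ} (hs : 1 < s.re) :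
    LSeriesSummable (normSum ψ) s :=
  LSeriesSummable_of_sum_norm_bigO (sum_norm_normSum_isBigO h0 hψ) zero_le_one hs

lemma LSeriesSummable_primePowSum (hψ : ∀ x, ‖ψ x‖ ≤ 1) {s : ℂ} (hs : 1 < s.re) :
    LSeriesSummable (primePowSum ψ) s :=
  LSeriesSummable_of_norm_le_vonMangoldt (norm_primePowSum_le hψ) hs

theorem LSeries_primePowSum_mul_normSum (h0 : ψ 0 = 0) (hψ : ∀ x, ‖ψ x‖ ≤ 1) {s : ℂ}
    (hs : 1 < s.re) :
    LSeries (primePowSum ψ) s * LSeries (normSum ψ) s = -2 * deriv (LSeries (normSum ψ)) s := by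
  have habs : LSeries.abscissaOfAbsConv (normSum ψ) < s.re := by
    refine lt_of_le_of_lt (LSeries.abscissaOfAbsConv_le_of_forall_lt_LSeriesSummable (x := 1)
      fun y hy => LSeriesSummable_normSum h0 hψ (by rwa [Complex.ofReal_re])) ?_
    exact_mod_cast hs
  rw [LSeries_deriv habs, ← LSeries_convolution' (LSeriesSummable_primePowSum hψ hs)
    (LSeriesSummable_normSum h0 hψ hs), neg_mul_neg,
    ← LSeries_smul (LSeries.logMul (normSum ψ)) (2 : ℂ) s]
  refine LSeries_congr (fun {n} hn => ?_) s
  rw [LSeries.convolution_def]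
  refine (sum_primePowSum_mul_normSum ψ hn).trans ?_
  rw [Pi.smul_apply, LSeries.logMul, smul_eq_mul, Complex.natCast_log, mul_assoc]

lemma sum_normSum_isBigO {M : ℕ} (hM : 0 < M) (h0 : ψ 0 = 0) (hψ : ∀ x, ‖ψ x‖ ≤ 1)
    (hsum : ∀ x y : ℤ, ∑ a ∈ Finset.range M, ∑ b ∈ Finset.range M, ψ ⟨x + a, y + b⟩ = 0) :
    (fun n : ℕ => ∑ k ∈ Finset.Icc 1 n, normSum ψ k) =O[atTop]
      fun n => (n : ℝ) ^ (1 / 2 : ℝ) := by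
  refine Asymptotics.IsBigO.of_bound (2 * M * 6) ?_
  filter_upwards [eventually_ge_atTop 1] with n hn
  have hbound := norm_sum_ellipsePoints_le (f := fun x y => ψ ⟨x, y⟩) (fun x y => hψ _) hM hsum n
  rw [← sum_normFinset_eq_sum_ellipsePoints (f := ψ) h0] at hbound
  refine hbound.trans ?_
  rw [← Real.sqrt_eq_rpow, Real.norm_of_nonneg (Real.sqrt_nonneg _), mul_assoc _ (6 : ℝ)]
  have hone : 1 ≤ Real.sqrt n := Real.one_le_sqrt.2 (by exact_mod_cast hn)
  exact mul_le_mul_of_nonneg_left (by linarith) (by positivity)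

/-- `H` is a holomorphic continuation to `1 / 2 < re s` of the Hecke series of `ψ`, the Dirichlet
series with coefficients `normSum ψ`. -/
structure IsContinuation (ψ : ℤ√(-2) →* ℂ) (H : ℂ → ℂ) : Prop where
  differentiableOn : DifferentiableOn ℂ H {s | 1 / 2 < s.re}
  LSeries_eq : ∀ s : ℂ, 1 < s.re → LSeries (normSum ψ) s = H s

theorem exists_isContinuation {M : ℕ} (hM : 0 < M) (h0 : ψ 0 = 0) (hψ : ∀ x, ‖ψ x‖ ≤ 1)
    (hsum : ∀ x y : ℤ, ∑ a ∈ Finset.range M, ∑ b ∈ Finset.range M, ψ ⟨x + a, y + b⟩ = 0) :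
    ∃ H : ℂ → ℂ, IsContinuation ψ H := by
  obtain ⟨H, hdiff, heq⟩ := exists_differentiableOn_LSeries_of_sum_isBigO one_half_pos.le
    (sum_normSum_isBigO hM h0 hψ hsum)
  exact ⟨H, hdiff, fun s hs =>
    heq s (one_half_lt_one.trans hs) (LSeriesSummable_normSum h0 hψ hs)⟩

end ZsqrtdNegTwo

end HeckeSeries

section NonVanishing

lemma tendsto_sub_mul_logDeriv {f : ℂ → ℂ} {z₀ : ℂ} (hf : AnalyticAt ℂ f z₀)
    (hne : analyticOrderAt f z₀ ≠ ⊤) :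
    Tendsto (fun z => (z - z₀) * logDeriv f z) (nhdsWithin z₀ {z₀}ᶜ)
      (nhds (analyticOrderNatAt f z₀)) := by
  set m := analyticOrderNatAt f z₀
  obtain ⟨g, hg, hg0, hfg⟩ := hf.analyticOrderAt_ne_top.1 hne
  have hlog : ∀ᶠ z in nhds z₀, logDeriv f z = logDeriv (fun z => (z - z₀) ^ m * g z) z :=
    hfg.eventuallyEq_nhds.mono fun z hz => by
      rw [logDeriv_apply, logDeriv_apply, hz.deriv_eq, hz.eq_of_nhds]
      rfl
  have hcont : ContinuousAt (fun z => m + (z - z₀) * logDeriv g z) z₀ :=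
    continuousAt_const.add ((continuousAt_id.sub continuousAt_const).mul
      (hg.deriv.continuousAt.div hg.continuousAt hg0))
  have hlim : Tendsto (fun z => m + (z - z₀) * logDeriv g z) (nhdsWithin z₀ {z₀}ᶜ) (nhds m) := by
    simpa using hcont.tendsto.mono_left nhdsWithin_le_nhds
  refine hlim.congr' ?_
  filter_upwards [nhdsWithin_le_nhds hlog, nhdsWithin_le_nhds hg.eventually_analyticAt,
    nhdsWithin_le_nhds (hg.continuousAt.eventually_ne hg0), self_mem_nhdsWithin]
    with z hz hgz hgz0 hzz₀
  have hsub : z - z₀ ≠ 0 := sub_ne_zero.2 hzz₀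
  rw [hz, logDeriv_mul (f := fun z => (z - z₀) ^ m) z (pow_ne_zero _ hsub) hgz0 (by fun_prop)
    hgz.differentiableAt, logDeriv_fun_pow (by fun_prop), logDeriv_apply (fun z => z - z₀),
    deriv_sub_const, deriv_id'']
  field_simp

lemma LSeries_term_add_mul_I (f : ℕ → ℂ) (σ t : ℝ) {n : ℕ} (hn : n ≠ 0) :
    LSeries.term f (σ + t * Complex.I) n =
      (((n : ℝ) ^ σ)⁻¹ : ℝ) * (f n * ((n : ℂ) ^ (t * Complex.I))⁻¹) := by
  rw [LSeries.term_of_ne_zero hn, Complex.cpow_add _ _ (Nat.cast_ne_zero.2 hn), Complex.ofReal_inv,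
    Complex.ofReal_cpow (Nat.cast_nonneg n), Complex.ofReal_natCast, div_eq_mul_inv, mul_inv,
    mul_left_comm]

namespace ZsqrtdNegTwo

variable {ψ : ℤ√(-2) →* ℂ} {H : ℂ → ℂ}

lemma normSum_one (hneg : ψ (-1) = 1) : normSum ψ 1 = 2 := by
  have hset : normFinset 1 = {1, -1} := by
    ext x
    rw [mem_normFinset, normNat_eq_one_iff, isUnit_iff, Finset.mem_insert, Finset.mem_singleton]
  rw [normSum, hset, Finset.sum_pair (by decide), map_one, hneg, one_add_one_eq_two]

namespace IsContinuation

lemma analyticAt (hH : IsContinuation ψ H) {s : ℂ} (hs : 1 ≤ s.re) : AnalyticAt ℂ H s :=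
  hH.differentiableOn.analyticAt ((isOpen_lt continuous_const Complex.continuous_re).mem_nhds
    (one_half_lt_one.trans_le hs))

lemma LSeries_primePowSum_mul (hH : IsContinuation ψ H) (h0 : ψ 0 = 0) (hψ : ∀ x, ‖ψ x‖ ≤ 1)
    {s : ℂ} (hs : 1 < s.re) : LSeries (primePowSum ψ) s * H s = -2 * deriv H s := by
  have heq : LSeries (normSum ψ) =ᶠ[nhds s] H := by
    filter_upwards [(isOpen_lt continuous_const Complex.continuous_re).mem_nhds hs] with w hw
    exact hH.LSeries_eq w hw
  rw [← heq.deriv_eq, ← heq.eq_of_nhds, LSeries_primePowSum_mul_normSum h0 hψ hs]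

lemma not_eventually_eq_zero (hH : IsContinuation ψ H) (h0 : ψ 0 = 0) (hψ : ∀ x, ‖ψ x‖ ≤ 1)
    (hneg : ψ (-1) = 1) {ρ : ℂ} (hρ : 1 ≤ ρ.re) : ¬ ∀ᶠ z in nhds ρ, H z = 0 := by
  intro h
  have hzero : Set.EqOn H 0 {s | 1 / 2 < s.re} :=
    (hH.differentiableOn.analyticOnNhd (isOpen_lt continuous_const Complex.continuous_re))
      |>.eqOn_zero_of_preconnected_of_eventuallyEq_zero
        (convex_halfSpace_re_gt (1 / 2)).isPreconnected (one_half_lt_one.trans_le hρ) h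
  have hreal : (fun x : ℝ => LSeries (normSum ψ) x) =ᶠ[atTop] 0 := by
    filter_upwards [eventually_gt_atTop 1] with x hx
    rw [hH.LSeries_eq x hx]
    exact hzero (one_half_lt_one.trans hx)
  rcases LSeries_eventually_eq_zero_iff'.1 hreal with hcoeff | habs
  · exact two_ne_zero ((normSum_one hneg).symm.trans (hcoeff 1 one_ne_zero))
  · have hle := (LSeriesSummable_normSum h0 hψ (s := 2) (by norm_num)).abscissaOfAbsConv_le
    rw [habs] at hle
    exact absurd hle (by simp)

theorem tendsto_sub_mul_LSeries_primePowSum (hH : IsContinuation ψ H) (h0 : ψ 0 = 0)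
    (hψ : ∀ x, ‖ψ x‖ ≤ 1) (hneg : ψ (-1) = 1) {ρ : ℂ} (hρ : 1 ≤ ρ.re) :
    Tendsto (fun z => (z - ρ) * LSeries (primePowSum ψ) z)
      (nhdsWithin ρ ({ρ}ᶜ ∩ {s | 1 < s.re})) (nhds (-2 * analyticOrderNatAt H ρ)) := by
  have hana := hH.analyticAt hρ
  have hne := hH.not_eventually_eq_zero h0 hψ hneg hρ
  have hlog := tendsto_sub_mul_logDeriv hana (mt analyticOrderAt_eq_top.1 hne)
  have hne' : ∀ᶠ z in nhdsWithin ρ {ρ}ᶜ, H z ≠ 0 :=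
    hana.eventually_eq_zero_or_eventually_ne_zero.resolve_left hne
  refine ((hlog.mono_left (nhdsWithin_mono _ Set.inter_subset_left)).const_mul (-2)).congr' ?_
  filter_upwards [nhdsWithin_mono _ Set.inter_subset_left hne', self_mem_nhdsWithin] with z hz hmem
  rw [logDeriv_apply, mul_left_comm, ← mul_div_assoc, ← hH.LSeries_primePowSum_mul h0 hψ hmem.2,
    mul_div_cancel_right₀ _ hz]

lemma tendsto_LSeries_primePowSum_line (hH : IsContinuation ψ H) (h0 : ψ 0 = 0)
    (hψ : ∀ x, ‖ψ x‖ ≤ 1) (hneg : ψ (-1) = 1) (t : ℝ) :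
    Tendsto (fun σ : ℝ => (σ - 1) * LSeries (primePowSum ψ) (σ + t * Complex.I))
      (nhdsWithin 1 (Set.Ioi 1)) (nhds (-2 * analyticOrderNatAt H (1 + t * Complex.I))) := by
  have hre : ∀ σ : ℝ, (σ + t * Complex.I : ℂ).re = σ := fun σ => by simp
  have hone : (1 + t * Complex.I : ℂ).re = 1 := by simp
  have hline : Tendsto (fun σ : ℝ => (σ + t * Complex.I : ℂ)) (nhdsWithin 1 (Set.Ioi 1))
      (nhdsWithin (1 + t * Complex.I) ({1 + t * Complex.I}ᶜ ∩ {s | 1 < s.re})) := by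
    refine tendsto_nhdsWithin_iff.2 ⟨?_, ?_⟩
    · have hcont : Continuous (fun σ : ℝ => (σ + t * Complex.I : ℂ)) := by fun_prop
      exact (hcont.tendsto' 1 _ (by rw [Complex.ofReal_one])).mono_left nhdsWithin_le_nhds
    · filter_upwards [self_mem_nhdsWithin] with σ hσ
      have hσ' : 1 < (σ + t * Complex.I : ℂ).re := (hre σ).symm ▸ hσ
      exact ⟨fun h => (hσ'.trans_eq ((congrArg Complex.re h).trans hone)).false, hσ'⟩
  refine ((hH.tendsto_sub_mul_LSeries_primePowSum h0 hψ hneg hone.ge).comp hline).congr fun σ => ?_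
  rw [Function.comp_apply, add_sub_add_right_eq_sub]

lemma ne_zero_iff_analyticOrderNatAt (hH : IsContinuation ψ H) (h0 : ψ 0 = 0)
    (hψ : ∀ x, ‖ψ x‖ ≤ 1) (hneg : ψ (-1) = 1) {s : ℂ} (hs : 1 ≤ s.re) :
    H s ≠ 0 ↔ analyticOrderNatAt H s = 0 := by
  have hne := mt analyticOrderAt_eq_top.1 (hH.not_eventually_eq_zero h0 hψ hneg hs)
  rw [← (hH.analyticAt hs).analyticOrderAt_eq_zero, ← Nat.cast_analyticOrderNatAt hne,
    Nat.cast_eq_zero]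

lemma ne_zero_of_one_lt_re (hH : IsContinuation ψ H) (h0 : ψ 0 = 0) (hψ : ∀ x, ‖ψ x‖ ≤ 1)
    (hneg : ψ (-1) = 1) {s : ℂ} (hs : 1 < s.re) : H s ≠ 0 := by
  have habs : LSeries.abscissaOfAbsConv (primePowSum ψ) < s.re := by
    refine lt_of_le_of_lt (LSeries.abscissaOfAbsConv_le_of_forall_lt_LSeriesSummable (x := 1)
      fun y hy => LSeriesSummable_primePowSum hψ (by rwa [Complex.ofReal_re])) ?_
    exact_mod_cast hs
  have hcont : ContinuousAt (fun z => (z - s) * LSeries (primePowSum ψ) z) s :=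
    (continuousAt_id.sub continuousAt_const).mul (LSeries_hasDerivAt habs).continuousAt
  have hopen : {s : ℂ | 1 < s.re} ∈ nhds s :=
    (isOpen_lt continuous_const Complex.continuous_re).mem_nhds hs
  have hlim := hH.tendsto_sub_mul_LSeries_primePowSum h0 hψ hneg hs.le
  rw [Set.inter_comm, nhdsWithin_inter_of_mem (nhdsWithin_le_nhds hopen)] at hlim
  have horder := tendsto_nhds_unique (hcont.tendsto.mono_left nhdsWithin_le_nhds) hlim
  rw [hH.ne_zero_iff_analyticOrderNatAt h0 hψ hneg hs.le]
  simpa using horder.symm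

end IsContinuation

/-- `ψ` takes values of modulus one where `ψ₀` is `1`, and both vanish elsewhere: `ψ₀` is the
principal character underlying the unitary character `ψ`. -/
def IsUnitaryOver (ψ₀ ψ : ℤ√(-2) →* ℂ) : Prop :=
  ∀ x, (ψ₀ x = 0 ∧ ψ x = 0) ∨ (ψ₀ x = 1 ∧ ‖ψ x‖ = 1)

variable {ψ₀ ψ₂ : ℤ√(-2) →* ℂ} {H₂ : ℂ → ℂ}

lemma IsUnitaryOver.norm_le_one (h : IsUnitaryOver ψ₀ ψ) (x : ℤ√(-2)) : ‖ψ x‖ ≤ 1 := by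
  rcases h x with ⟨-, hx⟩ | ⟨-, hx⟩
  · rw [hx, norm_zero]
    exact zero_le_one
  · exact hx.le

lemma IsUnitaryOver.norm_principal_le_one (h : IsUnitaryOver ψ₀ ψ) (x : ℤ√(-2)) : ‖ψ₀ x‖ ≤ 1 := by
  rcases h x with ⟨hx, -⟩ | ⟨hx, -⟩
  · rw [hx, norm_zero]
    exact zero_le_one
  · rw [hx, norm_one]

lemma IsUnitaryOver.norm_sq_le_one (h : IsUnitaryOver ψ₀ ψ) (h₂ : ∀ x, ψ₂ x = ψ x ^ 2)
    (x : ℤ√(-2)) : ‖ψ₂ x‖ ≤ 1 := by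
  rw [h₂, norm_pow]
  exact pow_le_one₀ (_root_.norm_nonneg _) (h.norm_le_one x)

lemma re_term_primePowSum_nonneg (h : IsUnitaryOver ψ₀ ψ) (h₂ : ∀ x, ψ₂ x = ψ x ^ 2)
    (σ t : ℝ) (n : ℕ) :
    0 ≤ (3 * LSeries.term (primePowSum ψ₀) σ n +
      4 * LSeries.term (primePowSum ψ) (σ + t * Complex.I) n +
      LSeries.term (primePowSum ψ₂) (σ + (2 * t : ℝ) * Complex.I) n).re := by
  rcases eq_or_ne n 0 with rfl | hn
  · simp
  set w : ℂ := ((n : ℂ) ^ (t * Complex.I))⁻¹ with hw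
  have hw_norm : ‖w‖ = 1 := by
    rw [hw, norm_inv, Complex.norm_natCast_cpow_of_pos (Nat.pos_of_ne_zero hn),
      Complex.re_ofReal_mul, Complex.I_re, mul_zero, Real.rpow_zero, inv_one]
  have hw_sq : ((n : ℂ) ^ (((2 * t : ℝ) : ℂ) * Complex.I))⁻¹ = w ^ 2 := by
    rw [hw, inv_pow, ← Complex.cpow_nat_mul, Complex.ofReal_mul, mul_assoc]
    rfl
  have hσ : LSeries.term (primePowSum ψ₀) σ n = (((n : ℝ) ^ σ)⁻¹ : ℝ) * primePowSum ψ₀ n := by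
    simpa using LSeries_term_add_mul_I (primePowSum ψ₀) σ 0 hn
  rw [hσ, LSeries_term_add_mul_I _ _ _ hn, LSeries_term_add_mul_I _ _ _ hn, ← hw, hw_sq,
    mul_left_comm, mul_left_comm 4, ← mul_add, ← mul_add, Complex.re_ofReal_mul]
  exact mul_nonneg (inv_nonneg.2 (Real.rpow_nonneg (Nat.cast_nonneg n) σ))
    (re_primePowSum_nonneg h h₂ n hw_norm)

theorem re_LSeries_primePowSum_nonneg (h : IsUnitaryOver ψ₀ ψ) (h₂ : ∀ x, ψ₂ x = ψ x ^ 2)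
    {σ : ℝ} (hσ : 1 < σ) (t : ℝ) :
    0 ≤ (3 * LSeries (primePowSum ψ₀) σ + 4 * LSeries (primePowSum ψ) (σ + t * Complex.I) +
      LSeries (primePowSum ψ₂) (σ + (2 * t : ℝ) * Complex.I)).re := by
  have hre : ∀ u : ℝ, 1 < (σ + u * Complex.I : ℂ).re := fun u => by simpa using hσ
  have hsum₀ := (LSeriesSummable_primePowSum h.norm_principal_le_one (s := σ) hσ).hasSum
  have hsum₁ := (LSeriesSummable_primePowSum h.norm_le_one (hre t)).hasSum
  have hsum₂ := (LSeriesSummable_primePowSum (h.norm_sq_le_one h₂) (hre (2 * t))).hasSum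
  have hsum := Complex.hasSum_re (((hsum₀.mul_left 3).add (hsum₁.mul_left 4)).add hsum₂)
  exact hsum.nonneg (re_term_primePowSum_nonneg h h₂ σ t)

-- If `H` had a zero of order `m ≥ 1` at `s`, the residues `2`, `-2 m` and `-2 m'` would give
-- `0 ≤ 3 * 2 - 4 * 2 m - 2 m'` by the inequality `0 ≤ re (3 + 4 z + z ^ 2)` for `‖z‖ = 1`.
lemma IsContinuation.ne_zero_one_add_mul_I (hH : IsContinuation ψ H) (hH₂ : IsContinuation ψ₂ H₂)
    (h : IsUnitaryOver ψ₀ ψ) (h₂ : ∀ x, ψ₂ x = ψ x ^ 2) (h0 : ψ 0 = 0) (hneg : ψ (-1) = 1)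
    (hpole : Tendsto (fun σ : ℝ => (σ - 1) * LSeries (primePowSum ψ₀) σ)
      (nhdsWithin 1 (Set.Ioi 1)) (nhds 2)) (t : ℝ) : H (1 + t * Complex.I) ≠ 0 := by
  have hlim := hH.tendsto_LSeries_primePowSum_line h0 h.norm_le_one hneg t
  have hlim₂ := hH₂.tendsto_LSeries_primePowSum_line (by rw [h₂, h0, zero_pow two_ne_zero])
    (h.norm_sq_le_one h₂) (by rw [h₂, hneg, one_pow]) (2 * t)
  rw [hH.ne_zero_iff_analyticOrderNatAt h0 h.norm_le_one hneg (by simp)]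
  set m := analyticOrderNatAt H (1 + t * Complex.I)
  set m' := analyticOrderNatAt H₂ (1 + (2 * t : ℝ) * Complex.I)
  have hre := (Complex.continuous_re.tendsto _).comp
    (((hpole.const_mul 3).add (hlim.const_mul 4)).add hlim₂)
  have hnonneg : 0 ≤ (3 * 2 + 4 * (-2 * m) + -2 * m' : ℂ).re := by
    refine ge_of_tendsto hre ?_
    filter_upwards [self_mem_nhdsWithin] with σ hσ
    have hσ_nonneg := mul_nonneg (sub_nonneg.2 (le_of_lt hσ))
      (re_LSeries_primePowSum_nonneg h h₂ hσ t)
    rw [← Complex.re_ofReal_mul] at hσ_nonneg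
    refine hσ_nonneg.trans_eq ?_
    rw [Function.comp_apply]
    congr 1
    push_cast
    ring
  have horder : 4 * m + m' ≤ 3 := by
    have hreal : (0 : ℝ) ≤ 3 * 2 + 4 * (-2 * m) + -2 * m' := by simpa using hnonneg
    have : (4 * m + m' : ℝ) ≤ 3 := by linarith
    exact_mod_cast this
  omega

theorem IsContinuation.ne_zero (hH : IsContinuation ψ H) (hH₂ : IsContinuation ψ₂ H₂)
    (h : IsUnitaryOver ψ₀ ψ) (h₂ : ∀ x, ψ₂ x = ψ x ^ 2) (h0 : ψ 0 = 0) (hneg : ψ (-1) = 1)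
    (hpole : Tendsto (fun σ : ℝ => (σ - 1) * LSeries (primePowSum ψ₀) σ)
      (nhdsWithin 1 (Set.Ioi 1)) (nhds 2)) {s : ℂ} (hs : 1 ≤ s.re) : H s ≠ 0 := by
  rcases hs.lt_or_eq with hs | hs
  · exact hH.ne_zero_of_one_lt_re h0 h.norm_le_one hneg hs
  · rw [← Complex.re_add_im s, ← hs, Complex.ofReal_one]
    exact hH.ne_zero_one_add_mul_I hH₂ h h₂ h0 hneg hpole s.im

theorem IsContinuation.exists_continuousOn_LSeries_primePowSum (hH : IsContinuation ψ H)
    (h0 : ψ 0 = 0) (hψ : ∀ x, ‖ψ x‖ ≤ 1) (hne : ∀ s : ℂ, 1 ≤ s.re → H s ≠ 0) :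
    ∃ G : ℂ → ℂ, ContinuousOn G {s | 1 ≤ s.re} ∧
      ∀ s : ℂ, 1 < s.re → LSeries (primePowSum ψ) s = G s := by
  refine ⟨fun s => -2 * deriv H s / H s, fun s hs => ?_, fun s hs => ?_⟩
  · have hana := hH.analyticAt hs
    exact ((continuousAt_const.mul hana.deriv.continuousAt).div hana.continuousAt
      (hne s hs)).continuousWithinAt
  · rw [eq_div_iff (hne s hs.le), hH.LSeries_primePowSum_mul h0 hψ hs]

section RingClass

variable {k : ℕ} (hk : 1 ≤ k) (φ : AddChar (Additive (RingClassGroup k)) ℂ)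
include hk

lemma ringClassCharacter_apply_zero : ringClassCharacter k φ 0 = 0 :=
  ringClassCharacter_of_not_odd φ hk (by decide)

lemma ringClassCharacter_neg_one : ringClassCharacter k φ (-1) = 1 := by
  obtain ⟨u, hu⟩ := exists_unit_eq_reduction hk (x := -1) (by decide)
  rw [ringClassCharacter_apply φ hu, (ringClass_eq_one_iff hu).2 (dvd_zero _)]
  exact φ.map_zero_eq_one

lemma isUnitaryOver_ringClassCharacter :
    IsUnitaryOver (ringClassCharacter k 0) (ringClassCharacter k φ) := by
  intro x
  rw [ringClassCharacter_zero hk]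
  split_ifs with hx
  · exact .inr ⟨rfl, norm_ringClassCharacter φ hk hx⟩
  · exact .inl ⟨rfl, ringClassCharacter_of_not_odd φ hk hx⟩

lemma exists_isContinuation_ringClassCharacter {φ : AddChar (Additive (RingClassGroup k)) ℂ}
    (hφ : φ ≠ 0) : ∃ H, IsContinuation (ringClassCharacter k φ) H :=
  exists_isContinuation (pow_pos two_pos k) (ringClassCharacter_apply_zero hk φ)
    (norm_ringClassCharacter_le φ hk) (sum_ringClassCharacter_eq_zero hφ)

theorem exists_continuousOn_LSeries_primePowSum_ringClassCharacter
    {φ : AddChar (Additive (RingClassGroup k)) ℂ} (hφ : φ + φ ≠ 0)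
    (hpole : Tendsto (fun σ : ℝ => (σ - 1) * LSeries (primePowSum (ringClassCharacter k 0)) σ)
      (nhdsWithin 1 (Set.Ioi 1)) (nhds 2)) :
    ∃ G : ℂ → ℂ, ContinuousOn G {s | 1 ≤ s.re} ∧
      ∀ s : ℂ, 1 < s.re → LSeries (primePowSum (ringClassCharacter k φ)) s = G s := by
  have hφ' : φ ≠ 0 := by
    rintro rfl
    exact hφ (add_zero 0)
  obtain ⟨H, hH⟩ := exists_isContinuation_ringClassCharacter hk hφ'
  obtain ⟨H₂, hH₂⟩ := exists_isContinuation_ringClassCharacter hk hφ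
  have h0 := ringClassCharacter_apply_zero hk φ
  exact hH.exists_continuousOn_LSeries_primePowSum h0 (norm_ringClassCharacter_le φ hk)
    fun s hs => hH.ne_zero hH₂ (isUnitaryOver_ringClassCharacter hk φ)
      (ringClassCharacter_add_self φ hk) h0 (ringClassCharacter_neg_one hk φ) hpole hs

end RingClass

end ZsqrtdNegTwo

end NonVanishing

section PoleAtOne

lemma residueClass_zmod_one (n : ℕ) :
    ArithmeticFunction.vonMangoldt.residueClass (0 : ZMod 1) n =
      ArithmeticFunction.vonMangoldt n :=
  Set.indicator_of_mem (s := {n : ℕ | (n : ZMod 1) = 0}) (Subsingleton.elim (n : ZMod 1) 0) _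

lemma summable_vonMangoldt_non_primes_div :
    Summable fun n : ℕ => (if n.Prime then 0 else ArithmeticFunction.vonMangoldt n) / n := by
  refine (ArithmeticFunction.vonMangoldt.summable_residueClass_non_primes_div
    (0 : ZMod 1)).congr fun n => ?_
  rw [residueClass_zmod_one]

lemma continuousOn_LSeries_of_summable {d : ℕ → ℂ} (hd : Summable fun n : ℕ => ‖d n‖ / n) :
    ContinuousOn (LSeries d) {s | 1 ≤ s.re} := by
  refine continuousOn_tsum (fun n => ?_) hd fun n s hs => ?_
  · rcases eq_or_ne n 0 with rfl | hn
    · exact continuousOn_const.congr fun s _ => LSeries.term_zero d s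
    · have hn' : (n : ℂ) ≠ 0 := Nat.cast_ne_zero.2 hn
      have hcont : Continuous fun s : ℂ => d n / (n : ℂ) ^ s :=
        continuous_const.div (continuous_id.const_cpow (.inl hn')) fun s => by
          simp [Complex.cpow_eq_zero_iff, hn']
      exact hcont.continuousOn.congr fun s _ => LSeries.term_of_ne_zero hn _ _
  · refine (LSeries.norm_term_le_of_re_le_re d (s := 1) hs n).trans_eq ?_
    rcases eq_or_ne n 0 with rfl | hn
    · simp
    · simp [hn]

/-- The Dirichlet series of `a` has at most a simple pole, with residue `A`, at `1` and is otherwise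
continuous on `1 ≤ re s`. The coefficients are moreover `O(Λ)`, so that the values of `a` outside
the primes are irrelevant. -/
structure HasPoleAtOne (a : ℕ → ℂ) (A : ℂ) : Prop where
  bound : ∃ C : ℝ, ∀ n, ‖a n‖ ≤ C * ArithmeticFunction.vonMangoldt n
  extension : ∃ G : ℂ → ℂ, ContinuousOn G {s | 1 ≤ s.re} ∧
    ∀ s : ℂ, 1 < s.re → LSeries a s = A / (s - 1) + G s

namespace HasPoleAtOne

variable {a b : ℕ → ℂ} {A B : ℂ}

lemma summable (ha : HasPoleAtOne a A) {s : ℂ} (hs : 1 < s.re) : LSeriesSummable a s :=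
  LSeriesSummable_of_norm_le_vonMangoldt ha.bound.choose_spec hs

theorem congr_primes (ha : HasPoleAtOne a A)
    (hb : ∃ C : ℝ, ∀ n, ‖b n‖ ≤ C * ArithmeticFunction.vonMangoldt n)
    (hab : ∀ᶠ p : ℕ in atTop, p.Prime → a p = b p) : HasPoleAtOne b A := by
  obtain ⟨C, hC⟩ := ha.bound
  obtain ⟨D, hD⟩ := hb
  obtain ⟨G, hG, hL⟩ := ha.extension
  refine ⟨⟨D, hD⟩, fun s => G s + LSeries (b - a) s, hG.add ?_, fun s hs => ?_⟩
  · refine continuousOn_LSeries_of_summable ?_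
    refine Summable.of_norm_bounded_eventually_nat
      (summable_vonMangoldt_non_primes_div.mul_left (D + C)) ?_
    filter_upwards [hab] with n hab
    rw [← mul_div_assoc, Real.norm_of_nonneg (by positivity)]
    refine div_le_div_of_nonneg_right ?_ (Nat.cast_nonneg n)
    split_ifs with hn
    · rw [Pi.sub_apply, hab hn, sub_self, norm_zero, mul_zero]
    · rw [add_mul]
      exact (norm_sub_le _ _).trans (add_le_add (hD n) (hC n))
  · beta_reduce
    rw [LSeries_sub (LSeriesSummable_of_norm_le_vonMangoldt hD hs) (ha.summable hs), hL s hs]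
    ring

lemma const_mul (ha : HasPoleAtOne a A) (c : ℂ) : HasPoleAtOne (c • a) (c * A) := by
  obtain ⟨C, hC⟩ := ha.bound
  obtain ⟨G, hG, hL⟩ := ha.extension
  refine ⟨⟨‖c‖ * C, fun n => ?_⟩, fun s => c * G s, continuousOn_const.mul hG, fun s hs => ?_⟩
  · rw [Pi.smul_apply, smul_eq_mul, norm_mul, mul_assoc]
    exact mul_le_mul_of_nonneg_left (hC n) (norm_nonneg c)
  · rw [LSeries_smul, hL s hs]
    ring

lemma add (ha : HasPoleAtOne a A) (hb : HasPoleAtOne b B) : HasPoleAtOne (a + b) (A + B) := by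
  obtain ⟨C, hC⟩ := ha.bound
  obtain ⟨D, hD⟩ := hb.bound
  obtain ⟨G, hG, hL⟩ := ha.extension
  obtain ⟨G', hG', hL'⟩ := hb.extension
  refine ⟨⟨C + D, fun n => ?_⟩, fun s => G s + G' s, hG.add hG', fun s hs => ?_⟩
  · rw [add_mul]
    exact (norm_add_le _ _).trans (add_le_add (hC n) (hD n))
  · rw [LSeries_add (ha.summable hs) (hb.summable hs), hL s hs, hL' s hs]
    ring

lemma sum {ι : Type*} (t : Finset ι) {a : ι → ℕ → ℂ} {A : ι → ℂ}
    (ha : ∀ i ∈ t, HasPoleAtOne (a i) (A i)) : HasPoleAtOne (∑ i ∈ t, a i) (∑ i ∈ t, A i) := by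
  classical
  induction t using Finset.induction_on with
  | empty => exact ⟨⟨0, fun n => by simp⟩, 0, continuousOn_const, fun s _ => by simp⟩
  | insert i t hi ih =>
    rw [Finset.sum_insert hi, Finset.sum_insert hi]
    exact (ha i (Finset.mem_insert_self i t)).add
      (ih fun j hj => ha j (Finset.mem_insert_of_mem hj))

theorem tendsto (ha : HasPoleAtOne a A) :
    Tendsto (fun σ : ℝ => (σ - 1) * LSeries a σ) (nhdsWithin 1 (Set.Ioi 1)) (nhds A) := by
  obtain ⟨G, hG, hL⟩ := ha.extension
  have hσ : Tendsto (fun σ : ℝ => (σ : ℂ)) (nhdsWithin 1 (Set.Ioi 1)) (nhds 1) :=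
    (Complex.continuous_ofReal.tendsto' 1 1 Complex.ofReal_one).mono_left nhdsWithin_le_nhds
  have hσ' : Tendsto (fun σ : ℝ => (σ : ℂ)) (nhdsWithin 1 (Set.Ioi 1))
      (nhdsWithin 1 {s | 1 ≤ s.re}) := by
    refine tendsto_nhdsWithin_iff.2 ⟨hσ, ?_⟩
    filter_upwards [self_mem_nhdsWithin] with σ hσ
    exact (le_of_lt hσ : (1 : ℝ) ≤ σ)
  have hGσ := (hG 1 (Complex.one_re.ge : (1 : ℝ) ≤ (1 : ℂ).re)).tendsto.comp hσ'
  have hlim := ((hσ.sub_const 1).mul hGσ).const_add A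
  rw [sub_self, zero_mul, add_zero] at hlim
  refine hlim.congr' ?_
  filter_upwards [self_mem_nhdsWithin] with σ hσ
  have hne : (σ : ℂ) - 1 ≠ 0 := sub_ne_zero.2 (by exact_mod_cast ne_of_gt hσ)
  rw [hL σ (by rwa [Complex.ofReal_re]), mul_add, mul_div_cancel₀ _ hne, Function.comp_apply]

open ArithmeticFunction.vonMangoldt in
theorem residueClass {q : ℕ} [NeZero q] {c : ZMod q} (hc : IsUnit c) :
    HasPoleAtOne (fun n => (residueClass c n : ℂ)) (q.totient : ℂ)⁻¹ := by
  refine ⟨⟨1, fun n => ?_⟩, LFunctionResidueClassAux c, continuousOn_LFunctionResidueClassAux c,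
    fun s hs => ?_⟩
  · rw [Complex.norm_of_nonneg (residueClass_nonneg c n), one_mul]
    exact residueClass_le c n
  · rw [eqOn_LFunctionResidueClassAux hc hs]
    ring

theorem vonMangoldt : HasPoleAtOne (fun n => (ArithmeticFunction.vonMangoldt n : ℂ)) 1 := by
  convert HasPoleAtOne.residueClass (q := 1) (c := 0) (isUnit_of_subsingleton _) using 1
  · funext n
    rw [residueClass_zmod_one]
  · rw [Nat.totient_one, Nat.cast_one, inv_one]

end HasPoleAtOne

/-- The sequence with value `log p` at the primes `p` of `S` and `0` elsewhere. A pole of residue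
`A` of its Dirichlet series expresses that `S` has density `A` among the primes. -/
noncomputable def primeLog (S : Set ℕ) : ℕ → ℝ :=
  {p | p.Prime ∧ p ∈ S}.indicator fun p => Real.log p

lemma primeLog_of_mem {S : Set ℕ} {p : ℕ} (hp : p.Prime) (hpS : p ∈ S) :
    primeLog S p = Real.log p :=
  Set.indicator_of_mem (s := {p : ℕ | p.Prime ∧ p ∈ S}) ⟨hp, hpS⟩ _

lemma primeLog_of_notMem {S : Set ℕ} {p : ℕ} (hpS : p ∉ S) : primeLog S p = 0 :=
  Set.indicator_of_notMem (s := {p : ℕ | p.Prime ∧ p ∈ S}) (fun h => hpS h.2) _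

lemma primeLog_nonneg (S : Set ℕ) (n : ℕ) : 0 ≤ primeLog S n :=
  Set.indicator_nonneg (fun p _ => Real.log_natCast_nonneg p) n

lemma primeLog_le_vonMangoldt (S : Set ℕ) (n : ℕ) :
    primeLog S n ≤ ArithmeticFunction.vonMangoldt n :=
  Set.indicator_le' (fun _ hp => (ArithmeticFunction.vonMangoldt_apply_prime hp.1).ge)
    (fun _ _ => ArithmeticFunction.vonMangoldt_nonneg) n

namespace HasPoleAtOne

variable {S T : Set ℕ} {A B : ℂ}

lemma primeLog_of_eventually {a : ℕ → ℂ} (ha : HasPoleAtOne a A)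
    (haS : ∀ᶠ p : ℕ in atTop, p.Prime → a p = primeLog S p) :
    HasPoleAtOne (fun n => (primeLog S n : ℂ)) A := by
  refine ha.congr_primes ⟨1, fun n => ?_⟩ haS
  rw [Complex.norm_of_nonneg (primeLog_nonneg S n), one_mul]
  exact primeLog_le_vonMangoldt S n

lemma primeLog_univ : HasPoleAtOne (fun n => (primeLog Set.univ n : ℂ)) 1 :=
  vonMangoldt.primeLog_of_eventually <| .of_forall fun p hp => by
    rw [primeLog_of_mem hp (Set.mem_univ p), ArithmeticFunction.vonMangoldt_apply_prime hp]

lemma primeLog_congr (hS : HasPoleAtOne (fun n => (primeLog S n : ℂ)) A)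
    (hST : ∀ᶠ p : ℕ in atTop, p.Prime → (p ∈ S ↔ p ∈ T)) :
    HasPoleAtOne (fun n => (primeLog T n : ℂ)) A := by
  refine hS.primeLog_of_eventually ?_
  filter_upwards [hST] with p hST hp
  by_cases hpS : p ∈ S
  · rw [primeLog_of_mem hp hpS, primeLog_of_mem hp ((hST hp).1 hpS)]
  · rw [primeLog_of_notMem hpS, primeLog_of_notMem (mt (hST hp).2 hpS)]

lemma primeLog_diff (hS : HasPoleAtOne (fun n => (primeLog S n : ℂ)) A)
    (hT : HasPoleAtOne (fun n => (primeLog T n : ℂ)) B) (hTS : T ⊆ S) :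
    HasPoleAtOne (fun n => (primeLog (S \ T) n : ℂ)) (A - B) := by
  rw [sub_eq_add_neg, ← neg_one_mul]
  refine (hS.add (hT.const_mul (-1))).primeLog_of_eventually (.of_forall fun p hp => ?_)
  rw [Pi.add_apply, Pi.smul_apply, smul_eq_mul, neg_one_mul, ← sub_eq_add_neg]
  by_cases hpT : p ∈ T
  · rw [primeLog_of_mem hp (hTS hpT), primeLog_of_mem hp hpT, sub_self,
      primeLog_of_notMem (S := S \ T) fun h => h.2 hpT, Complex.ofReal_zero]
  rw [primeLog_of_notMem hpT, Complex.ofReal_zero, sub_zero]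
  by_cases hpS : p ∈ S
  · rw [primeLog_of_mem hp hpS, primeLog_of_mem (S := S \ T) hp ⟨hpS, hpT⟩]
  · rw [primeLog_of_notMem hpS, primeLog_of_notMem (S := S \ T) fun h => hpS h.1]

end HasPoleAtOne

end PoleAtOne

section PrimesOfTheForm

namespace ZsqrtdNegTwo

variable {k : ℕ} {φ : AddChar (Additive (RingClassGroup k)) ℂ}

lemma normFinset_eq_empty {n : ℕ} (hn : Odd n) (h1 : n % 8 ≠ 1) (h3 : n % 8 ≠ 3) :
    normFinset n = ∅ := by
  refine Finset.eq_empty_of_forall_notMem fun x hx => ?_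
  obtain rfl := mem_normFinset.1 hx
  rcases Int.even_or_odd x.im with him | him
  · exact h1 (normNat_mod_eight_of_even_im hn him)
  · exact h3 (normNat_mod_eight_of_odd_im hn him)

lemma normSum_ringClassCharacter_two (hk : 1 ≤ k) : normSum (ringClassCharacter k φ) 2 = 0 := by
  refine Finset.sum_eq_zero fun x hx => ringClassCharacter_of_not_odd φ hk fun hre => ?_
  rw [← odd_normNat_iff, mem_normFinset.1 hx] at hre
  exact absurd hre (by decide)

lemma normSum_eq_mul_of_normNat_prime {ψ : ℤ√(-2) →* ℂ} {ε : ℂ}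
    (hε : ∀ x : ℤ√(-2), Odd x.re → ψ x = if Even x.im then 1 else ε) {l : ℕ} (hl : l.Prime)
    (hodd : Odd l) {p : ℤ√(-2)} (hp : normNat p = l) :
    normSum ψ l = 4 * if Even p.im then 1 else ε := by
  have hre : Odd p.re := odd_normNat_iff.1 (hp ▸ hodd)
  rw [normSum, sum_normFinset_eq hl hodd hp, hε p hre, hε (-p) (by simpa using hre),
    hε (star p) (by simpa using hre), hε (-star p) (by simpa using hre)]
  simp only [Zsqrtd.im_neg, Zsqrtd.im_star, neg_neg, even_neg]
  ring

theorem normSum_ringClassCharacter_apply_prime (hk : 1 ≤ k) {ε : ℂ}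
    (hε : ∀ x : ℤ√(-2), Odd x.re → ringClassCharacter k φ x = if Even x.im then 1 else ε)
    {l : ℕ} (hl : l.Prime) :
    normSum (ringClassCharacter k φ) l =
      4 * ((if l % 8 = 1 then 1 else 0) + ε * (if l % 8 = 3 then 1 else 0)) := by
  rcases hl.eq_two_or_odd' with rfl | hodd
  · simp [normSum_ringClassCharacter_two hk]
  by_cases hmod : l % 8 = 1 ∨ l % 8 = 3
  · obtain ⟨p, rfl⟩ := exists_normNat_eq hl (by rintro rfl; exact absurd hodd (by decide)) hmod
    rw [normSum_eq_mul_of_normNat_prime hε hl hodd rfl]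
    rcases Int.even_or_odd p.im with him | him
    · simp [normNat_mod_eight_of_even_im hodd him, him]
    · simp [normNat_mod_eight_of_odd_im hodd him, Int.not_even_iff_odd.2 him]
  · push Not at hmod
    rw [normSum, normFinset_eq_empty hodd hmod.1 hmod.2]
    simp [hmod.1, hmod.2]

lemma residueClass_apply_prime {q c p : ℕ} (hp : p.Prime) :
    ArithmeticFunction.vonMangoldt.residueClass (c : ZMod q) p =
      if p % q = c % q then Real.log p else 0 := by
  classical
  simp only [ArithmeticFunction.vonMangoldt.residueClass, Set.indicator_apply, Set.mem_ofPred_eq,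
    ZMod.natCast_eq_natCast_iff', ArithmeticFunction.vonMangoldt_apply_prime hp]

theorem hasPoleAtOne_primePowSum_of_eq_ite (hk : 1 ≤ k) {ε : ℂ}
    (hε : ∀ x : ℤ√(-2), Odd x.re → ringClassCharacter k φ x = if Even x.im then 1 else ε) :
    HasPoleAtOne (primePowSum (ringClassCharacter k φ)) (1 + ε) := by
  have h1 := HasPoleAtOne.residueClass (q := 8) (c := (1 : ℕ)) (by decide)
  have h3 := HasPoleAtOne.residueClass (q := 8) (c := (3 : ℕ)) (by decide)
  have hsum := ((h1.add (h3.const_mul ε)).const_mul 4).congr_primes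
    (b := primePowSum (ringClassCharacter k φ))
    ⟨8, norm_primePowSum_le (norm_ringClassCharacter_le φ hk)⟩ <| .of_forall fun p hp => by
      rw [primePowSum_apply_prime _ hp, normSum_ringClassCharacter_apply_prime hk hε hp]
      simp only [Pi.smul_apply, Pi.add_apply, smul_eq_mul, residueClass_apply_prime hp,
        Nat.reduceMod]
      split_ifs <;> simp <;> ring
  convert hsum using 1
  rw [show Nat.totient 8 = 4 from by decide]
  push_cast
  ring

theorem hasPoleAtOne_primePowSum_zero (hk : 1 ≤ k) :
    HasPoleAtOne (primePowSum (ringClassCharacter k 0)) 2 := by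
  rw [← one_add_one_eq_two]
  refine hasPoleAtOne_primePowSum_of_eq_ite hk fun x hx => ?_
  rw [ringClassCharacter_zero hk, if_pos hx, ite_self]

lemma exists_ringClassCharacter_ne_one (hk : 1 ≤ k) (hφ : φ ≠ 0) :
    ∃ x : ℤ√(-2), Odd x.re ∧ ringClassCharacter k φ x ≠ 1 := by
  by_contra! h
  have hval (x : ℤ√(-2)) : ringClassCharacter k φ x = ((if Odd x.re then 1 else 0 : ℕ) : ℂ) := by
    split_ifs with hx
    · rw [h x hx, Nat.cast_one]
    · rw [ringClassCharacter_of_not_odd φ hk hx, Nat.cast_zero]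
  have hsum := sum_ringClassCharacter_eq_zero hφ 0 0
  simp only [hval] at hsum
  norm_cast at hsum
  have hterm := Finset.sum_eq_zero_iff.1 (Finset.sum_eq_zero_iff.1 hsum 1
    (Finset.mem_range.2 (Nat.one_lt_two_pow (by lia)))) 0 (Finset.mem_range.2 (by positivity))
  simp at hterm

theorem hasPoleAtOne_primePowSum_of_add_self_eq_zero (hk : 1 ≤ k) (hφ : φ + φ = 0) (h0 : φ ≠ 0) :
    HasPoleAtOne (primePowSum (ringClassCharacter k φ)) 0 := by
  obtain ⟨ε, hε⟩ := exists_ringClassCharacter_eq hk hφ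
  have hsq : ε ^ 2 = 1 ^ 2 := by
    have h := ringClassCharacter_add_self φ hk ⟨1, 1⟩
    rwa [hφ, ringClassCharacter_zero hk, if_pos odd_one, hε _ odd_one, if_neg (by decide),
      eq_comm, ← one_pow 2] at h
  have hne : ε ≠ 1 := by
    rintro rfl
    obtain ⟨x, hx, hx1⟩ := exists_ringClassCharacter_ne_one hk h0
    exact hx1 ((hε x hx).trans (ite_self 1))
  have hpole := hasPoleAtOne_primePowSum_of_eq_ite hk hε
  rwa [(sq_eq_sq_iff_eq_or_eq_neg.1 hsq).resolve_left hne, add_neg_cancel] at hpole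

theorem hasPoleAtOne_primePowSum (hk : 1 ≤ k) (φ : AddChar (Additive (RingClassGroup k)) ℂ) :
    HasPoleAtOne (primePowSum (ringClassCharacter k φ)) (if φ = 0 then 2 else 0) := by
  split_ifs with h0
  · exact h0 ▸ hasPoleAtOne_primePowSum_zero hk
  by_cases hφ : φ + φ = 0
  · exact hasPoleAtOne_primePowSum_of_add_self_eq_zero hk hφ h0
  obtain ⟨G, hG, hL⟩ := exists_continuousOn_LSeries_primePowSum_ringClassCharacter hk hφ
    (hasPoleAtOne_primePowSum_zero hk).tendsto
  exact ⟨⟨8, norm_primePowSum_le (norm_ringClassCharacter_le φ hk)⟩, G, hG, fun s hs => by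
    rw [hL s hs, zero_div, zero_add]⟩

/-- The odd numbers of the form `a² + 2 · 4ᵏ · b²`, i.e. the odd norms from the order
`ℤ[2ᵏ√-2]`. -/
def normsOfLevel (k : ℕ) : Set ℕ :=
  {l | ∃ x : ℤ√(-2), normNat x = l ∧ Odd x.re ∧ (2 ^ k : ℤ) ∣ x.im}

lemma normsOfLevel_antitone : Antitone normsOfLevel := by
  rintro j k hjk _ ⟨x, hx, hre, him⟩
  exact ⟨x, hx, hre, (pow_dvd_pow 2 hjk).trans him⟩

lemma sum_normSum_ringClassCharacter_of_mem (hk : 1 ≤ k) {l : ℕ} (hl : l.Prime)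
    (hlk : l ∈ normsOfLevel k) :
    ∑ φ, normSum (ringClassCharacter k φ) l = 4 * 2 ^ k := by
  obtain ⟨p, hp, hre, him⟩ := hlk
  have hodd : Odd l := hp ▸ odd_normNat_iff.2 hre
  simp only [normSum]
  rw [Finset.sum_comm, sum_normFinset_eq hl hodd hp, sum_ringClassCharacter hk hre,
    sum_ringClassCharacter hk (x := -p) (by simpa using hre),
    sum_ringClassCharacter hk (x := star p) (by simpa using hre),
    sum_ringClassCharacter hk (x := -star p) (by simpa using hre)]
  simp only [Zsqrtd.im_neg, Zsqrtd.im_star, neg_neg, dvd_neg, if_pos him]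
  ring

lemma sum_normSum_ringClassCharacter_of_notMem (hk : 1 ≤ k) {l : ℕ} (hlk : l ∉ normsOfLevel k) :
    ∑ φ, normSum (ringClassCharacter k φ) l = 0 := by
  simp only [normSum]
  rw [Finset.sum_comm]
  refine Finset.sum_eq_zero fun x hx => ?_
  by_cases hre : Odd x.re
  · rw [sum_ringClassCharacter hk hre, if_neg fun him => hlk ⟨x, mem_normFinset.1 hx, hre, him⟩]
  · exact Finset.sum_eq_zero fun φ _ => ringClassCharacter_of_not_odd φ hk hre

theorem hasPoleAtOne_primeLog_normsOfLevel (hk : 1 ≤ k) :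
    HasPoleAtOne (fun l => (primeLog (normsOfLevel k) l : ℂ)) (1 / 2 ^ (k + 1)) := by
  classical
  have hsum := (HasPoleAtOne.sum Finset.univ fun φ _ => hasPoleAtOne_primePowSum hk φ).const_mul
    (1 / (4 * 2 ^ k))
  rw [Finset.sum_ite_eq' Finset.univ 0, if_pos (Finset.mem_univ _)] at hsum
  have hres : (1 / (4 * 2 ^ k) * 2 : ℂ) = 1 / 2 ^ (k + 1) := by
    rw [pow_succ]
    field_simp
    norm_num
  rw [← hres]
  refine hsum.primeLog_of_eventually (.of_forall fun l hl => ?_)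
  simp only [Pi.smul_apply, Finset.sum_apply, primePowSum_apply_prime _ hl, ← Finset.sum_mul,
    smul_eq_mul]
  by_cases hlk : l ∈ normsOfLevel k
  · rw [sum_normSum_ringClassCharacter_of_mem hk hl hlk, primeLog_of_mem hl hlk]
    field_simp
  · rw [sum_normSum_ringClassCharacter_of_notMem hk hlk, primeLog_of_notMem hlk, zero_mul, mul_zero,
      Complex.ofReal_zero]

end ZsqrtdNegTwo

end PrimesOfTheForm

section Density

namespace ZsqrtdNegTwo

lemma natAbs_eq_of_normNat_eq_prime {l : ℕ} (hl : l.Prime) {x y : ℤ√(-2)} (hx : normNat x = l)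
    (hy : normNat y = l) : x.re.natAbs = y.re.natAbs ∧ x.im.natAbs = y.im.natAbs := by
  have hmem := mem_normFinset.2 hy
  rw [normFinset_eq_of_prime hl hx] at hmem
  simp only [Finset.mem_insert, Finset.mem_singleton] at hmem
  rcases hmem with rfl | rfl | rfl | rfl <;> simp

lemma normNat_mk_two_pow_mul (n : ℕ) (a b : ℕ) :
    normNat ⟨a, 2 ^ n * b⟩ = a ^ 2 + 2 ^ (2 * n + 1) * b ^ 2 := by
  rw [← Int.natCast_inj, coe_normNat]
  push_cast
  ring

/-- A prime is `x² + 2y²` for at most one pair up to signs, so both levels refer to the same `y`. -/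
lemma mem_normsOfLevel_diff_succ_iff (n : ℕ) {l : ℕ} (hl : l.Prime) :
    l ∈ normsOfLevel n \ normsOfLevel (n + 1) ↔
      ∃ a b : ℕ, (2 * a + 1) ^ 2 + 2 ^ (2 * n + 1) * (2 * b + 1) ^ 2 = l := by
  simp only [← normNat_mk_two_pow_mul]
  constructor
  · rintro ⟨⟨⟨u, v⟩, hx, hre, hdvd⟩, hl'⟩
    obtain ⟨c, rfl⟩ : (2 ^ n : ℤ) ∣ v := hdvd
    have hodd : Odd c := by
      rw [← Int.not_even_iff_odd]
      rintro ⟨d, rfl⟩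
      exact hl' ⟨_, hx, hre, d, by ring⟩
    obtain ⟨a, ha⟩ := Int.natAbs_odd.2 hre
    obtain ⟨b, hb⟩ := Int.natAbs_odd.2 hodd
    refine ⟨a, b, ?_⟩
    rw [← ha, ← hb, ← hx, ← Int.natCast_inj, coe_normNat, coe_normNat]
    simp only [mul_pow, Int.natCast_natAbs, sq_abs]
  · rintro ⟨a, b, hx⟩
    refine ⟨⟨_, hx, by simp, Dvd.intro _ rfl⟩, ?_⟩
    rintro ⟨y, hy, -, hdvd⟩
    rw [← Int.dvd_natAbs, ← (natAbs_eq_of_normNat_eq_prime hl hx hy).2, Int.dvd_natAbs,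
      pow_succ] at hdvd
    have heven := Int.dvd_of_mul_dvd_mul_left (by positivity) hdvd
    lia

lemma eq_of_sq_add_two_pow_mul_sq_eq_prime {n l : ℕ} (hl : l.Prime) {a b a' b' : ℕ}
    (h : a ^ 2 + 2 ^ (2 * n + 1) * b ^ 2 = l) (h' : a' ^ 2 + 2 ^ (2 * n + 1) * b' ^ 2 = l) :
    a = a' ∧ b = b' := by
  rw [← normNat_mk_two_pow_mul] at h h'
  obtain ⟨hre, him⟩ := natAbs_eq_of_normNat_eq_prime hl h h'
  simp only [Int.natAbs_mul, Int.natAbs_natCast] at hre him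
  exact ⟨hre, Nat.eq_of_mul_eq_mul_left (by positivity) him⟩

theorem etaCoeff_eq_one_iff (n : ℕ) {l : ℕ} (hl : l.Prime) :
    etaCoeff (24 * (2 ^ (2 * n + 1) + 1)) l = 1 ↔
      l ∈ normsOfLevel n \ normsOfLevel (n + 1) := by
  rw [etaCoeff_eq_card _ hl.pos, mem_normsOfLevel_diff_succ_iff n hl]
  constructor
  · intro hcard
    obtain ⟨⟨a, b⟩, hab⟩ := Finset.card_pos.1 (Nat.pos_of_ne_zero fun h0 => by
      rw [h0] at hcard
      exact absurd hcard (by decide))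
    exact ⟨a, b, (Finset.mem_filter.1 hab).2⟩
  · rintro ⟨a, b, hab⟩
    rw [Finset.card_eq_one.2 ⟨(a, b), ?_⟩, Nat.cast_one]
    refine Finset.eq_singleton_iff_unique_mem.2 ⟨?_, fun ⟨a', b'⟩ hab' => ?_⟩
    · simp only [Finset.mem_filter, Finset.mem_product, Finset.mem_range]
      have hpow : 1 ≤ 2 ^ (2 * n + 1) := Nat.one_le_two_pow
      refine ⟨⟨?_, ?_⟩, hab⟩ <;> nlinarith
    · obtain ⟨ha, hb⟩ :=
        eq_of_sq_add_two_pow_mul_sq_eq_prime hl hab (Finset.mem_filter.1 hab').2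
      ext <;> lia

end ZsqrtdNegTwo

lemma primePi_eq_primeCounting (n : ℕ) : primePi n = Nat.primeCounting n := by
  rw [primePi, Nat.primeCounting, Nat.primeCounting', Nat.count_eq_card_filter_range]

lemma theta_eq_sum_range (n : ℕ) :
    Chebyshev.theta n = ∑ l ∈ (Finset.range (n + 1)).filter Nat.Prime, Real.log l := by
  rw [Chebyshev.theta_eq_sum_Icc, Nat.floor_natCast, Nat.range_succ_eq_Icc_zero]

lemma sum_primeLog (S : Set ℕ) [DecidablePred (· ∈ S)] (n : ℕ) :
    ∑ l ∈ Finset.Icc 1 n, primeLog S l =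
      ∑ l ∈ (Finset.range (n + 1)).filter (fun l => l.Prime ∧ l ∈ S), Real.log l := by
  have hfilter : (Finset.range (n + 1)).filter (fun l => l.Prime ∧ l ∈ S) =
      (Finset.Icc 1 n).filter (fun l => l.Prime ∧ l ∈ S) := by
    ext l
    simp only [Finset.mem_filter, Finset.mem_range_succ_iff, Finset.mem_Icc]
    exact ⟨fun h => ⟨⟨h.2.1.one_le, h.1⟩, h.2⟩, fun h => ⟨h.1.2, h.2⟩⟩
  rw [hfilter, Finset.sum_filter]
  refine Finset.sum_congr rfl fun l _ => ?_
  rw [primeLog, Set.indicator_apply]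
  congr

lemma sum_primeLog_le_theta (S : Set ℕ) (n : ℕ) :
    ∑ l ∈ Finset.Icc 1 n, primeLog S l ≤ Chebyshev.theta n := by
  classical
  rw [sum_primeLog, theta_eq_sum_range]
  exact Finset.sum_le_sum_of_subset_of_nonneg
    (Finset.monotone_filter_right _ fun l _ hl => hl.1) fun l _ _ => Real.log_natCast_nonneg l

theorem HasPoleAtOne.tendsto_sum_primeLog_div {S : Set ℕ} {A : ℝ}
    (hS : HasPoleAtOne (fun n => (primeLog S n : ℂ)) A) :
    Tendsto (fun n : ℕ => (∑ l ∈ Finset.Icc 1 n, primeLog S l) / n) atTop (nhds A) := by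
  obtain ⟨G, hG, hL⟩ := hS.extension
  exact tendsto_sum_div_of_LSeries (primeLog_nonneg S)
    (fun n => (sum_primeLog_le_theta S n).trans (Chebyshev.theta_le_log4_mul_x (Nat.cast_nonneg n)))
    hG hL

lemma tendsto_theta_div : Tendsto (fun n : ℕ => Chebyshev.theta n / n) atTop (nhds 1) := by
  have huniv : HasPoleAtOne (fun n => (primeLog Set.univ n : ℂ)) (1 : ℝ) := by
    rw [Complex.ofReal_one]
    exact HasPoleAtOne.primeLog_univ
  refine huniv.tendsto_sum_primeLog_div.congr fun n => ?_
  simp only [sum_primeLog, theta_eq_sum_range, Set.mem_univ, and_true]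

lemma tendsto_primePi_mul_log_sub_theta_div :
    Tendsto (fun n : ℕ => (primePi n * Real.log n - Chebyshev.theta n) / n) atTop (nhds 0) := by
  have hlog : ∀ᶠ n : ℕ in atTop, Real.log n ≠ 0 := by
    filter_upwards [eventually_ge_atTop 2] with n hn
    exact (Real.log_pos (by exact_mod_cast hn)).ne'
  have hO : (fun n : ℕ => (primePi n * Real.log n - Chebyshev.theta n) / n) =O[atTop]
      fun n : ℕ => (Real.log n)⁻¹ := by
    refine ((Chebyshev.primeCounting_sub_theta_div_log_isBigO.comp_tendsto
      (tendsto_natCast_atTop_atTop (R := ℝ))).mul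
      (Asymptotics.isBigO_refl (fun n : ℕ => Real.log n / n) atTop)).congr' ?_ ?_
    · filter_upwards [hlog] with n hlog
      simp only [Function.comp_apply, Nat.floor_natCast, ← primePi_eq_primeCounting]
      field_simp
    · filter_upwards [hlog, eventually_ne_atTop 0] with n hlog hn
      simp only [Function.comp_apply]
      field_simp
  exact hO.trans_tendsto (Real.tendsto_log_atTop.comp tendsto_natCast_atTop_atTop).inv_tendsto_atTop

lemma tendsto_primePi_mul_log_div :
    Tendsto (fun n : ℕ => primePi n * Real.log n / n) atTop (nhds 1) := by
  have h := tendsto_primePi_mul_log_sub_theta_div.add tendsto_theta_div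
  rw [zero_add] at h
  refine h.congr fun n => ?_
  rw [← add_div, sub_add_cancel]

lemma card_primes_mul_log_sub_sum_primeLog (S : Set ℕ) [DecidablePred (· ∈ S)] (n : ℕ) :
    ((Finset.range (n + 1)).filter (fun l => l.Prime ∧ l ∈ S)).card * Real.log n -
        ∑ l ∈ Finset.Icc 1 n, primeLog S l =
      ∑ l ∈ (Finset.range (n + 1)).filter (fun l => l.Prime ∧ l ∈ S),
        (Real.log n - Real.log l) := by
  rw [sum_primeLog, ← nsmul_eq_mul, ← Finset.sum_const, ← Finset.sum_sub_distrib]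

lemma tendsto_card_primes_mul_log_sub_sum_primeLog_div (S : Set ℕ) [DecidablePred (· ∈ S)] :
    Tendsto (fun n : ℕ =>
      (((Finset.range (n + 1)).filter (fun l => l.Prime ∧ l ∈ S)).card * Real.log n -
        ∑ l ∈ Finset.Icc 1 n, primeLog S l) / n) atTop (nhds 0) := by
  have hlog {n l : ℕ} (hl : l ∈ (Finset.range (n + 1)).filter Nat.Prime) :
      0 ≤ Real.log n - Real.log l := by
    obtain ⟨hln, hl⟩ := Finset.mem_filter.1 hl
    exact sub_nonneg.2 (Real.log_le_log (by exact_mod_cast hl.pos)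
      (by exact_mod_cast Finset.mem_range_succ_iff.1 hln))
  have hsub (n : ℕ) : (Finset.range (n + 1)).filter (fun l => l.Prime ∧ l ∈ S) ⊆
      (Finset.range (n + 1)).filter Nat.Prime :=
    Finset.monotone_filter_right _ fun l _ hl => hl.1
  refine squeeze_zero (fun n => ?_) (fun n => ?_) tendsto_primePi_mul_log_sub_theta_div <;>
    rw [card_primes_mul_log_sub_sum_primeLog]
  · exact div_nonneg (Finset.sum_nonneg fun l hl => hlog (hsub n hl)) (Nat.cast_nonneg n)
  · refine div_le_div_of_nonneg_right ?_ (Nat.cast_nonneg n)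
    rw [theta_eq_sum_range, primePi, ← nsmul_eq_mul, ← Finset.sum_const, ← Finset.sum_sub_distrib]
    exact Finset.sum_le_sum_of_subset_of_nonneg (hsub n) fun l hl _ => hlog hl

theorem HasPoleAtOne.tendsto_density {S : Set ℕ} [DecidablePred (· ∈ S)] {A : ℝ}
    (hS : HasPoleAtOne (fun n => (primeLog S n : ℂ)) A) :
    Tendsto (fun n : ℕ =>
      (((Finset.range (n + 1)).filter (fun l => l.Prime ∧ l ∈ S)).card : ℝ) / primePi n)
      atTop (nhds A) := by
  have hlim := ((tendsto_card_primes_mul_log_sub_sum_primeLog_div S).add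
    hS.tendsto_sum_primeLog_div).div tendsto_primePi_mul_log_div one_ne_zero
  rw [zero_add, div_one] at hlim
  refine hlim.congr' ?_
  filter_upwards [eventually_ge_atTop 2] with n hn
  have hlog : Real.log n ≠ 0 := (Real.log_pos (by exact_mod_cast hn)).ne'
  have hn' : (n : ℝ) ≠ 0 := by positivity
  rw [Pi.div_apply, ← add_div, sub_add_cancel, div_div_div_cancel_right₀ hn',
    mul_div_mul_right _ _ hlog]

open ZsqrtdNegTwo in
theorem hasPoleAtOne_primeLog_etaCoeff {n : ℕ} (hn : 1 ≤ n) :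
    HasPoleAtOne (fun l => (primeLog {l | 5 ≤ l ∧ etaCoeff (24 * (2 ^ (2 * n + 1) + 1))
      (nuR (24 * (2 ^ (2 * n + 1) + 1)) l) = 1} l : ℂ)) (((1 / 2) ^ (n + 2) : ℝ) : ℂ) := by
  have hres : (((1 / 2) ^ (n + 2) : ℝ) : ℂ) = 1 / 2 ^ (n + 1) - 1 / 2 ^ (n + 1 + 1) := by
    push_cast
    rw [one_div_pow, pow_succ _ (n + 1)]
    field_simp
    norm_num
  rw [hres]
  refine ((hasPoleAtOne_primeLog_normsOfLevel hn).primeLog_diff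
    (hasPoleAtOne_primeLog_normsOfLevel (Nat.le_add_left 1 n))
    (normsOfLevel_antitone n.le_succ)).primeLog_congr ?_
  filter_upwards [eventually_ge_atTop (2 ^ (2 * n + 1) + 1), eventually_ge_atTop 5]
    with l hl h5 hp
  rw [nuR_of_le (Nat.succ_pos _) hl, etaCoeff_eq_one_iff n hp,
    and_iff_right h5]

lemma three_mul_two_mul_four_pow_add_one_div_three (n : ℕ) :
    3 * ((2 * 4 ^ n + 1) / 3) = 2 ^ (2 * n + 1) + 1 := by
  have hmod : (2 * 4 ^ n + 1) % 3 = 0 := by simp [Nat.add_mod, Nat.mul_mod, Nat.pow_mod]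
  rw [Nat.mul_div_cancel' (Nat.dvd_of_mod_eq_zero hmod), pow_succ, pow_mul, mul_comm]
  norm_num

end Density

/-- Theorem D, `ℚ(√−2)`-dihedral case (triple powers): `D(24 ⬝ 3z_n) = 2^{-(n+2)}`
for `n ≥ 1`, where `z_n = (2·4^n + 1)/3`. -/
theorem etaPowerDensity_dihedral_sqrt_neg_two_triple (n : ℕ) (hn : 1 ≤ n) :
    Tendsto
      (fun x : ℕ =>
        (etaDensityCount (24 * (3 * ((2 * 4 ^ n + 1) / 3))) x : ℝ) / (primePi x : ℝ))
      atTop (nhds ((1 / 2 : ℝ) ^ (n + 2))) := by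
  classical
  rw [three_mul_two_mul_four_pow_add_one_div_three]
  refine (hasPoleAtOne_primeLog_etaCoeff hn).tendsto_density.congr fun x => ?_
  simp only [etaDensityCount, Set.mem_ofPred_eq]
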